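/- Let φ be a continuous flow on a compact metric space M with h_top(φ) > 0. Suppose that for every ε > 0 there exists a compact φ-invariant set Γ_ε ⊆ M that is a horseshoe of φ and satisfies |h_top(φ|_{Γ_ε}) − h_top(φ)| ≤ ε. Then φ has entropy flexibility; moreover, for every 0 ≤ c < h_top(φ) there is a compact φ-invariant set Γ_c ⊆ M such that φ|_{Γ_c} is strictly ergodic with h_top(φ|_{Γ_c}) = c. -/

import Mathlib

/-!
A horseshoe is treated as a suspension flow over the full shift (`Susp`). Given `0 ≤ c` below the
entropy of the flow, `exists_horseshoe_gt` provides a horseshoe of entropy greater than `c`, and the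
strictly ergodic set of entropy `c` is built inside it, in the flow saturation of a subshift.

*The subshift.* Sorting a large separated set by the number of returns to the base and applying the
pigeonhole principle gives (`Susp.exists_stage`) a family `W` of words of a common length with
`log |W| > c T`, where `T` bounds the flow time spent over each of these words; such a family is a
`Stage`. A stage can be refined (`exists_refines`): the new words are concatenations of old ones,
each of them contains every old word, all of them use each old word equally often, and their number
is exactly `⌊exp (c T')⌋ + 1`, so that the new family is again a stage but has essentially no room
to spare. The intersection of the sets of bi-infinite concatenations along a sequence of refinements
is the subshift `S` (`exists_subshift`). Equal occurrence numbers make all Birkhoff averages converge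
uniformly on `S`; the exact cardinality bounds the growth of words per unit of flow time by `c`; and
every point of `S` contains every word of every stage.

*The flow.* On the saturation of `S` the entropy is at most `c` (`Susp.topEntropyOn_sat_le`), the
entropy of every nonempty invariant subset is at least `c` (`Susp.le_topEntropyOn_sat`), and time
averages converge uniformly (`Susp.exists_avg_sat`). The latter yields an invariant measure that is
unique and ergodic (`exists_unifAvg`, `UnifAvg.unique`, `UnifAvg.flowErgodic`), so any minimal subset
(`exists_minimal`) is strictly ergodic of entropy `c`.

*The measure.* The metric entropy of the invariant measure equals the topological entropy by the
variational principle, of which both halves are proved in the form needed: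
`measEntropy_le_topEntropyOn` counts itineraries in Hamming balls around those of a spanning set,
and `topEntropyOn_le_measEntropy` is Misiurewicz's argument.
-/

open Filter MeasureTheory Set Topology
open scoped ENNReal NNReal

attribute [local instance] PiCountable.metricSpace

namespace EF

/-! ### Topological entropy via separated sets -/

section Entropy

variable {M : Type*} [MetricSpace M]

/-- `Q` is an `(n,ε)`-separated set for `f`. -/
def IsDynSep (f : M → M) (n : ℕ) (ε : ℝ) (Q : Set M) : Prop :=
  Q.Pairwise fun x y => ∃ j : ℕ, j ≤ n ∧ ε < dist (f^[j] x) (f^[j] y)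

/-- Maximal cardinality of an `(n,ε)`-separated subset of `K`. -/
noncomputable def sepCount (f : M → M) (K : Set M) (n : ℕ) (ε : ℝ) : ℕ :=
  sSup {k : ℕ | ∃ Q : Finset M, ↑Q ⊆ K ∧ IsDynSep f n ε ↑Q ∧ Q.card = k}

/-- Topological entropy of `f` on the (not necessarily invariant) set `K`. -/
noncomputable def topEntropyOn (f : M → M) (K : Set M) : EReal :=
  ⨆ (ε : ℝ) (_ : 0 < ε),
    Filter.atTop.limsup fun n : ℕ => ((Real.log (sepCount f K n ε) / n : ℝ) : EReal)

/-- Topological entropy of `f`. -/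
noncomputable def topEntropy (f : M → M) : EReal :=
  topEntropyOn f Set.univ

end Entropy

/-! ### Measure-theoretic (Kolmogorov–Sinai) entropy -/

section MeasEntropy

variable {α : Type*} [MeasurableSpace α]

/-- A finite measurable partition of the whole space. -/
def IsMeasPartition (P : Finset (Set α)) : Prop :=
  (∀ p ∈ P, MeasurableSet p) ∧ ⋃₀ (↑P : Set (Set α)) = Set.univ ∧
    (↑P : Set (Set α)).Pairwise Disjoint

/-- The function `x ↦ - x log x`. -/
noncomputable def negMulLog (x : ℝ) : ℝ := -(x * Real.log x)

/-- Information of the refinement `P ∨ f⁻¹ P ∨ ⋯ ∨ f⁻⁽ⁿ⁻¹⁾ P` with respect to `μ`. -/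
noncomputable def refinedInfo (f : α → α) (μ : Measure α) (P : Finset (Set α)) (n : ℕ) : ℝ :=
  ∑ a : Fin n → {p // p ∈ P},
    negMulLog (μ (⋂ i : Fin n, f^[(i : ℕ)] ⁻¹' ((a i : Set α)))).toReal

/-- Entropy of `f` w.r.t. `μ` and the partition `P`. -/
noncomputable def partEntropy (f : α → α) (μ : Measure α) (P : Finset (Set α)) : ℝ :=
  Filter.atTop.limsup fun n : ℕ => refinedInfo f μ P n / n

/-- Kolmogorov–Sinai entropy of `f` with respect to `μ`. -/
noncomputable def measEntropy (f : α → α) (μ : Measure α) : EReal :=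
  ⨆ (P : Finset (Set α)) (_ : IsMeasPartition P), ((partEntropy f μ P : ℝ) : EReal)

end MeasEntropy

/-! ### Discrete-time dynamics -/

section Discrete

variable {M : Type*} [MetricSpace M]

/-- A set invariant under `f`. -/
def InvSet (f : M → M) (Λ : Set M) : Prop := f '' Λ = Λ

/-- `f` is minimal on the invariant set `Λ`. -/
def MinimalOn (f : M → M) (Λ : Set M) : Prop :=
  ∀ K : Set M, K ⊆ Λ → K.Nonempty → IsClosed K → f '' K = K → K = Λ

variable [MeasurableSpace M]

/-- `f` is uniquely ergodic on `Λ`: there is exactly one invariant Borel probability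
measure supported in `Λ`. -/
def UniquelyErgodicOn (f : M → M) (Λ : Set M) : Prop :=
  ∃! μ : Measure M, IsProbabilityMeasure μ ∧ MeasurePreserving f μ μ ∧ μ Λᶜ = 0

/-- `f` is strictly ergodic on `Λ`: minimal and uniquely ergodic. -/
def StrictlyErgodicOn (f : M → M) (Λ : Set M) : Prop :=
  MinimalOn f Λ ∧ UniquelyErgodicOn f Λ

/-- Entropy flexibility of `f` on an invariant set `S`. -/
def EntropyFlexibleOn (f : M → M) (S : Set M) : Prop :=
  ∀ c : ℝ, 0 ≤ c → (c : EReal) < topEntropyOn f S →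
    ∃ (μ : Measure M) (Λ : Set M), IsProbabilityMeasure μ ∧ Ergodic f μ ∧ μ Sᶜ = 0 ∧
      Λ ⊆ S ∧ IsCompact Λ ∧ f '' Λ = Λ ∧
      topEntropyOn f Λ = (c : EReal) ∧ measEntropy f μ = (c : EReal)

/-- Entropy flexibility of `f` (on the whole space). -/
def EntropyFlexible (f : M → M) : Prop :=
  ∀ c : ℝ, 0 ≤ c → (c : EReal) < topEntropy f →
    ∃ (μ : Measure M) (Λ : Set M), IsProbabilityMeasure μ ∧ Ergodic f μ ∧
      IsCompact Λ ∧ f '' Λ = Λ ∧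
      topEntropyOn f Λ = (c : EReal) ∧ measEntropy f μ = (c : EReal)

end Discrete

/-! ### Shadowing and expansiveness (discrete time) -/

section Shadowing

variable {M : Type*} [MetricSpace M]

/-- The shadowing property for a homeomorphism `f` (full orbits indexed by `ℤ`,
encoded via orbit functions `z` with `z (n+1) = f (z n)`). -/
def ShadowingProperty (f : M → M) : Prop :=
  ∀ ε : ℝ, 0 < ε → ∃ δ : ℝ, 0 < δ ∧ ∀ x : ℤ → M,
    (∀ n : ℤ, dist (f (x n)) (x (n + 1)) ≤ δ) →
    ∃ z : ℤ → M, (∀ n : ℤ, z (n + 1) = f (z n)) ∧ ∀ n : ℤ, dist (z n) (x n) ≤ ε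

/-- The shadowing property relative to an invariant set `Λ`. -/
def ShadowingOn (f : M → M) (Λ : Set M) : Prop :=
  ∀ ε : ℝ, 0 < ε → ∃ δ : ℝ, 0 < δ ∧ ∀ x : ℤ → M, (∀ n : ℤ, x n ∈ Λ) →
    (∀ n : ℤ, dist (f (x n)) (x (n + 1)) ≤ δ) →
    ∃ z : ℤ → M, (∀ n : ℤ, z n ∈ Λ) ∧ (∀ n : ℤ, z (n + 1) = f (z n)) ∧
      ∀ n : ℤ, dist (z n) (x n) ≤ ε

/-- Expansiveness of a homeomorphism, phrased via full orbit functions. -/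
def Expansive (f : M → M) : Prop :=
  ∃ e : ℝ, 0 < e ∧ ∀ z w : ℤ → M,
    (∀ n : ℤ, z (n + 1) = f (z n)) → (∀ n : ℤ, w (n + 1) = f (w n)) →
    (∀ n : ℤ, dist (z n) (w n) ≤ e) → z 0 = w 0

/-- Topological transitivity of `f` on `Λ`. -/
def TransitiveOn (f : M → M) (Λ : Set M) : Prop :=
  ∀ U V : Set M, IsOpen U → IsOpen V → (U ∩ Λ).Nonempty → (V ∩ Λ).Nonempty →
    ∃ n : ℕ, 0 < n ∧ ((f^[n] '' (U ∩ Λ)) ∩ V).Nonempty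

end Shadowing

/-! ### Continuous-time dynamics -/

section Flows

variable {M : Type*} [MetricSpace M]

/-- A set invariant under all time-`t` maps of the flow. -/
def FlowInvSet (φ : Flow ℝ M) (Λ : Set M) : Prop := ∀ t : ℝ, φ.toFun t '' Λ = Λ

/-- Topological entropy of a flow on a set: entropy of its time-one map. -/
noncomputable def flowTopEntropyOn (φ : Flow ℝ M) (K : Set M) : EReal :=
  topEntropyOn (φ.toFun 1) K

/-- Topological entropy of a flow: the entropy of its time-one map. -/
noncomputable def flowTopEntropy (φ : Flow ℝ M) : EReal := topEntropy (φ.toFun 1)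

/-- Minimality of a flow on `Λ`. -/
def FlowMinimalOn (φ : Flow ℝ M) (Λ : Set M) : Prop :=
  ∀ K : Set M, K ⊆ Λ → K.Nonempty → IsClosed K → (∀ t : ℝ, φ.toFun t '' K = K) → K = Λ

variable [MeasurableSpace M]

/-- An invariant measure for a flow. -/
def FlowInvariant (φ : Flow ℝ M) (μ : Measure M) : Prop :=
  ∀ t : ℝ, MeasurePreserving (φ.toFun t) μ μ

/-- An ergodic measure for a flow. -/
def FlowErgodic (φ : Flow ℝ M) (μ : Measure M) : Prop :=
  FlowInvariant φ μ ∧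
    ∀ s : Set M, MeasurableSet s → (∀ t : ℝ, φ.toFun t ⁻¹' s = s) → μ s = 0 ∨ μ s = 1

/-- Measure-theoretic entropy of a flow: entropy of the time-one map. -/
noncomputable def flowMeasEntropy (φ : Flow ℝ M) (μ : Measure M) : EReal :=
  measEntropy (φ.toFun 1) μ

/-- Unique ergodicity of a flow on `Λ`. -/
def FlowUniquelyErgodicOn (φ : Flow ℝ M) (Λ : Set M) : Prop :=
  ∃! μ : Measure M, IsProbabilityMeasure μ ∧ FlowInvariant φ μ ∧ μ Λᶜ = 0

/-- Strict ergodicity of a flow on `Λ`. -/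
def FlowStrictlyErgodicOn (φ : Flow ℝ M) (Λ : Set M) : Prop :=
  FlowMinimalOn φ Λ ∧ FlowUniquelyErgodicOn φ Λ

/-- Entropy flexibility for flows. -/
def FlowEntropyFlexible (φ : Flow ℝ M) : Prop :=
  ∀ c : ℝ, 0 ≤ c → (c : EReal) < flowTopEntropy φ →
    ∃ (μ : Measure M) (Λ : Set M), IsProbabilityMeasure μ ∧ FlowErgodic φ μ ∧
      IsCompact Λ ∧ FlowInvSet φ Λ ∧
      flowTopEntropyOn φ Λ = (c : EReal) ∧ flowMeasEntropy φ μ = (c : EReal)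

end Flows

/-! ### Suspension flows -/

section Suspension

variable {X : Type*} [MetricSpace X] {Λ : Type*} [MetricSpace Λ]

/-- `φ` (a flow on `Λ`) is, on the subset `Γ ⊆ Λ`, the suspension flow of the base
map `f` restricted to `S ⊆ X` under the roof function `ρ`, witnessed by the
embedding `e : X → Λ` of the base. This characterizes the quotient of `S × ℝ` by
`(x, ρ x) ∼ (f x, 0)` with the unit-speed vertical flow. -/
def IsSuspensionOn (f : X → X) (S : Set X) (ρ : X → ℝ) (φ : Flow ℝ Λ) (Γ : Set Λ) : Prop :=
  ∃ e : X → Λ, ContinuousOn e S ∧ (∀ x ∈ S, e x ∈ Γ) ∧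
    (∀ x ∈ S, φ.toFun (ρ x) (e x) = e (f x)) ∧
    (∀ z ∈ Γ, ∃ x ∈ S, ∃ s : ℝ, 0 ≤ s ∧ s < ρ x ∧ φ.toFun s (e x) = z) ∧
    (∀ x ∈ S, ∀ y ∈ S, ∀ s u : ℝ, 0 ≤ s → s < ρ x → 0 ≤ u → u < ρ y →
      φ.toFun s (e x) = φ.toFun u (e y) → x = y ∧ s = u)

end Suspension

/-! ### Symbolic dynamics -/

section Symbolic

/-- The full shift map on `ℤ → A`. -/
def fullShift (A : Type*) : (ℤ → A) → (ℤ → A) := fun x i => x (i + 1)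

variable {A : Type*} [MetricSpace A]

/-- A subshift: a closed shift-invariant subset of the full shift. -/
def IsSubshift (S : Set (ℤ → A)) : Prop :=
  IsClosed S ∧ fullShift A '' S = S

/-- The vertex shift determined by a transition relation `Adj`. -/
def vertexShift {B : Type*} (Adj : B → B → Prop) : Set (ℤ → B) :=
  {x | ∀ i : ℤ, Adj (x i) (x (i + 1))}

/-- A topological conjugacy between two shift spaces (over possibly different
alphabets): a homeomorphism of the subspaces intertwining the shift maps. -/
def ShiftConj {B : Type*} [mB : MetricSpace B] (S : Set (ℤ → A)) (T : Set (ℤ → B)) : Prop :=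
  ∃ h : ↥S ≃ₜ ↥T, ∀ x y : ↥S, (y : ℤ → A) = fullShift A (x : ℤ → A) →
    ((h y : ℤ → B)) = fullShift B ((h x : ℤ → B))

/-- A subshift of finite type: a subshift topologically conjugate to a vertex shift
over some finite alphabet. -/
def IsSFT [Fintype A] (S : Set (ℤ → A)) : Prop :=
  IsSubshift S ∧ ∃ (B : Type) (_ : Fintype B) (mB : MetricSpace B) (Adj : B → B → Prop),
    @ShiftConj A _ B mB S (vertexShift Adj)

/-- The word `w` occurs in some point of `S`. -/
def occursIn (w : List A) (S : Set (ℤ → A)) : Prop :=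
  ∃ x ∈ S, ∃ a : ℤ, ∀ i : Fin w.length, x (a + (i : ℕ)) = w.get i

/-- The words of length `s` in the language of `S`. -/
def langOf (s : ℕ) (S : Set (ℤ → A)) : Set (List A) :=
  {w | w.length = s ∧ occursIn w S}

/-- `r` is a parsing of `x` into words from `𝒲`. -/
def ParsesAt (x : ℤ → A) (𝒲 : Finset (List A)) (r : ℤ → ℤ) : Prop :=
  ∀ j : ℤ, ∃ w ∈ 𝒲, r (j + 1) = r j + w.length ∧
    ∀ i : Fin w.length, x (r j + (i : ℕ)) = w.get i

/-- The renewal system over a finite set of words `𝒲`: all bi-infinite free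
concatenations of words from `𝒲`. -/
def renewalSet (𝒲 : Finset (List A)) : Set (ℤ → A) :=
  {x | ∃ r : ℤ → ℤ, ParsesAt x 𝒲 r}

end Symbolic

/-! ### Horseshoes for flows -/

section Horseshoe

variable {M : Type*} [MetricSpace M]

/-- Auxiliary: `Λ` is a horseshoe of `φ` with symbol space `B`. -/
def HorseshoeWitness (φ : Flow ℝ M) (Λ : Set M) (B : Type) [Fintype B] [MetricSpace B] : Prop :=
  2 ≤ Fintype.card B ∧ ∃ ρ : (ℤ → B) → ℝ, Continuous ρ ∧ (∀ x, 0 < ρ x) ∧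
    IsSuspensionOn (fullShift B) Set.univ ρ φ Λ

/-- A horseshoe of a flow: a compact invariant set on which the flow is conjugate to
a suspension flow over a full shift on at least two symbols. -/
def IsHorseshoe (φ : Flow ℝ M) (Λ : Set M) : Prop :=
  ∃ (B : Type) (iB : Fintype B) (mB : MetricSpace B), @HorseshoeWitness M _ φ Λ B iB mB

end Horseshoe

/-! ### The metric on measures and empirical measures -/

section MeasMetric

variable {M : Type*} [MetricSpace M] [MeasurableSpace M]

/-- The metric `𝔡` on Borel (probability) measures determined by a sequence of test
functions `Φ`. -/
noncomputable def measDist (Φ : ℕ → M → ℝ) (μ ν : Measure M) : ℝ :=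
  ∑' n : ℕ, (1 / 2 : ℝ) ^ (n + 1) * |(∫ x, Φ n x ∂μ) - ∫ x, Φ n x ∂ν|

/-- A sequence of test functions with `‖Φ n‖_∞ + Lip (Φ n) ≤ 1`, dense in `C(M,ℝ)`. -/
def GoodTestSeq (Φ : ℕ → M → ℝ) : Prop :=
  (∀ n : ℕ, ∃ C K : ℝ, 0 ≤ C ∧ 0 ≤ K ∧ C + K ≤ 1 ∧ (∀ x, |Φ n x| ≤ C) ∧
    ∀ x y, |Φ n x - Φ n y| ≤ K * dist x y) ∧
  ∀ g : M → ℝ, Continuous g → ∀ ε : ℝ, 0 < ε → ∃ n : ℕ, ∀ x, |g x - Φ n x| < ε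

/-- The `n`-th empirical measure of the point `x` for the map `f`. -/
noncomputable def empMeasure (f : M → M) (n : ℕ) (x : M) : Measure M :=
  (n : ℝ≥0∞)⁻¹ • ∑ j ∈ Finset.range n, Measure.dirac (f^[j] x)

/-- The topological support of a measure. -/
def measSupport (μ : Measure M) : Set M :=
  {x | ∀ U : Set M, IsOpen U → x ∈ U → 0 < μ U}

/-- A measure of maximal entropy of `f` on `Λ`. -/
def IsMaxEntropyMeasureOn (f : M → M) (Λ : Set M) (μ : Measure M) : Prop :=
  IsProbabilityMeasure μ ∧ MeasurePreserving f μ μ ∧ μ Λᶜ = 0 ∧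
    measEntropy f μ = topEntropyOn f Λ

end MeasMetric

/-! ### Flow shadowing and expansiveness -/

section FlowShadow

variable {M : Type*} [MetricSpace M]

/-- Bowen–Walters expansiveness for flows. -/
def FlowExpansive (φ : Flow ℝ M) : Prop :=
  ∀ ε : ℝ, 0 < ε → ∃ δ : ℝ, 0 < δ ∧ ∀ x y : M, ∀ s : ℝ → ℝ, Continuous s → s 0 = 0 →
    (∀ t : ℝ, dist (φ.toFun t x) (φ.toFun (s t) y) ≤ δ) →
    ∃ τ : ℝ, |τ| ≤ ε ∧ y = φ.toFun τ x

/-- The shadowing property for flows: every `(δ,1)`-pseudo-orbit is `ε`-traced,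
up to an orientation preserving reparametrization of time, by a true orbit. -/
def FlowShadowing (φ : Flow ℝ M) : Prop :=
  ∀ ε : ℝ, 0 < ε → ∃ δ : ℝ, 0 < δ ∧
    ∀ (x : ℤ → M) (T S : ℤ → ℝ), (∀ i : ℤ, 1 ≤ T i) →
      (∀ i : ℤ, dist (φ.toFun (T i) (x i)) (x (i + 1)) ≤ δ) →
      S 0 = 0 → (∀ i : ℤ, S (i + 1) = S i + T i) →
      ∃ (z : M) (h : ℝ → ℝ), StrictMono h ∧ Continuous h ∧ Function.Surjective h ∧
        ∀ i : ℤ, ∀ t : ℝ, S i ≤ t → t < S (i + 1) →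
          dist (φ.toFun (h t) z) (φ.toFun (t - S i) (x i)) ≤ ε

end FlowShadow


/-! ### Lift of a measure to a suspension flow -/

section Lift

variable {X : Type*} [MeasurableSpace X] {Y : Type*} [TopologicalSpace Y] [MeasurableSpace Y]

/-- The lift of a base measure `ν` to the suspension flow `φ` with roof `ρ`,
via the base embedding `e`: the normalized image of `ν ⊗ Leb` on the region
below the roof. -/
noncomputable def suspLift (φ : Flow ℝ Y) (e : X → Y) (ρ : X → ℝ) (ν : Measure X) :
    Measure Y :=
  (ENNReal.ofReal (∫ x, ρ x ∂ν))⁻¹ •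
    Measure.map (fun p : X × ℝ => φ.toFun p.2 (e p.1))
      ((ν.prod (volume : Measure ℝ)).restrict {p : X × ℝ | 0 ≤ p.2 ∧ p.2 < ρ p.1})

end Lift


end EF
open EF

namespace EFP

/-! ### Separated sets -/

section Sep

variable {M : Type*} [MetricSpace M] [CompactSpace M]

/-- By compactness the separated sets have bounded cardinality, so that the supremum defining
`sepCount` is not a junk value. -/
lemma sepCount_bdd (f : M → M) (K : Set M) (n : ℕ) {ε : ℝ} (hε : 0 < ε) :
    BddAbove {k : ℕ | ∃ Q : Finset M, ↑Q ⊆ K ∧ IsDynSep f n ε ↑Q ∧ Q.card = k} := by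
  classical
  obtain ⟨t, -, ht⟩ := isCompact_univ.elim_nhds_subcover (fun x : M => Metric.ball x (ε / 2))
    (fun x _ => Metric.ball_mem_nhds x (half_pos hε))
  have hc : ∀ x : M, ∃ y : {y // y ∈ t}, dist x y < ε / 2 := by
    intro x
    have := ht (Set.mem_univ x)
    simp only [Set.mem_iUnion] at this
    obtain ⟨y, hy, hxy⟩ := this
    exact ⟨⟨y, hy⟩, hxy⟩
  choose g hg using hc
  refine ⟨Fintype.card (Fin (n + 1) → {y // y ∈ t}), ?_⟩
  rintro k ⟨Q, -, hQ, rfl⟩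
  rw [← Finset.card_univ]
  refine Finset.card_le_card_of_injOn (fun x j => g (f^[(j : ℕ)] x)) (fun _ _ => by simp) ?_
  intro x hx y hy hxy
  by_contra hne
  obtain ⟨j, hj, hd⟩ := hQ hx hy hne
  have h1 := hg (f^[j] x)
  have h2 := hg (f^[j] y)
  have h3 : g (f^[j] x) = g (f^[j] y) := congrFun hxy ⟨j, by omega⟩
  rw [h3] at h1
  have := dist_triangle_right (f^[j] x) (f^[j] y) (g (f^[j] y) : M)
  linarith

lemma card_le_sepCount (f : M → M) (K : Set M) (n : ℕ) {ε : ℝ} (hε : 0 < ε) {Q : Finset M}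
    (hQK : ↑Q ⊆ K) (hQ : IsDynSep f n ε ↑Q) : Q.card ≤ sepCount f K n ε :=
  le_csSup (sepCount_bdd f K n hε) ⟨Q, hQK, hQ, rfl⟩

lemma exists_card_eq_sepCount (f : M → M) (K : Set M) (n : ℕ) {ε : ℝ} (hε : 0 < ε) :
    ∃ Q : Finset M, ↑Q ⊆ K ∧ IsDynSep f n ε ↑Q ∧ Q.card = sepCount f K n ε :=
  Nat.sSup_mem (s := {k : ℕ | ∃ Q : Finset M, (Q : Set M) ⊆ K ∧ IsDynSep f n ε ↑Q ∧ Q.card = k})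
    ⟨0, ∅, by simp, by simp [IsDynSep], by simp⟩ (sepCount_bdd f K n hε)

lemma sepCount_le {f : M → M} {K : Set M} {n : ℕ} {ε : ℝ} {N : ℕ}
    (h : ∀ Q : Finset M, ↑Q ⊆ K → IsDynSep f n ε ↑Q → Q.card ≤ N) : sepCount f K n ε ≤ N := by
  refine csSup_le ⟨0, ∅, by simp, by simp [IsDynSep], by simp⟩ ?_
  rintro k ⟨Q, h1, h2, rfl⟩
  exact h Q h1 h2

/-- A separated set of maximal cardinality is spanning. -/
lemma exists_spanning (f : M → M) (K : Set M) (n : ℕ) {ε : ℝ} (hε : 0 < ε) :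
    ∃ Q : Finset M, Q.card = sepCount f K n ε ∧
      ∀ x ∈ K, ∃ z ∈ Q, ∀ j ≤ n, dist (f^[j] x) (f^[j] z) ≤ ε := by
  classical
  obtain ⟨Q, hQK, hQ, hc⟩ := exists_card_eq_sepCount f K n hε
  refine ⟨Q, hc, fun x hx => ?_⟩
  by_contra! hcon
  have hxQ : x ∉ Q := by
    intro hxQ
    obtain ⟨j, -, hj⟩ := hcon x hxQ
    simp at hj; linarith
  have h1 : IsDynSep f n ε ↑(insert x Q) := by
    intro a ha b hb hab
    rw [Finset.coe_insert, Set.mem_insert_iff] at ha hb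
    rcases ha with rfl | ha <;> rcases hb with rfl | hb
    · exact absurd rfl hab
    · exact hcon b hb
    · obtain ⟨j, hj, h⟩ := hcon a ha
      exact ⟨j, hj, by rwa [dist_comm]⟩
    · exact hQ ha hb hab
  have h2 : (insert x Q).card ≤ sepCount f K n ε :=
    card_le_sepCount f K n hε (by
      rw [Finset.coe_insert]; exact Set.insert_subset hx hQK) h1
  rw [Finset.card_insert_of_notMem hxQ] at h2
  omega

end Sep

/-! ### Shannon entropy of finite distributions -/

section Shannon

lemma negMulLog_eq (x : ℝ) : EF.negMulLog x = Real.negMulLog x := by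
  simp [EF.negMulLog, Real.negMulLog]

/-- Gibbs' inequality for a single term: `log t ≤ t - 1` at `t = q / p`. -/
lemma log_ineq {p q : ℝ} (hp : 0 ≤ p) (hq : 0 ≤ q) (h : p ≠ 0 → q ≠ 0) :
    p * Real.log q ≤ p * Real.log p + (q - p) := by
  rcases hp.eq_or_lt with rfl | hp
  · simpa using hq
  have hq' : 0 < q := hq.lt_of_ne' (h hp.ne')
  have := Real.log_le_sub_one_of_pos (div_pos hq' hp)
  rw [Real.log_div hq'.ne' hp.ne'] at this
  have h2 := mul_le_mul_of_nonneg_left this hp.le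
  have h3 : p * (q / p - 1) = q - p := by field_simp
  rw [h3] at h2
  linarith

/-- Entropy of a subdistribution of mass `P` on a finite set is at most
`P log (card) - P log P`. -/
lemma sum_negMulLog_le {ι : Type*} (s : Finset ι) (p : ι → ℝ) (hp : ∀ i ∈ s, 0 ≤ p i) :
    ∑ i ∈ s, EF.negMulLog (p i) ≤
      (∑ i ∈ s, p i) * Real.log s.card + EF.negMulLog (∑ i ∈ s, p i) := by
  rcases s.eq_empty_or_nonempty with rfl | hs
  · simp [EF.negMulLog]
  set P := ∑ i ∈ s, p i with hP
  have hc : (0 : ℝ) < s.card := by exact_mod_cast hs.card_pos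
  have hP0 : 0 ≤ P := Finset.sum_nonneg hp
  have h1 : ∀ i ∈ s, p i * Real.log (P / s.card) ≤
      p i * Real.log (p i) + (P / s.card - p i) := by
    intro i hi
    refine log_ineq (hp i hi) (by positivity) (fun hne => ?_)
    have : 0 < P := lt_of_lt_of_le ((hp i hi).lt_of_ne' hne) (Finset.single_le_sum hp hi)
    positivity
  have h2 := Finset.sum_le_sum h1
  rw [← Finset.sum_mul, Finset.sum_add_distrib, Finset.sum_sub_distrib, Finset.sum_const,
    nsmul_eq_mul, ← hP] at h2
  have h3 : (s.card : ℝ) * (P / s.card) - P = 0 := by field_simp; ring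
  rw [h3, add_zero] at h2
  have h4 : P * Real.log (P / s.card) = P * Real.log P - P * Real.log s.card := by
    rcases hP0.eq_or_lt with h0 | h0
    · simp [← h0]
    · rw [Real.log_div h0.ne' hc.ne']; ring
  simp only [EF.negMulLog, Finset.sum_neg_distrib]
  linarith

/-- Subadditivity of Shannon entropy. -/
lemma entropy_subadd {α β : Type*} [Fintype α] [Fintype β] (p : α → β → ℝ)
    (hp : ∀ a b, 0 ≤ p a b) (h1 : ∑ a, ∑ b, p a b = 1) :
    ∑ a, ∑ b, EF.negMulLog (p a b) ≤
      ∑ a, EF.negMulLog (∑ b, p a b) + ∑ b, EF.negMulLog (∑ a, p a b) := by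
  set A : α → ℝ := fun a => ∑ b, p a b with hA
  set C : β → ℝ := fun b => ∑ a, p a b with hC
  have hA0 : ∀ a, 0 ≤ A a := fun a => Finset.sum_nonneg fun b _ => hp a b
  have hC0 : ∀ b, 0 ≤ C b := fun b => Finset.sum_nonneg fun a _ => hp a b
  have hAp : ∀ a b, p a b ≤ A a := fun a b =>
    Finset.single_le_sum (f := fun b => p a b) (fun b _ => hp a b) (Finset.mem_univ b)
  have hCp : ∀ a b, p a b ≤ C b := fun a b =>
    Finset.single_le_sum (f := fun a => p a b) (fun a _ => hp a b) (Finset.mem_univ a)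
  have hsumC : ∑ b, C b = 1 := by rw [← h1, Finset.sum_comm]
  have key : ∀ a b, p a b * Real.log (A a) + p a b * Real.log (C b) ≤
      p a b * Real.log (p a b) + (A a * C b - p a b) := by
    intro a b
    rcases (hp a b).eq_or_lt with h | h
    · rw [← h]; simp; exact mul_nonneg (hA0 a) (hC0 b)
    · have ha : 0 < A a := h.trans_le (hAp a b)
      have hc : 0 < C b := h.trans_le (hCp a b)
      have := log_ineq h.le (mul_nonneg ha.le hc.le) (fun _ => (mul_pos ha hc).ne')
      rw [Real.log_mul ha.ne' hc.ne'] at this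
      linarith
  have h2 : ∑ a, ∑ b, (p a b * Real.log (A a) + p a b * Real.log (C b)) ≤
      ∑ a, ∑ b, (p a b * Real.log (p a b) + (A a * C b - p a b)) :=
    Finset.sum_le_sum fun a _ => Finset.sum_le_sum fun b _ => key a b
  simp only [Finset.sum_add_distrib, Finset.sum_sub_distrib] at h2
  have e1 : ∑ a, ∑ b, p a b * Real.log (A a) = ∑ a, A a * Real.log (A a) := by
    simp only [← Finset.sum_mul, hA]
  have e2 : ∑ a, ∑ b, p a b * Real.log (C b) = ∑ b, C b * Real.log (C b) := by
    rw [Finset.sum_comm]; simp only [← Finset.sum_mul, hC]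
  have e3 : ∑ a, ∑ b, A a * C b = 1 := by
    simp only [← Finset.mul_sum, hsumC, mul_one]; exact h1
  rw [e1, e2, e3, h1] at h2
  simp only [EF.negMulLog, Finset.sum_neg_distrib]
  linarith

end Shannon

end EFP

namespace EFP

/-! ### Names of points with respect to a partition -/

section Names

variable {α : Type*} [MeasurableSpace α]

/-- The map sending a point to the element of the partition containing it. -/
lemma exists_label {P : Finset (Set α)} (hP : IsMeasPartition P) :
    ∃ lab : α → {p // p ∈ P}, ∀ x (p : {p // p ∈ P}), x ∈ (p : Set α) ↔ lab x = p := by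
  have h1 : ∀ x : α, ∃ p : {p // p ∈ P}, x ∈ (p : Set α) := by
    intro x
    have : x ∈ ⋃₀ (↑P : Set (Set α)) := by rw [hP.2.1]; trivial
    obtain ⟨p, hp, hx⟩ := this
    exact ⟨⟨p, hp⟩, hx⟩
  choose lab hlab using h1
  refine ⟨lab, fun x p => ⟨fun hx => ?_, fun h => h ▸ hlab x⟩⟩
  by_contra hne
  have := hP.2.2 (lab x).2 p.2 (fun h => hne (Subtype.ext h))
  exact Set.disjoint_left.1 this (hlab x) hx

/-- The itinerary of `x` during the first `n` steps, with respect to a labelling of points. -/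
def nameOf {β : Type*} (f : α → α) (lab : α → β) (n : ℕ) (x : α) : Fin n → β :=
  fun i => lab (f^[(i : ℕ)] x)

lemma atom_eq {P : Finset (Set α)} {lab : α → {p // p ∈ P}}
    (hlab : ∀ x (p : {p // p ∈ P}), x ∈ (p : Set α) ↔ lab x = p) (f : α → α) {n : ℕ}
    (a : Fin n → {p // p ∈ P}) :
    (⋂ i : Fin n, f^[(i : ℕ)] ⁻¹' ((a i : Set α))) = nameOf f lab n ⁻¹' {a} := by
  ext x
  simp only [Set.mem_iInter, Set.mem_preimage, hlab, Set.mem_singleton_iff, nameOf, funext_iff]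

lemma measurableSet_atom {P : Finset (Set α)} (hP : IsMeasPartition P) {f : α → α}
    (hf : Measurable f) {n : ℕ} (a : Fin n → {p // p ∈ P}) :
    MeasurableSet (⋂ i : Fin n, f^[(i : ℕ)] ⁻¹' ((a i : Set α))) :=
  MeasurableSet.iInter fun i => (hf.iterate _) (hP.1 _ (a i).2)

lemma refinedInfo_eq {P : Finset (Set α)} {lab : α → {p // p ∈ P}}
    (hlab : ∀ x (p : {p // p ∈ P}), x ∈ (p : Set α) ↔ lab x = p) (f : α → α) (μ : Measure α)
    (n : ℕ) : refinedInfo f μ P n =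
      ∑ a : Fin n → {p // p ∈ P}, EF.negMulLog (μ.real (nameOf f lab n ⁻¹' {a})) := by
  simp only [refinedInfo, atom_eq hlab, Measure.real]

lemma sum_atoms {P : Finset (Set α)} {lab : α → {p // p ∈ P}} (hP : IsMeasPartition P)
    (hlab : ∀ x (p : {p // p ∈ P}), x ∈ (p : Set α) ↔ lab x = p) {f : α → α} (hf : Measurable f)
    (μ : Measure α) [IsFiniteMeasure μ] (n : ℕ) (T : Finset (Fin n → {p // p ∈ P})) :
    ∑ a ∈ T, μ.real (nameOf f lab n ⁻¹' {a}) = μ.real (nameOf f lab n ⁻¹' ↑T) :=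
  sum_measureReal_preimage_singleton T (fun a _ => by
    rw [← atom_eq hlab]; exact measurableSet_atom hP hf a)

lemma nonneg_refinedInfo {P : Finset (Set α)} (f : α → α) (μ : Measure α) [IsProbabilityMeasure μ]
    (n : ℕ) : 0 ≤ refinedInfo f μ P n := by
  refine Finset.sum_nonneg fun a _ => ?_
  rw [negMulLog_eq]
  exact Real.negMulLog_nonneg ENNReal.toReal_nonneg measureReal_le_one

lemma refinedInfo_le_card {P : Finset (Set α)} (hP : IsMeasPartition P) {f : α → α}
    (hf : Measurable f) (μ : Measure α) [IsProbabilityMeasure μ] (n : ℕ) :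
    refinedInfo f μ P n ≤ n * Real.log P.card := by
  obtain ⟨lab, hlab⟩ := exists_label hP
  rw [refinedInfo_eq hlab]
  refine (sum_negMulLog_le Finset.univ _ (fun _ _ => measureReal_nonneg)).trans ?_
  rw [sum_atoms hP hlab hf]
  simp [EF.negMulLog]

end Names

/-! ### Metric entropy is at most topological entropy -/

section Upper

/-- Size of a Hamming ball of radius `r` around `d` in `κ ^ n`. -/
lemma hamming_card {κ : Type*} [Fintype κ] [DecidableEq κ] (n : ℕ) (d : Fin n → κ) {t r : ℝ}
    (ht : 0 < t) (ht1 : t ≤ 1) :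
    (((Finset.univ.filter fun a : Fin n → κ =>
      ((Finset.univ.filter fun j => a j ≠ d j).card : ℝ) ≤ r).card : ℕ) : ℝ) ≤
      Real.exp (r * Real.log t⁻¹) * (1 + t * Fintype.card κ) ^ n := by
  set T := Finset.univ.filter fun a : Fin n → κ =>
      ((Finset.univ.filter fun j => a j ≠ d j).card : ℝ) ≤ r with hT
  have h1 : ∑ a : Fin n → κ, ∏ j, (if a j ≠ d j then t else 1) =
      ∏ j : Fin n, ∑ p : κ, (if p ≠ d j then t else 1) := by
    rw [Finset.prod_univ_sum, Fintype.piFinset_univ]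
  have h2 : ∀ j : Fin n, ∑ p : κ, (if p ≠ d j then t else 1) ≤ 1 + t * Fintype.card κ := by
    intro j
    have : ∀ p : κ, (if p ≠ d j then t else 1) ≤ (if p = d j then 1 else 0) + t := by
      intro p; by_cases h : p = d j <;> simp [h]; exact ht.le
    refine (Finset.sum_le_sum fun p _ => this p).trans ?_
    rw [Finset.sum_add_distrib]; simp [mul_comm]
  have h3 : ∏ j : Fin n, ∑ p : κ, (if p ≠ d j then t else 1) ≤ (1 + t * Fintype.card κ) ^ n := by
    refine (Finset.prod_le_prod (fun j _ => Finset.sum_nonneg fun p _ => ?_)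
      (fun j _ => h2 j)).trans ?_
    · split_ifs <;> positivity
    · simp
  have h4 : ∀ a ∈ T, Real.exp (-(r * Real.log t⁻¹)) ≤ ∏ j, (if a j ≠ d j then t else 1) := by
    intro a ha
    have ha' := (Finset.mem_filter.1 ha).2
    rw [Finset.prod_ite, Finset.prod_const_one, mul_one, Finset.prod_const]
    rw [← Real.exp_log (pow_pos ht _), Real.log_pow, Real.log_inv, mul_neg, neg_neg]
    exact Real.exp_le_exp.2 (mul_le_mul_of_nonpos_right ha' (Real.log_nonpos ht.le ht1))
  have h5 : (T.card : ℝ) * Real.exp (-(r * Real.log t⁻¹)) ≤ (1 + t * Fintype.card κ) ^ n := by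
    rw [← nsmul_eq_mul, ← Finset.sum_const]
    refine (Finset.sum_le_sum h4).trans (le_trans ?_ (h1.trans_le h3))
    exact Finset.sum_le_sum_of_subset_of_nonneg (Finset.subset_univ _)
      (fun a _ _ => Finset.prod_nonneg fun j _ => by split_ifs <;> positivity)
  rw [Real.exp_neg, ← div_eq_mul_inv, div_le_iff₀ (Real.exp_pos _)] at h5
  linarith

variable {M : Type*} [MetricSpace M] [CompactSpace M] [MeasurableSpace M] [BorelSpace M]

/-- Markov's inequality for the number of visits to a small set. -/
lemma visits_le {f : M → M} {μ : Measure M} [IsProbabilityMeasure μ]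
    (hf : MeasurePreserving f μ μ) {U : Set M} (hU : MeasurableSet U) {θ : ℝ} (hθ : 0 < θ)
    (hμU : μ.real U ≤ θ ^ 2) {n : ℕ} (hn : 0 < n) :
    μ.real {x | θ * n ≤ ∑ j ∈ Finset.range n, U.indicator (fun _ => (1 : ℝ)) (f^[j] x)} ≤ θ := by
  have hint : ∀ j, Integrable (fun x => U.indicator (fun _ => (1 : ℝ)) (f^[j] x)) μ := fun j =>
    (hf.iterate j).integrable_comp_of_integrable ((integrable_const 1).indicator hU)
  have h1 := mul_meas_ge_le_integral_of_nonneg (μ := μ)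
    (f := fun x => ∑ j ∈ Finset.range n, U.indicator (fun _ => (1 : ℝ)) (f^[j] x))
    (Filter.Eventually.of_forall fun x => Finset.sum_nonneg fun j _ =>
      Set.indicator_nonneg (fun _ _ => zero_le_one) _)
    (integrable_finsetSum _ fun j _ => hint j) (θ * n)
  rw [integral_finsetSum _ fun j _ => hint j] at h1
  have h2 : ∀ j, ∫ x, U.indicator (fun _ => (1 : ℝ)) (f^[j] x) ∂μ = μ.real U := by
    intro j
    have hm := (hf.iterate j)
    have hi := integral_map (μ := μ) hm.measurable.aemeasurable
      (f := U.indicator (fun _ => (1 : ℝ)))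
      ((measurable_const.indicator hU).aestronglyMeasurable)
    rw [hm.map_eq] at hi
    rw [← hi, integral_indicator_const _ hU]; simp
  simp only [h2, Finset.sum_const, Finset.card_range, nsmul_eq_mul] at h1
  have hn' : (0 : ℝ) < n := by exact_mod_cast hn
  have h3 : θ * n * μ.real {x | θ * n ≤
      ∑ j ∈ Finset.range n, U.indicator (fun _ => (1 : ℝ)) (f^[j] x)} ≤ θ * n * θ := by
    refine h1.trans ?_
    nlinarith
  exact le_of_mul_le_mul_left h3 (by positivity)

lemma negMulLog_le_one_sub {p : ℝ} (hp : 0 ≤ p) : EF.negMulLog p ≤ 1 - p := by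
  have := log_ineq hp zero_le_one (fun _ => one_ne_zero)
  simp only [EF.negMulLog]
  simp at this
  linarith

/-- Outside a set of small measure, the itinerary of a point is determined up to few errors
by a point of a spanning set. -/
lemma refinedInfo_le_sepCount {f : M → M} {μ : Measure M} [IsProbabilityMeasure μ]
    (hf : MeasurePreserving f μ μ) {K : Set M} (hμK : μ Kᶜ = 0)
    {P : Finset (Set M)} (hP : IsMeasPartition P) {η : ℝ} (hη : 0 < η) :
    ∃ ε > 0, ∀ n : ℕ, refinedInfo f μ P n ≤ Real.log (sepCount f K n ε) + η * n + 1 := by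
  classical
  obtain ⟨lab, hlab⟩ := exists_label hP
  have : Nonempty M := μ.nonempty_of_neZero
  have x0 : M := Classical.choice this
  have hPne : Nonempty {p // p ∈ P} := ⟨lab x0⟩
  set k : ℕ := Fintype.card {p // p ∈ P} with hk
  have hk1 : 1 ≤ k := Fintype.card_pos
  have hk1' : (1 : ℝ) ≤ k := by exact_mod_cast hk1
  have hk0 : (0 : ℝ) < k := by linarith
  -- `t` makes the Hamming factor `(1 + t k)ⁿ` small, then `θ` the fraction of errors.
  set t : ℝ := min 1 (η / (3 * k)) with ht
  have ht0 : 0 < t := lt_min one_pos (by positivity)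
  have ht1 : t ≤ 1 := min_le_left _ _
  have htk : t * k ≤ η / 3 := by
    calc t * k ≤ η / (3 * k) * k := by gcongr; exact min_le_right _ _
      _ = η / 3 := by field_simp
  have hlt : 0 ≤ Real.log t⁻¹ := Real.log_nonneg ((one_le_inv₀ ht0).2 ht1)
  have hlk : 0 ≤ Real.log k := Real.log_nonneg hk1'
  obtain ⟨θ, hθ0, hθ1, hθ2, hθ3⟩ : ∃ θ : ℝ, 0 < θ ∧ θ ≤ 1 ∧ θ * Real.log t⁻¹ ≤ η / 3 ∧
      θ * Real.log k ≤ η / 3 := by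
    refine ⟨min 1 (η / (3 * (Real.log t⁻¹ + Real.log k + 1))), lt_min one_pos (by positivity),
      min_le_left _ _, ?_, ?_⟩
    all_goals
      refine (mul_le_mul_of_nonneg_right (min_le_right _ _) (by assumption)).trans ?_
      rw [div_mul_eq_mul_div, div_le_div_iff₀ (by positivity) (by norm_num)]
      nlinarith
  -- Closed cores `F p` fill the elements of the partition up to total measure `θ ^ 2`; `U` is the
  -- rest.
  have hF : ∀ p : {p // p ∈ P}, ∃ F ⊆ (p : Set M), IsClosed F ∧
      μ ((p : Set M) \ F) < ENNReal.ofReal (θ ^ 2 / k) := fun p =>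
    (hP.1 p p.2).exists_isClosed_sdiff_lt (measure_ne_top _ _)
      (by rw [Ne, ENNReal.ofReal_eq_zero, not_le]; positivity)
  choose F hFp hFc hFμ using hF
  set U : Set M := (⋃ p, F p)ᶜ with hU
  have hUm : MeasurableSet U := (MeasurableSet.iUnion fun p => (hFc p).measurableSet).compl
  have hμU : μ.real U ≤ θ ^ 2 := by
    have h1 : U ⊆ ⋃ p : {p // p ∈ P}, ((p : Set M) \ F p) := by
      intro x hx
      refine Set.mem_iUnion.2 ⟨lab x, (hlab x _).2 rfl, fun h => hx (Set.mem_iUnion.2 ⟨_, h⟩)⟩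
    have h2 : μ U ≤ ENNReal.ofReal (θ ^ 2) := by
      refine (measure_mono h1).trans ((measure_iUnion_fintype_le _ _).trans ?_)
      refine (Finset.sum_le_sum fun p _ => (hFμ p).le).trans ?_
      rw [Finset.sum_const, Finset.card_univ, ← hk, nsmul_eq_mul, ← ENNReal.ofReal_natCast,
        ← ENNReal.ofReal_mul (by positivity)]
      apply le_of_eq; congr 1; field_simp
    exact ENNReal.toReal_le_of_le_ofReal (by positivity) h2
  obtain ⟨ε, hε, hsep⟩ : ∃ ε > 0, ∀ p q : {p // p ∈ P}, p ≠ q → ∀ x ∈ F p, ∀ y ∈ F q, ∀ z,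
      dist x z ≤ ε → dist y z ≤ ε → False := by
    have : ∀ᶠ ε : ℝ in 𝓝[>] 0, ∀ p q : {p // p ∈ P}, p ≠ q → ∀ x ∈ F p, ∀ y ∈ F q, ∀ z,
      dist x z ≤ ε → dist y z ≤ ε → False := by
      refine Filter.eventually_all.2 fun p => Filter.eventually_all.2 fun q => ?_
      by_cases hpq : p = q
      · exact Filter.Eventually.of_forall fun _ h => absurd hpq h
      have hd : Disjoint (F p) (F q) :=
        Disjoint.mono (hFp p) (hFp q) (hP.2.2 p.2 q.2 (fun h => hpq (Subtype.ext h)))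
      obtain ⟨δ, hδ, hdd⟩ := hd.exists_thickenings (hFc p).isCompact (hFc q)
      filter_upwards [Ioo_mem_nhdsGT hδ] with ε hε _ x hx y hy z h1 h2
      have hz1 : z ∈ Metric.thickening δ (F p) :=
        Metric.mem_thickening_iff.2 ⟨x, hx, by rw [dist_comm]; exact h1.trans_lt hε.2⟩
      have hz2 : z ∈ Metric.thickening δ (F q) :=
        Metric.mem_thickening_iff.2 ⟨y, hy, by rw [dist_comm]; exact h2.trans_lt hε.2⟩
      exact Set.disjoint_left.1 hdd hz1 hz2
    obtain ⟨ε, h, hε⟩ := (this.and self_mem_nhdsWithin).exists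
    exact ⟨ε, hε, h⟩
  refine ⟨ε, hε, fun n => ?_⟩
  have hKne : K.Nonempty := by
    by_contra h
    rw [Set.not_nonempty_iff_eq_empty] at h
    simp [h] at hμK
  rcases Nat.eq_zero_or_pos n with rfl | hn
  · have := refinedInfo_le_card hP hf.measurable μ 0
    have h2 : 0 ≤ Real.log (sepCount f K 0 ε) := Real.log_natCast_nonneg _
    push_cast at this ⊢
    linarith
  obtain ⟨E, hEc, hE⟩ := exists_spanning f K n hε
  have hEne : 1 ≤ E.card := by
    obtain ⟨x, hx⟩ := hKne
    obtain ⟨z, hz, -⟩ := hE x hx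
    exact Finset.card_pos.2 ⟨z, hz⟩
  -- `d z j` is the only element of the partition whose core comes within `ε` of `f^[j] z`.
  have hdz : ∀ z : M, ∀ j : Fin n, ∃ d : {p // p ∈ P}, ∀ p, (∃ y ∈ F p, dist y (f^[(j : ℕ)] z) ≤ ε) →
      d = p := by
    intro z j
    by_cases h : ∃ p, ∃ y ∈ F p, dist y (f^[(j : ℕ)] z) ≤ ε
    · obtain ⟨d, y, hy, hyz⟩ := h
      refine ⟨d, fun p hp => ?_⟩
      obtain ⟨y', hy', hyz'⟩ := hp
      by_contra hne
      exact hsep d p hne y hy y' hy' _ hyz hyz'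
    · push Not at h
      refine ⟨lab x0, fun p hp => ?_⟩
      obtain ⟨y, hy, hyz⟩ := hp
      exact absurd hyz (not_le.2 (h p y hy))
  choose d hd using hdz
  -- `T` consists of the names that differ from some `d z`, `z ∈ E`, in at most `θ n` places.
  set T : Finset (Fin n → {p // p ∈ P}) := E.biUnion fun z => Finset.univ.filter fun a =>
    ((Finset.univ.filter fun j => a j ≠ d z j).card : ℝ) ≤ θ * n with hT
  have hTc : (T.card : ℝ) ≤
      E.card * (Real.exp (θ * n * Real.log t⁻¹) * (1 + t * k) ^ n) := by
    calc (T.card : ℝ) ≤ ∑ z ∈ E, (((Finset.univ.filter fun a : Fin n → {p // p ∈ P} =>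
          ((Finset.univ.filter fun j => a j ≠ d z j).card : ℝ) ≤ θ * n).card : ℕ) : ℝ) := by
          exact_mod_cast Finset.card_biUnion_le
      _ ≤ ∑ z ∈ E, Real.exp (θ * n * Real.log t⁻¹) * (1 + t * k) ^ n :=
          Finset.sum_le_sum fun z _ => hamming_card n (d z) ht0 ht1
      _ = _ := by simp
  have hlogT : Real.log T.card ≤ Real.log E.card + (2 * (η / 3)) * n := by
    rcases Nat.eq_zero_or_pos T.card with h0 | h0
    · rw [h0]; simp only [Nat.cast_zero, Real.log_zero]
      have := Real.log_natCast_nonneg E.card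
      positivity
    have hE0 : (0 : ℝ) < E.card := by exact_mod_cast hEne
    refine (Real.log_le_log (by exact_mod_cast h0) hTc).trans ?_
    rw [Real.log_mul hE0.ne' (by positivity), Real.log_mul (by positivity) (by positivity),
      Real.log_exp, Real.log_pow]
    have h1 : Real.log (1 + t * k) ≤ η / 3 := by
      have := Real.log_le_sub_one_of_pos (x := 1 + t * k) (by positivity)
      linarith
    have hn' : (0 : ℝ) < n := by exact_mod_cast hn
    nlinarith
  -- A point of `K` whose name is not in `T` visits `U` at least `θ n` times.
  have hpT : μ.real (nameOf f lab n ⁻¹' ↑Tᶜ) ≤ θ := by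
    refine le_trans ?_ (visits_le hf hUm hθ0 hμU hn)
    have hsub : nameOf f lab n ⁻¹' ↑Tᶜ ⊆ {x | θ * n ≤
        ∑ j ∈ Finset.range n, U.indicator (fun _ => (1 : ℝ)) (f^[j] x)} ∪ Kᶜ := by
      intro x hx
      by_contra hcon
      simp only [Set.mem_union, Set.mem_ofPred_eq, not_or, not_le, Set.mem_compl_iff,
        not_not] at hcon
      obtain ⟨hcnt, hxK⟩ := hcon
      obtain ⟨z, hz, hxz⟩ := hE x hxK
      simp only [Finset.coe_compl, Set.mem_preimage, Set.mem_compl_iff, Finset.mem_coe] at hx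
      apply hx
      rw [hT, Finset.mem_biUnion]
      refine ⟨z, hz, Finset.mem_filter.2 ⟨Finset.mem_univ _, le_trans ?_ hcnt.le⟩⟩
      rw [Finset.sum_range (fun j => U.indicator (fun _ => (1 : ℝ)) (f^[j] x)),
        Finset.card_filter]
      push_cast
      refine Finset.sum_le_sum fun j _ => ?_
      by_cases hj : f^[(j : ℕ)] x ∈ U
      · rw [Set.indicator_of_mem hj]; split_ifs <;> norm_num
      · rw [if_neg, Set.indicator_of_notMem hj]
        rw [not_not]
        rw [hU, Set.mem_compl_iff, not_not] at hj
        obtain ⟨p, hp⟩ := Set.mem_iUnion.1 hj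
        have h1 : lab (f^[(j : ℕ)] x) = p := (hlab _ _).1 (hFp p hp)
        have h2 : d z j = p := hd z j p ⟨_, hp, hxz j j.2.le⟩
        simp [nameOf, h1, h2]
    calc μ.real _ ≤ μ.real _ := measureReal_mono hsub
      _ ≤ μ.real _ + μ.real Kᶜ := measureReal_union_le _ _
      _ = _ := by simp [Measure.real, hμK]
  -- The names in `T` contribute about `log |T|`; those outside have total mass at most `θ`.
  rw [refinedInfo_eq hlab, ← Finset.sum_add_sum_compl T]
  have hA := sum_negMulLog_le T (fun a => μ.real (nameOf f lab n ⁻¹' {a}))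
    (fun _ _ => measureReal_nonneg)
  have hB := sum_negMulLog_le Tᶜ (fun a => μ.real (nameOf f lab n ⁻¹' {a}))
    (fun _ _ => measureReal_nonneg)
  have hsum : ∑ a ∈ T, μ.real (nameOf f lab n ⁻¹' {a}) +
      ∑ a ∈ Tᶜ, μ.real (nameOf f lab n ⁻¹' {a}) = 1 := by
    rw [Finset.sum_add_sum_compl, sum_atoms hP hlab hf.measurable]; simp
  rw [← sum_atoms hP hlab hf.measurable] at hpT
  set a := ∑ a ∈ T, μ.real (nameOf f lab n ⁻¹' {a}) with ha
  set b := ∑ a ∈ Tᶜ, μ.real (nameOf f lab n ⁻¹' {a}) with hb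
  have ha0 : 0 ≤ a := Finset.sum_nonneg fun _ _ => measureReal_nonneg
  have hb0 : 0 ≤ b := Finset.sum_nonneg fun _ _ => measureReal_nonneg
  have hna := negMulLog_le_one_sub ha0
  have hnb := negMulLog_le_one_sub hb0
  have hlT : 0 ≤ Real.log T.card := Real.log_natCast_nonneg _
  have hcard : Real.log (Tᶜ.card : ℕ) ≤ n * Real.log k := by
    rcases Nat.eq_zero_or_pos Tᶜ.card with h0 | h0
    · rw [h0]; simp; positivity
    rw [← Real.log_pow]
    refine Real.log_le_log (by exact_mod_cast h0) ?_
    have := Finset.card_le_univ Tᶜ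
    rw [Fintype.card_fun, Fintype.card_fin, ← hk] at this
    exact_mod_cast this
  have h1 : a * Real.log T.card ≤ Real.log T.card := by
    have : a ≤ 1 := by linarith
    nlinarith
  have h2 : b * Real.log (Tᶜ.card : ℕ) ≤ η / 3 * n := by
    calc b * Real.log (Tᶜ.card : ℕ) ≤ θ * (n * Real.log k) :=
          mul_le_mul hpT hcard (Real.log_natCast_nonneg _) hθ0.le
      _ = (θ * Real.log k) * n := by ring
      _ ≤ _ := by gcongr
  rw [← hEc]
  linarith

/-- One half of the variational principle. -/
lemma measEntropy_le_topEntropyOn {f : M → M} {μ : Measure M} [IsProbabilityMeasure μ]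
    (hf : MeasurePreserving f μ μ) {K : Set M} (hμK : μ Kᶜ = 0) :
    measEntropy f μ ≤ topEntropyOn f K := by
  refine iSup₂_le fun P hP => ?_
  refine le_of_forall_gt_imp_ge_of_dense fun b hb => ?_
  induction b using EReal.rec with
  | bot => exact absurd hb not_lt_bot
  | top => exact le_top
  | coe b =>
  rw [EReal.coe_le_coe_iff]
  refine le_of_forall_pos_le_add fun η hη => ?_
  obtain ⟨ε, hε, h⟩ := refinedInfo_le_sepCount hf hμK hP (half_pos hη)
  have h1 : Filter.atTop.limsup
      (fun n : ℕ => ((Real.log (sepCount f K n ε) / n : ℝ) : EReal)) < b :=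
    lt_of_le_of_lt (le_iSup₂ (f := fun (ε : ℝ) (_ : 0 < ε) => Filter.atTop.limsup
      fun n : ℕ => ((Real.log (sepCount f K n ε) / n : ℝ) : EReal)) ε hε) hb
  have h2 := Filter.eventually_lt_of_limsup_lt h1
  refine Filter.limsup_le_of_le ?_ ?_
  · refine Filter.isCoboundedUnder_le_of_le atTop (x := 0) fun n => ?_
    exact div_nonneg (nonneg_refinedInfo f μ n) (Nat.cast_nonneg n)
  · obtain ⟨N, hN⟩ := exists_nat_gt (2 / η)
    filter_upwards [h2, eventually_ge_atTop (max 1 N)] with n hn hnN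
    rw [EReal.coe_lt_coe_iff] at hn
    have hn1 : (1 : ℝ) ≤ n := by exact_mod_cast (le_max_left _ _).trans hnN
    have hn2 : 2 / η < n := hN.trans_le (by exact_mod_cast (le_max_right _ _).trans hnN)
    have h0 : (0 : ℝ) < n := by linarith
    rw [div_lt_iff₀ h0] at hn
    rw [div_le_iff₀ h0]
    rw [div_lt_iff₀ hη] at hn2
    have := h n
    nlinarith

end Upper

end EFP

namespace EFP

/-! ### Subadditivity and concavity of the entropy of itineraries -/

section Windows

variable {α : Type*} [MeasurableSpace α]

/-- Subadditivity of the entropy of itineraries. -/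
lemma refinedInfo_add_le {P : Finset (Set α)} (hP : IsMeasPartition P) {f : α → α}
    (hf : Measurable f) (σ : Measure α) [IsProbabilityMeasure σ] (m n : ℕ) :
    refinedInfo f σ P (m + n) ≤ refinedInfo f σ P m + refinedInfo f (σ.map f^[m]) P n := by
  obtain ⟨lab, hlab⟩ := exists_label hP
  have hmeas : ∀ (k : ℕ) (a : Fin k → {p // p ∈ P}), MeasurableSet (nameOf f lab k ⁻¹' {a}) :=
    fun k a => by rw [← atom_eq hlab]; exact measurableSet_atom hP hf a
  rw [refinedInfo_eq hlab, refinedInfo_eq hlab, refinedInfo_eq hlab]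
  set p : (Fin m → {p // p ∈ P}) → (Fin n → {p // p ∈ P}) → ℝ := fun a b =>
    σ.real (nameOf f lab m ⁻¹' {a} ∩ f^[m] ⁻¹' (nameOf f lab n ⁻¹' {b})) with hp
  have hB : ∀ b : Fin n → {p // p ∈ P}, MeasurableSet (f^[m] ⁻¹' (nameOf f lab n ⁻¹' {b})) :=
    fun b => (hf.iterate m) (hmeas n b)
  have hsplit : ∀ a b, nameOf f lab (m + n) ⁻¹' {Fin.append a b} =
      nameOf f lab m ⁻¹' {a} ∩ f^[m] ⁻¹' (nameOf f lab n ⁻¹' {b}) := by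
    intro a b
    ext x
    simp only [Set.mem_preimage, Set.mem_singleton_iff, Set.mem_inter_iff, funext_iff, nameOf]
    constructor
    · intro h
      refine ⟨fun i => ?_, fun i => ?_⟩
      · simpa using h (Fin.castAdd n i)
      · have := h (Fin.natAdd m i)
        simp only [Fin.val_natAdd, Fin.append_right] at this
        rw [← this, ← Function.iterate_add_apply, add_comm]
    · rintro ⟨h1, h2⟩ i
      induction i using Fin.addCases with
      | left i => simpa using h1 i
      | right i =>
        simp only [Fin.val_natAdd, Fin.append_right]
        rw [← h2, ← Function.iterate_add_apply, add_comm]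
  have hleft : ∀ a, ∑ b, p a b = σ.real (nameOf f lab m ⁻¹' {a}) := by
    intro a
    have h1 : ∀ b, p a b = (σ.restrict (nameOf f lab m ⁻¹' {a})).real
        ((fun x => nameOf f lab n (f^[m] x)) ⁻¹' {b}) := by
      intro b
      have hB' : MeasurableSet ((fun x => nameOf f lab n (f^[m] x)) ⁻¹' {b}) := hB b
      rw [measureReal_restrict_apply hB', Set.inter_comm]
      rfl
    simp only [h1]
    rw [sum_measureReal_preimage_singleton Finset.univ (fun b _ => hB b)]
    simp [Measure.real]
  have hright : ∀ b, ∑ a, p a b = (σ.map f^[m]).real (nameOf f lab n ⁻¹' {b}) := by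
    intro b
    have h1 : ∀ a, p a b = (σ.restrict (f^[m] ⁻¹' (nameOf f lab n ⁻¹' {b}))).real
        (nameOf f lab m ⁻¹' {a}) := by
      intro a
      rw [measureReal_restrict_apply (hmeas m a)]
    simp only [h1]
    rw [sum_measureReal_preimage_singleton Finset.univ (fun b _ => hmeas m b),
      map_measureReal_apply (hf.iterate m) (hmeas n b)]
    simp [Measure.real]
  have hone : ∑ a, ∑ b, p a b = 1 := by
    simp only [hleft]
    rw [sum_atoms hP hlab hf]; simp
  have := entropy_subadd p (fun a b => measureReal_nonneg) hone
  simp only [hleft, hright] at this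
  refine le_trans (le_of_eq ?_) this
  rw [← (Fin.appendEquiv m n).sum_comp, Fintype.sum_prod_type]
  refine Finset.sum_congr rfl fun a _ => Finset.sum_congr rfl fun b _ => ?_
  simp only [hp]
  rw [← hsplit a b]; rfl

lemma refinedInfo_mul_le {P : Finset (Set α)} (hP : IsMeasPartition P) {f : α → α}
    (hf : Measurable f) (σ : Measure α) [IsProbabilityMeasure σ] (q N : ℕ) :
    refinedInfo f σ P (q * N) ≤ ∑ t ∈ Finset.range N, refinedInfo f (σ.map f^[q * t]) P q := by
  induction N with
  | zero => simpa using refinedInfo_le_card hP hf σ 0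
  | succ N ih =>
    rw [Finset.sum_range_succ, mul_add, mul_one]
    exact (refinedInfo_add_le hP hf σ (q * N) q).trans (by gcongr)

/-- The entropy of a long itinerary is bounded by the entropies of its windows of length `q`. -/
lemma refinedInfo_window {P : Finset (Set α)} (hP : IsMeasPartition P) {f : α → α}
    (hf : Measurable f) (σ : Measure α) [IsProbabilityMeasure σ] (q N n : ℕ)
    (h1 : q * N + q ≤ n) (h2 : n ≤ q * N + 3 * q) :
    q * refinedInfo f σ P n ≤ 4 * q ^ 2 * Real.log P.card +
      ∑ j ∈ Finset.range (q * N), refinedInfo f (σ.map f^[j]) P q := by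
  have hlog : 0 ≤ Real.log P.card := Real.log_natCast_nonneg _
  -- Cut the itinerary into windows of length `q` starting at the phase `i`, then sum over `i < q`.
  have hi : ∀ i ∈ Finset.range q, refinedInfo f σ P n ≤ 4 * q * Real.log P.card +
      ∑ t ∈ Finset.range N, refinedInfo f (σ.map f^[i + q * t]) P q := by
    intro i hi
    rw [Finset.mem_range] at hi
    obtain ⟨r, rfl⟩ : ∃ r, n = i + (q * N + r) := ⟨n - i - q * N, by omega⟩
    have : IsProbabilityMeasure (σ.map f^[i]) :=
      Measure.isProbabilityMeasure_map (hf.iterate i).aemeasurable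
    have : IsProbabilityMeasure ((σ.map f^[i]).map f^[q * N]) :=
      Measure.isProbabilityMeasure_map (hf.iterate _).aemeasurable
    have e1 := refinedInfo_add_le hP hf σ i (q * N + r)
    have e2 := refinedInfo_add_le hP hf (σ.map f^[i]) (q * N) r
    have e3 := refinedInfo_mul_le hP hf (σ.map f^[i]) q N
    have e4 := refinedInfo_le_card hP hf σ i
    have e5 := refinedInfo_le_card hP hf ((σ.map f^[i]).map f^[q * N]) r
    have e6 : ∀ t, (σ.map f^[i]).map f^[q * t] = σ.map f^[i + q * t] := by
      intro t
      rw [Measure.map_map (hf.iterate _) (hf.iterate _), ← Function.iterate_add, add_comm]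
    simp only [e6] at e3
    have hir : ((i : ℝ) + r) ≤ 4 * q := by
      have : i + r ≤ 4 * q := by omega
      exact_mod_cast this
    have : i * Real.log P.card + r * Real.log P.card ≤ 4 * q * Real.log P.card := by
      rw [← add_mul]; gcongr
    linarith
  have hs := Finset.sum_le_sum hi
  rw [Finset.sum_add_distrib, Finset.sum_const, Finset.sum_const, Finset.card_range,
    nsmul_eq_mul, nsmul_eq_mul, ← Finset.sum_product'] at hs
  refine hs.trans (le_of_eq ?_)
  congr 1
  · ring
  · rcases Nat.eq_zero_or_pos q with rfl | hq
    · simp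
    refine Finset.sum_nbij' (fun p => p.1 + q * p.2) (fun j => (j % q, j / q)) ?_ ?_ ?_ ?_ ?_
    · rintro ⟨i, t⟩ h
      simp only [Finset.mem_product, Finset.mem_range] at h ⊢
      have : q * (t + 1) ≤ q * N := Nat.mul_le_mul_left _ h.2
      rw [mul_add, mul_one] at this
      omega
    · intro j h
      simp only [Finset.mem_product, Finset.mem_range] at h ⊢
      exact ⟨Nat.mod_lt _ hq, Nat.div_lt_of_lt_mul h⟩
    · rintro ⟨i, t⟩ h
      simp only [Finset.mem_product, Finset.mem_range] at h ⊢
      simp [Nat.add_mul_mod_self_left, Nat.mod_eq_of_lt h.1, Nat.add_mul_div_left _ _ hq,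
        Nat.div_eq_of_lt h.1]
    · intro j h
      exact Nat.mod_add_div j q
    · rintro ⟨i, t⟩ h; rfl

/-- Concavity of entropy in the measure, for a uniform mean `τ` of the measures `σ i`. -/
lemma refinedInfo_concave {P : Finset (Set α)} (f : α → α) {ι : Type*} (s : Finset ι)
    (hs : s.Nonempty) (σ : ι → Measure α) {τ : Measure α}
    (hτ : ∀ A, MeasurableSet A → τ.real A = (s.card : ℝ)⁻¹ * ∑ i ∈ s, (σ i).real A)
    (hP : IsMeasPartition P) (hf : Measurable f) (q : ℕ) :
    ∑ i ∈ s, refinedInfo f (σ i) P q ≤ s.card * refinedInfo f τ P q := by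
  have hc : (0 : ℝ) < s.card := by exact_mod_cast hs.card_pos
  simp only [refinedInfo]
  rw [Finset.sum_comm, Finset.mul_sum]
  refine Finset.sum_le_sum fun a _ => ?_
  have := Real.concaveOn_negMulLog.le_map_sum (t := s) (w := fun _ => (s.card : ℝ)⁻¹)
    (p := fun i => (σ i (⋂ i : Fin q, f^[(i : ℕ)] ⁻¹' ((a i : Set α)))).toReal)
    (fun _ _ => by positivity) (by simp [hc.ne']) (fun _ _ => ENNReal.toReal_nonneg)
  simp only [smul_eq_mul, ← Finset.mul_sum] at this
  have h2 := hτ _ (measurableSet_atom hP hf a)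
  simp only [Measure.real] at h2
  rw [← h2] at this
  simp only [negMulLog_eq]
  rw [← div_le_iff₀' hc, div_eq_inv_mul]
  exact this

end Windows

/-! ### Partitions with null boundary -/

section NullBoundary

variable {M : Type*} [MetricSpace M] [CompactSpace M] [MeasurableSpace M] [BorelSpace M]

lemma null_frontier_iInter {ι : Type*} [Finite ι] {μ : Measure M} {A : ι → Set M}
    (h : ∀ i, μ (frontier (A i)) = 0) : μ (frontier (⋂ i, A i)) = 0 := by
  classical
  have hsub : frontier (⋂ i, A i) ⊆ ⋃ i, frontier (A i) := by
    intro x hx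
    by_contra hcon
    simp only [Set.mem_iUnion, not_exists] at hcon
    have h1 : ∀ i, x ∈ closure (A i) := fun i => closure_mono (Set.iInter_subset _ i) hx.1
    have h2 : ∀ i, x ∈ interior (A i) := fun i => by
      by_contra h
      exact hcon i ⟨h1 i, h⟩
    refine hx.2 ?_
    rw [interior_iInter_of_finite]
    exact Set.mem_iInter.2 h2
  exact measure_mono_null hsub (measure_iUnion_null h)

/-- A finite partition into sets of small diameter with null boundary, made of balls with null
boundary from which the earlier balls are removed. -/
lemma exists_fine_partition (μ : Measure M) [IsProbabilityMeasure μ] {ε : ℝ} (hε : 0 < ε) :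
    ∃ P : Finset (Set M), IsMeasPartition P ∧
      ∀ p ∈ P, μ (frontier p) = 0 ∧ ∀ a ∈ p, ∀ b ∈ p, dist a b ≤ ε := by
  classical
  have hball : ∀ x : M, ∃ r, 0 < r ∧ r < ε / 2 ∧ μ (frontier (Metric.ball x r)) = 0 := by
    intro x
    obtain ⟨r, hr, h⟩ := exists_null_frontier_thickening μ {x} (half_pos hε)
    rw [Metric.thickening_singleton] at h
    exact ⟨r, hr.1, hr.2, h⟩
  choose r hr0 hr1 hr2 using hball
  obtain ⟨t, -, ht⟩ := isCompact_univ.elim_nhds_subcover (fun x : M => Metric.ball x (r x))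
    (fun x _ => Metric.ball_mem_nhds x (hr0 x))
  set m := t.card
  set e := t.equivFin
  set b : Fin m → Set M := fun i => Metric.ball (e.symm i : M) (r (e.symm i)) with hb
  have hcov : ∀ x : M, ∃ i, x ∈ b i := by
    intro x
    have := ht (Set.mem_univ x)
    simp only [Set.mem_iUnion] at this
    obtain ⟨y, hy, hxy⟩ := this
    exact ⟨e ⟨y, hy⟩, by simpa [hb] using hxy⟩
  set Q : Fin m → Set M := fun i => b i ∩ ⋂ j : {j : Fin m // j < i}, (b j)ᶜ with hQ
  refine ⟨Finset.univ.image Q, ⟨?_, ?_, ?_⟩, ?_⟩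
  · intro p hp
    obtain ⟨i, -, rfl⟩ := Finset.mem_image.1 hp
    exact Metric.isOpen_ball.measurableSet.inter
      (MeasurableSet.iInter fun j => Metric.isOpen_ball.measurableSet.compl)
  · refine Set.eq_univ_of_forall fun x => ?_
    have hne : (Finset.univ.filter fun i => x ∈ b i).Nonempty := by
      obtain ⟨i, hi⟩ := hcov x
      exact ⟨i, by simpa using hi⟩
    set i := (Finset.univ.filter fun i => x ∈ b i).min' hne with hi
    refine ⟨Q i, by simp, ?_, ?_⟩
    · simpa using (Finset.mem_filter.1 (Finset.min'_mem _ hne)).2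
    · refine Set.mem_iInter.2 fun j hj => ?_
      have := Finset.min'_le (Finset.univ.filter fun i => x ∈ b i) j (by simpa using hj)
      exact absurd j.2 (not_lt.2 this)
  · have key : ∀ i j : Fin m, i < j → Disjoint (Q i) (Q j) := by
      intro i j hij
      refine Set.disjoint_left.2 fun x hx hx' => ?_
      exact (Set.mem_iInter.1 hx'.2 ⟨i, hij⟩) hx.1
    intro p hp q hq hpq
    simp only [Finset.coe_image, Finset.coe_univ, Set.image_univ, Set.mem_range] at hp hq
    obtain ⟨i, rfl⟩ := hp
    obtain ⟨j, rfl⟩ := hq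
    rcases lt_trichotomy i j with h | h | h
    · exact key i j h
    · exact absurd (by rw [h]) hpq
    · exact (key j i h).symm
  · intro p hp
    obtain ⟨i, -, rfl⟩ := Finset.mem_image.1 hp
    refine ⟨?_, ?_⟩
    · refine null_frontier_inter (hr2 _) (null_frontier_iInter fun j => ?_)
      rw [frontier_compl]; exact hr2 _
    · intro x hx y hy
      have h1 : dist x (e.symm i : M) < r (e.symm i) := hx.1
      have h2 : dist y (e.symm i : M) < r (e.symm i) := hy.1
      have := dist_triangle_right x y (e.symm i : M)
      have := hr1 (e.symm i : M)
      linarith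

end NullBoundary

end EFP

namespace EFP

/-! ### Averages of measures along orbits of a flow -/

section Averages

variable {M : Type*} [MetricSpace M] [CompactSpace M] [MeasurableSpace M] [BorelSpace M]

lemma iterate_flow (φ : Flow ℝ M) (j : ℕ) (x : M) : (φ.toFun 1)^[j] x = φ.toFun j x := by
  induction j with
  | zero => simpa using (φ.map_zero_apply x).symm
  | succ j ih =>
    rw [Function.iterate_succ_apply', ih, ← φ.map_add]
    congr 1; push_cast; ring

lemma continuous_flow (φ : Flow ℝ M) (t : ℝ) : Continuous (φ.toFun t) :=
  φ.continuous continuous_const continuous_id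

lemma continuous_orbit (φ : Flow ℝ M) (x : M) : Continuous fun t => φ.toFun t x :=
  φ.continuous continuous_id continuous_const

/-- The uniform mean of a finite family of measures. -/
noncomputable def meanMeas {ι : Type*} (s : Finset ι) (σ : ι → Measure M) : Measure M :=
  (s.card : ℝ≥0∞)⁻¹ • ∑ i ∈ s, σ i

lemma meanMeas_real {ι : Type*} (s : Finset ι) (σ : ι → Measure M)
    [∀ i, IsProbabilityMeasure (σ i)] (A : Set M) :
    (meanMeas s σ).real A = (s.card : ℝ)⁻¹ * ∑ i ∈ s, (σ i).real A := by
  simp only [meanMeas, Measure.real, Measure.smul_apply, Measure.finsetSum_apply, smul_eq_mul,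
    ENNReal.toReal_mul, ENNReal.toReal_inv, ENNReal.toReal_natCast]
  rw [ENNReal.toReal_sum (fun i _ => measure_ne_top _ _)]

lemma isProb_meanMeas {ι : Type*} {s : Finset ι} (hs : s.Nonempty) (σ : ι → Measure M)
    [∀ i, IsProbabilityMeasure (σ i)] : IsProbabilityMeasure (meanMeas s σ) := by
  refine ⟨?_⟩
  simp only [meanMeas, Measure.smul_apply, Measure.finsetSum_apply, measure_univ, smul_eq_mul]
  simp only [Finset.sum_const, nsmul_eq_mul, mul_one]
  exact ENNReal.inv_mul_cancel (by simpa using hs.ne_empty) (by simp)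

lemma integrable_of_continuous (μ : Measure M) [IsFiniteMeasure μ] {g : M → ℝ}
    (hg : Continuous g) : Integrable g μ :=
  hg.integrable_of_hasCompactSupport (HasCompactSupport.of_compactSpace g)

lemma integral_meanMeas {ι : Type*} (s : Finset ι) (σ : ι → Measure M)
    [∀ i, IsProbabilityMeasure (σ i)] {g : M → ℝ} (hg : Continuous g) :
    ∫ x, g x ∂(meanMeas s σ) = (s.card : ℝ)⁻¹ * ∑ i ∈ s, ∫ x, g x ∂(σ i) := by
  rw [meanMeas, integral_smul_measure,
    integral_finsetSum_measure (fun i _ => integrable_of_continuous _ hg)]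
  simp

/-- The normalized time spent along the orbit of `x` during `(0, T]`. -/
noncomputable def orbMeas (φ : Flow ℝ M) (T : ℝ) (x : M) : Measure M :=
  (ENNReal.ofReal T)⁻¹ • (volume.restrict (Set.Ioc 0 T)).map fun t => φ.toFun t x

lemma isProb_orbMeas (φ : Flow ℝ M) {T : ℝ} (hT : 0 < T) (x : M) :
    IsProbabilityMeasure (orbMeas φ T x) := by
  refine ⟨?_⟩
  rw [orbMeas, Measure.smul_apply, Measure.map_apply (continuous_orbit φ x).measurable
    MeasurableSet.univ]
  simp only [Set.preimage_univ, Measure.restrict_apply_univ, Real.volume_Ioc, sub_zero,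
    smul_eq_mul]
  exact ENNReal.inv_mul_cancel (by simpa using hT) (by simp)

lemma integral_orbMeas (φ : Flow ℝ M) {T : ℝ} (hT : 0 < T) (x : M) {g : M → ℝ}
    (hg : Continuous g) :
    ∫ y, g y ∂(orbMeas φ T x) = T⁻¹ * ∫ t in (0 : ℝ)..T, g (φ.toFun t x) := by
  rw [orbMeas, integral_smul_measure, integral_map (continuous_orbit φ x).measurable.aemeasurable
    hg.aestronglyMeasurable, intervalIntegral.integral_of_le hT.le]
  simp [hT.le]

/-- Time averages along orbits of `K` converge uniformly to the space average of `μ`. -/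
def UnifAvg (φ : Flow ℝ M) (K : Set M) (μ : Measure M) : Prop :=
  ∀ g : M → ℝ, Continuous g → ∀ ε > 0, ∃ T₀ > 0, ∀ T ≥ T₀, ∀ z ∈ K,
    |T⁻¹ * (∫ t in (0 : ℝ)..T, g (φ.toFun t z)) - ∫ x, g x ∂μ| ≤ ε

/-- The law of the orbit segment of length one starting at a random point of `E`. -/
noncomputable def segMeas (φ : Flow ℝ M) (E : Finset M) : Measure M :=
  meanMeas E (orbMeas φ 1)

/-- The mean of the first `J` images of `segMeas φ E` under the time-one map. -/
noncomputable def segAvg (φ : Flow ℝ M) (E : Finset M) (J : ℕ) : Measure M :=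
  meanMeas (Finset.range J) fun j => (segMeas φ E).map (φ.toFun 1)^[j]

lemma isProb_segMeas (φ : Flow ℝ M) {E : Finset M} (hE : E.Nonempty) :
    IsProbabilityMeasure (segMeas φ E) := by
  have := fun x => isProb_orbMeas φ one_pos x
  exact isProb_meanMeas hE _

lemma integral_segAvg (φ : Flow ℝ M) {E : Finset M} (hE : E.Nonempty) {J : ℕ} (hJ : 0 < J)
    {g : M → ℝ} (hg : Continuous g) :
    ∫ x, g x ∂(segAvg φ E J) =
      (E.card : ℝ)⁻¹ * ∑ x ∈ E, (J : ℝ)⁻¹ * ∫ t in (0 : ℝ)..J, g (φ.toFun t x) := by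
  have := fun x => isProb_orbMeas φ one_pos x
  have := isProb_segMeas φ hE
  have hm : ∀ j, Measurable (φ.toFun 1)^[j] := fun j => (continuous_flow φ 1).measurable.iterate j
  have := fun j => Measure.isProbabilityMeasure_map (μ := segMeas φ E) (hm j).aemeasurable
  have h1 : ∀ j : ℕ, ∫ x, g x ∂((segMeas φ E).map (φ.toFun 1)^[j]) =
      (E.card : ℝ)⁻¹ * ∑ x ∈ E, ∫ t in (j : ℝ)..((j + 1 : ℕ) : ℝ), g (φ.toFun t x) := by
    intro j
    rw [integral_map (hm j).aemeasurable hg.aestronglyMeasurable]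
    simp only [iterate_flow]
    have hgj : Continuous fun x => g (φ.toFun j x) := hg.comp (continuous_flow φ j)
    rw [segMeas, integral_meanMeas _ _ hgj]
    congr 1
    refine Finset.sum_congr rfl fun x _ => ?_
    rw [integral_orbMeas φ one_pos x hgj]
    have := intervalIntegral.integral_comp_add_left (a := 0) (b := 1)
      (fun t => g (φ.toFun t x)) (j : ℝ)
    simp only [← φ.map_add, inv_one, one_mul]
    rw [this]; push_cast; simp
  rw [segAvg, integral_meanMeas _ _ hg]
  simp only [h1]
  rw [← Finset.mul_sum, Finset.sum_comm, ← Finset.mul_sum, Finset.card_range, mul_left_comm]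
  congr 2
  refine Finset.sum_congr rfl fun x _ => ?_
  have := intervalIntegral.sum_integral_adjacent_intervals (μ := volume)
    (f := fun t => g (φ.toFun t x)) (a := fun k : ℕ => (k : ℝ)) (n := J)
    (fun k _ => (hg.comp (continuous_orbit φ x)).intervalIntegrable _ _)
  simpa using this

/-- Atoms of a partition too fine to see two points of a separated set have small mass. -/
lemma log_card_le_refinedInfo (φ : Flow ℝ M) {ε : ℝ} {E : Finset M} (hE : E.Nonempty)
    {n : ℕ} (hsep : IsDynSep (φ.toFun 1) n ε ↑E) {P : Finset (Set M)} (hP : IsMeasPartition P)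
    (hfine : ∀ p ∈ P, ∀ a ∈ p, ∀ b ∈ p, ∀ s ∈ Set.Icc (0 : ℝ) 1,
      dist (φ.toFun (-s) a) (φ.toFun (-s) b) ≤ ε) :
    Real.log E.card ≤ refinedInfo (φ.toFun 1) (segMeas φ E) P (n + 1) := by
  classical
  have := fun x => isProb_orbMeas φ one_pos x
  have := isProb_segMeas φ hE
  have hm : Measurable (φ.toFun 1) := (continuous_flow φ 1).measurable
  have hE0 : (0 : ℝ) < E.card := by exact_mod_cast hE.card_pos
  have hmass : ∀ a : Fin (n + 1) → {p // p ∈ P}, (segMeas φ E).real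
      (⋂ i : Fin (n + 1), (φ.toFun 1)^[(i : ℕ)] ⁻¹' ((a i : Set M))) ≤ (E.card : ℝ)⁻¹ := by
    intro a
    set A := ⋂ i : Fin (n + 1), (φ.toFun 1)^[(i : ℕ)] ⁻¹' ((a i : Set M)) with hA
    have hAm : MeasurableSet A := measurableSet_atom hP hm a
    rw [segMeas, meanMeas_real]
    refine mul_le_of_le_one_right (by positivity) ?_
    have h1 : ∀ x, (orbMeas φ 1 x).real A =
        (volume.restrict (Set.Ioc (0 : ℝ) 1)).real ((fun t => φ.toFun t x) ⁻¹' A ∩ Set.Ioc 0 1) := by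
      intro x
      simp only [orbMeas, Measure.real, ENNReal.ofReal_one, inv_one, one_smul]
      rw [Measure.map_apply (continuous_orbit φ x).measurable hAm,
        Measure.restrict_apply ((continuous_orbit φ x).measurable hAm),
        Measure.restrict_apply (((continuous_orbit φ x).measurable hAm).inter measurableSet_Ioc),
        Set.inter_assoc, Set.inter_self]
    simp only [h1]
    rw [← measureReal_biUnion_finset]
    · refine (measureReal_mono (Set.subset_univ _)).trans ?_
      simp [Measure.real]
    -- Two points of `E` cannot be in the atom at the same time `s ∈ (0, 1]`, since flowing back by
    -- `s` would contradict separation. So the times spent in the atom are disjoint subsets of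
    -- `(0, 1]`.
    · intro x hx y hy hxy
      refine Set.disjoint_left.2 fun s hs hs' => ?_
      obtain ⟨j, hj, hd⟩ := hsep hx hy hxy
      refine absurd hd (not_lt.2 ?_)
      have h2 : ∀ z, s ∈ (fun t => φ.toFun t z) ⁻¹' A → φ.toFun (j + s) z ∈
          ((a ⟨j, Nat.lt_succ_of_le hj⟩ : Set M)) := by
        intro z hz
        have := Set.mem_iInter.1 hz ⟨j, Nat.lt_succ_of_le hj⟩
        simp only [Set.mem_preimage, iterate_flow] at this
        rwa [φ.map_add]
      have h3 := hfine _ (a ⟨j, Nat.lt_succ_of_le hj⟩).2 _ (h2 x hs.1) _ (h2 y hs'.1) s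
        ⟨hs.2.1.le, hs.2.2⟩
      rw [iterate_flow, iterate_flow]
      rw [← φ.map_add, ← φ.map_add] at h3
      simpa using h3
    · intro x _
      exact ((continuous_orbit φ x).measurable hAm).inter measurableSet_Ioc
  obtain ⟨lab, hlab⟩ := exists_label hP
  have hsum : ∑ a : Fin (n + 1) → {p // p ∈ P}, (segMeas φ E).real
      (⋂ i : Fin (n + 1), (φ.toFun 1)^[(i : ℕ)] ⁻¹' ((a i : Set M))) = 1 := by
    simp only [atom_eq hlab]
    rw [sum_atoms hP hlab hm]; simp
  have hlogE := congrArg (· * Real.log E.card) hsum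
  simp only [one_mul, Finset.sum_mul] at hlogE
  refine hlogE.symm.trans_le ?_
  refine Finset.sum_le_sum fun a _ => ?_
  have h1 := hmass a
  simp only [Measure.real] at h1 ⊢
  set p := ((segMeas φ E) (⋂ i : Fin (n + 1), (φ.toFun 1)^[(i : ℕ)] ⁻¹' ((a i : Set M)))).toReal
  have hp : 0 ≤ p := ENNReal.toReal_nonneg
  simp only [EF.negMulLog]
  rw [← mul_neg]
  rcases hp.eq_or_lt with h0 | h0
  · rw [← h0]; simp
  · refine mul_le_mul_of_nonneg_left ?_ hp
    rw [← Real.log_inv]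
    exact Real.log_le_log hE0 ((le_inv_comm₀ hE0 h0).2 h1)

/-- Uniform continuity of the time-`s` maps, uniformly for bounded `s`. -/
lemma flow_unif (φ : Flow ℝ M) (T : ℝ) {ε : ℝ} (hε : 0 < ε) :
    ∃ δ > 0, ∀ s ∈ Set.Icc (-T) T, ∀ a b : M, dist a b ≤ δ →
      dist (φ.toFun s a) (φ.toFun s b) ≤ ε := by
  have hc : Continuous fun p : ℝ × M => φ.toFun p.1 p.2 :=
    φ.continuous continuous_fst continuous_snd
  have hu := (isCompact_Icc.prod (isCompact_univ (X := M))).uniformContinuousOn_of_continuous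
    (s := Set.Icc (-T) T ×ˢ Set.univ) hc.continuousOn
  obtain ⟨δ, hδ, h⟩ := Metric.uniformContinuousOn_iff.1 hu ε hε
  refine ⟨δ / 2, half_pos hδ, fun s hs a b hab => ?_⟩
  refine (h (s, a) ⟨hs, trivial⟩ (s, b) ⟨hs, trivial⟩ ?_).le
  rw [Prod.dist_eq]
  simp only [dist_self]
  rw [max_lt_iff]
  exact ⟨hδ, by linarith⟩

lemma null_frontier_atom (φ : Flow ℝ M) {μ : Measure M} (hinv : FlowInvariant φ μ)
    {P : Finset (Set M)} (hP : ∀ p ∈ P, μ (frontier p) = 0) {n : ℕ}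
    (a : Fin n → {p // p ∈ P}) :
    μ (frontier (⋂ i : Fin n, (φ.toFun 1)^[(i : ℕ)] ⁻¹' ((a i : Set M)))) = 0 := by
  refine null_frontier_iInter fun i => ?_
  have hc : Continuous (φ.toFun 1)^[(i : ℕ)] := (continuous_flow φ 1).iterate i
  refine measure_mono_null (hc.frontier_preimage_subset _) ?_
  rw [((hinv 1).iterate i).measure_preimage isClosed_frontier.measurableSet.nullMeasurableSet]
  exact hP _ (a i).2

/-- Averages along long orbit segments starting in `K` converge weakly to `μ`. -/
lemma tendsto_segAvg (φ : Flow ℝ M) {K : Set M} (μ : ProbabilityMeasure M)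
    (hU : UnifAvg φ K μ) (E : ℕ → Finset M) (hE : ∀ n, (E n).Nonempty) (hEK : ∀ n, ↑(E n) ⊆ K)
    (J : ℕ → ℕ) (hJ : ∀ n, 0 < J n) (hJt : Tendsto J atTop atTop)
    (ν : ℕ → ProbabilityMeasure M) (hν : ∀ n, (ν n : Measure M) = segAvg φ (E n) (J n)) :
    Tendsto ν atTop (𝓝 μ) := by
  rw [ProbabilityMeasure.tendsto_iff_forall_integral_tendsto]
  intro g
  rw [Metric.tendsto_atTop]
  intro ε hε
  obtain ⟨T₀, -, hT⟩ := hU g g.continuous (ε / 2) (half_pos hε)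
  obtain ⟨n₀, hn₀⟩ := Filter.eventually_atTop.1 (hJt.eventually_ge_atTop ⌈T₀⌉₊)
  refine ⟨n₀, fun n hn => ?_⟩
  have hJn : T₀ ≤ J n := (Nat.le_ceil _).trans (by exact_mod_cast hn₀ n hn)
  have hE0 : (0 : ℝ) < (E n).card := by exact_mod_cast (hE n).card_pos
  rw [hν, integral_segAvg φ (hE n) (hJ n) g.continuous, Real.dist_eq]
  refine lt_of_le_of_lt ?_ (half_lt_self hε)
  have h1 : ∫ x, g x ∂(μ : Measure M) =
      ((E n).card : ℝ)⁻¹ * ∑ x ∈ E n, ∫ x, g x ∂(μ : Measure M) := by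
    rw [Finset.sum_const, nsmul_eq_mul]; field_simp
  rw [h1, ← mul_sub, ← Finset.sum_sub_distrib, abs_mul, abs_of_pos (inv_pos.2 hE0)]
  rw [inv_mul_le_iff₀ hE0]
  refine (Finset.abs_sum_le_sum_abs _ _).trans ?_
  rw [← nsmul_eq_mul, ← Finset.sum_const]
  exact Finset.sum_le_sum fun x hx => hT _ hJn x (hEK n hx)

/-- The other half of the variational principle, when the time averages on `K` converge
uniformly to a single measure. -/
lemma topEntropyOn_le_measEntropy (φ : Flow ℝ M) {K : Set M} (hK : K.Nonempty) {μ : Measure M}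
    [IsProbabilityMeasure μ] (hinv : FlowInvariant φ μ) (hU : UnifAvg φ K μ) :
    topEntropyOn (φ.toFun 1) K ≤ measEntropy (φ.toFun 1) μ := by
  classical
  refine iSup₂_le fun ε hε => ?_
  obtain ⟨ε₁, hε₁, hfl⟩ := flow_unif φ 1 hε
  obtain ⟨P, hP, hPf⟩ := exists_fine_partition μ hε₁
  refine le_trans ?_ (le_iSup₂ (f := fun (P : Finset (Set M)) (_ : IsMeasPartition P) =>
    ((partEntropy (φ.toFun 1) μ P : ℝ) : EReal)) P hP)
  have hm : Measurable (φ.toFun 1) := (continuous_flow φ 1).measurable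
  choose E hEK hEs hEc using fun n => exists_card_eq_sepCount (φ.toFun 1) K n hε
  have hEne : ∀ n, (E n).Nonempty := by
    intro n
    obtain ⟨x, hx⟩ := hK
    have := card_le_sepCount (φ.toFun 1) K n hε (Q := {x}) (by simpa using hx)
      (by simp [IsDynSep])
    rw [← hEc, Finset.card_singleton] at this
    exact Finset.card_pos.1 this
  set L := Filter.atTop.limsup
    fun n : ℕ => ((Real.log (sepCount (φ.toFun 1) K n ε) / n : ℝ) : EReal) with hL
  set H : ℕ → ℝ := fun q => refinedInfo (φ.toFun 1) μ P q with hH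
  have hlog : 0 ≤ Real.log P.card := Real.log_natCast_nonneg _
  -- Misiurewicz's argument with windows of length `q`. The first `n + 1` steps contain `N n`
  -- consecutive windows and between `q` and `3 q` further steps; the measure is averaged over `J n`
  -- steps, where the maximum with `1` only excludes an empty mean.
  have main : ∀ q : ℕ, 0 < q → L ≤ ((H q / q : ℝ) : EReal) := by
    intro q hq
    have hq' : (0 : ℝ) < q := by exact_mod_cast hq
    set N : ℕ → ℕ := fun n => (n + 1) / q - 1 with hN
    set J : ℕ → ℕ := fun n => max 1 (q * N n) with hJ
    have hdm : ∀ n, q * ((n + 1) / q) + (n + 1) % q = n + 1 := fun n => Nat.div_add_mod _ _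
    have hmod : ∀ n, (n + 1) % q < q := fun n => Nat.mod_lt _ hq
    have hNJ : ∀ n, 2 * q ≤ n + 1 → q * N n + q ≤ n + 1 ∧ n + 1 ≤ q * N n + 3 * q ∧
        0 < q * N n := by
      intro n hn
      have h2 : 2 ≤ (n + 1) / q := (Nat.le_div_iff_mul_le hq).2 hn
      have h3 : q * N n + q = q * ((n + 1) / q) := by
        have : (n + 1) / q = N n + 1 := by simp only [hN]; omega
        rw [this]; ring
      have := hdm n
      have := hmod n
      refine ⟨by omega, by omega, Nat.mul_pos hq (by simp only [hN]; omega)⟩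
    have hJt : Tendsto J atTop atTop := by
      refine tendsto_atTop.2 fun b => ?_
      filter_upwards [eventually_ge_atTop (b + 3 * q)] with n hn
      have := (hNJ n (by omega)).2.1
      refine le_trans ?_ (le_max_right _ _)
      omega
    have hJ0 : ∀ n, 0 < J n := fun n => lt_of_lt_of_le one_pos (le_max_left _ _)
    have hprob : ∀ n, IsProbabilityMeasure (segAvg φ (E n) (J n)) := by
      intro n
      have := isProb_segMeas φ (hEne n)
      have := fun j => Measure.isProbabilityMeasure_map (μ := segMeas φ (E n))
        (hm.iterate j).aemeasurable
      exact isProb_meanMeas (Finset.nonempty_range_iff.2 (hJ0 n).ne') _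
    set ν : ℕ → ProbabilityMeasure M := fun n => ⟨segAvg φ (E n) (J n), hprob n⟩ with hν
    have hlim := tendsto_segAvg φ ⟨μ, inferInstance⟩ hU E hEne hEK J hJ0 hJt ν (fun n => rfl)
    have hHlim : Tendsto (fun n => refinedInfo (φ.toFun 1) (segAvg φ (E n) (J n)) P q) atTop
        (𝓝 (H q)) := by
      simp only [hH, refinedInfo, negMulLog_eq]
      refine tendsto_finsetSum _ fun a _ => (Real.continuous_negMulLog.tendsto _).comp ?_
      have := ProbabilityMeasure.tendsto_measure_of_null_frontier_of_tendsto' hlim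
        (null_frontier_atom φ hinv (fun p hp => (hPf p hp).1) a)
      exact (ENNReal.tendsto_toReal (measure_ne_top _ _)).comp this
    have hev : ∀ n, 2 * q ≤ n + 1 → q * Real.log (sepCount (φ.toFun 1) K n ε) ≤
        4 * q ^ 2 * Real.log P.card +
          n * refinedInfo (φ.toFun 1) (segAvg φ (E n) (J n)) P q := by
      intro n hn
      obtain ⟨h1, h2, h3⟩ := hNJ n hn
      have hJn : J n = q * N n := max_eq_right h3
      have := isProb_segMeas φ (hEne n)
      have e1 := log_card_le_refinedInfo φ (hEne n) (hEs n) hP (fun p hp a ha b hb s hs =>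
        hfl (-s) ⟨by linarith [hs.2], by linarith [hs.1]⟩ a b ((hPf p hp).2 a ha b hb))
      have e2 := refinedInfo_window hP hm (segMeas φ (E n)) q (N n) (n + 1) h1 h2
      have := fun j => Measure.isProbabilityMeasure_map (μ := segMeas φ (E n))
        (hm.iterate j).aemeasurable
      have e3 := refinedInfo_concave (P := P) (φ.toFun 1) (Finset.range (J n))
        (Finset.nonempty_range_iff.2 (hJ0 n).ne')
        (fun j => (segMeas φ (E n)).map (φ.toFun 1)^[j]) (τ := segAvg φ (E n) (J n))
        (fun A _ => meanMeas_real _ _ _) hP hm q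
      rw [Finset.card_range, hJn] at e3
      rw [hJn]
      have := hprob n
      rw [hJn] at this
      have e4 := nonneg_refinedInfo (P := P) (φ.toFun 1) (segAvg φ (E n) (q * N n)) q
      have e5 : ((q * N n : ℕ) : ℝ) ≤ n := by
        have : q * N n ≤ n := by omega
        exact_mod_cast this
      rw [← hEc]
      nlinarith
    refine le_of_forall_gt_imp_ge_of_dense fun b hb => ?_
    induction b using EReal.rec with
    | bot => exact absurd hb not_lt_bot
    | top => exact le_top
    | coe b =>
    rw [EReal.coe_lt_coe_iff] at hb
    set δ := q * b - H q with hδ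
    have hδ0 : 0 < δ := by rw [div_lt_iff₀ hq'] at hb; linarith
    obtain ⟨N₀, hN₀⟩ := exists_nat_gt (4 * q ^ 2 * Real.log P.card / (δ / 2))
    refine Filter.limsup_le_of_le (by isBoundedDefault) ?_
    filter_upwards [eventually_ge_atTop (N₀ + 2 * q),
      hHlim.eventually_lt_const (show H q < H q + δ / 2 by linarith)] with n hn hn2
    have hn0 : (0 : ℝ) < n := by
      have : 0 < n := by omega
      exact_mod_cast this
    rw [EReal.coe_le_coe_iff, div_le_iff₀ hn0]
    have h1 := hev n (by omega)
    have h2 : 4 * q ^ 2 * Real.log P.card ≤ n * (δ / 2) := by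
      rw [div_lt_iff₀ (half_pos hδ0)] at hN₀
      refine hN₀.le.trans ?_
      have : N₀ ≤ n := by omega
      gcongr
    have h3 : n * refinedInfo (φ.toFun 1) (segAvg φ (E n) (J n)) P q ≤ n * (H q + δ / 2) := by
      gcongr
    have h4 : q * Real.log (sepCount (φ.toFun 1) K n ε) ≤ q * (b * n) := by
      refine (h1.trans (add_le_add h2 h3)).trans (le_of_eq ?_)
      rw [hδ]; ring
    exact le_of_mul_le_mul_left h4 hq'
  by_contra hcon
  rw [not_le] at hcon
  obtain ⟨r, hr1, hr2⟩ := EReal.lt_iff_exists_real_btwn.1 hcon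
  rw [EReal.coe_lt_coe_iff] at hr1
  have hbdd : IsBoundedUnder (· ≤ ·) atTop fun n : ℕ => refinedInfo (φ.toFun 1) μ P n / n := by
    refine Filter.isBoundedUnder_of ⟨Real.log P.card, fun n => ?_⟩
    rcases Nat.eq_zero_or_pos n with rfl | hn
    · simpa using hlog
    · rw [div_le_iff₀ (by exact_mod_cast hn), mul_comm]
      exact refinedInfo_le_card hP hm μ n
  have h1 := Filter.eventually_lt_of_limsup_lt hr1 hbdd
  obtain ⟨q, hq, hq0⟩ := (h1.and (eventually_gt_atTop 0)).exists
  have := (main q hq0).trans (EReal.coe_le_coe_iff.2 hq.le)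
  exact absurd hr2 (not_lt.2 this)

end Averages

end EFP

namespace EFP

/-! ### Unique ergodicity from uniform convergence of time averages -/

section Unique

variable {M : Type*} [MetricSpace M] [CompactSpace M] [MeasurableSpace M] [BorelSpace M]

/-- If all time averages converge uniformly on `K`, their limits are the integrals with respect to
a probability measure: a weak limit of the empirical measures of one orbit. -/
lemma exists_unifAvg (φ : Flow ℝ M) {K : Set M} (hK : K.Nonempty)
    (h : ∀ g : M → ℝ, Continuous g → ∃ I : ℝ, ∀ ε > 0, ∃ T₀ > 0, ∀ T ≥ T₀, ∀ z ∈ K,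
      |T⁻¹ * (∫ t in (0 : ℝ)..T, g (φ.toFun t z)) - I| ≤ ε) :
    ∃ μ : Measure M, IsProbabilityMeasure μ ∧ UnifAvg φ K μ := by
  obtain ⟨z, hz⟩ := hK
  have hpos : ∀ n : ℕ, (0 : ℝ) < n + 1 := fun n => by positivity
  set ν : ℕ → ProbabilityMeasure M := fun n =>
    ⟨orbMeas φ (n + 1) z, isProb_orbMeas φ (hpos n) z⟩ with hν
  set U : Ultrafilter ℕ := Ultrafilter.of atTop
  obtain ⟨μ, hμ⟩ : ∃ μ, Tendsto ν U (𝓝 μ) := ⟨_, (U.map ν).le_nhds_lim⟩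
  refine ⟨μ, inferInstance, fun g hg => ?_⟩
  obtain ⟨I, hI⟩ := h g hg
  have h1 : Tendsto (fun n => ∫ x, g x ∂(ν n : Measure M)) atTop (𝓝 I) := by
    rw [Metric.tendsto_atTop]
    intro ε hε
    obtain ⟨T₀, -, hT⟩ := hI (ε / 2) (half_pos hε)
    refine ⟨⌈T₀⌉₊, fun n hn => ?_⟩
    have hTn : T₀ ≤ (n : ℝ) + 1 := by
      have : T₀ ≤ n := (Nat.le_ceil _).trans (by exact_mod_cast hn)
      linarith
    have := hT _ hTn z hz
    rw [Real.dist_eq, hν]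
    simp only [ProbabilityMeasure.coe_mk]
    rw [integral_orbMeas φ (hpos n) z hg]
    linarith
  have h2 := (ProbabilityMeasure.tendsto_iff_forall_integral_tendsto.1 hμ)
    (BoundedContinuousFunction.mkOfCompact ⟨g, hg⟩)
  have h3 : I = ∫ x, g x ∂(μ : Measure M) :=
    tendsto_nhds_unique (h1.mono_left (Ultrafilter.of_le atTop)) h2
  rw [← h3]
  exact hI

lemma UnifAvg.mono {φ : Flow ℝ M} {K K' : Set M} {μ : Measure M} (h : UnifAvg φ K μ)
    (hK : K' ⊆ K) : UnifAvg φ K' μ := by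
  intro g hg ε hε
  obtain ⟨T₀, h0, hT⟩ := h g hg ε hε
  exact ⟨T₀, h0, fun T hTT z hz => hT T hTT z (hK hz)⟩

lemma measure_ext_of_continuous {μ ν : Measure M} [IsFiniteMeasure μ] [IsFiniteMeasure ν]
    (h : ∀ g : M → ℝ, Continuous g → ∫ x, g x ∂μ = ∫ x, g x ∂ν) : μ = ν :=
  ext_of_forall_integral_eq_of_IsFiniteMeasure fun g => h g g.continuous

lemma UnifAvg.flowInvariant {φ : Flow ℝ M} {K : Set M} {μ : Measure M} [IsProbabilityMeasure μ]
    (h : UnifAvg φ K μ) (hK : K.Nonempty) (hinv : FlowInvSet φ K) : FlowInvariant φ μ := by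
  intro s
  have hm := (continuous_flow φ s).measurable
  refine ⟨hm, ?_⟩
  have := Measure.isProbabilityMeasure_map (μ := μ) hm.aemeasurable
  refine measure_ext_of_continuous fun g hg => ?_
  rw [integral_map hm.aemeasurable hg.aestronglyMeasurable]
  have hgs : Continuous fun x => g (φ.toFun s x) := hg.comp (continuous_flow φ s)
  obtain ⟨z, hz⟩ := hK
  have hz' : φ.toFun s z ∈ K := by rw [← hinv s]; exact ⟨z, hz, rfl⟩
  refine eq_of_forall_dist_le fun ε hε => ?_
  obtain ⟨T₁, -, h1⟩ := h g hg (ε / 2) (half_pos hε)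
  obtain ⟨T₂, -, h2⟩ := h _ hgs (ε / 2) (half_pos hε)
  have e1 := h1 (max T₁ T₂) (le_max_left _ _) _ hz'
  have e2 := h2 (max T₁ T₂) (le_max_right _ _) _ hz
  have e3 : ∀ t, φ.toFun t (φ.toFun s z) = φ.toFun s (φ.toFun t z) := by
    intro t; rw [← φ.map_add, ← φ.map_add, add_comm]
  simp only [e3] at e1
  rw [Real.dist_eq]
  rw [abs_le] at *
  constructor <;> linarith [e1.1, e1.2, e2.1, e2.2]

/-- The distance to `K` has time average zero along the orbits in `K`, hence integral zero. -/
lemma UnifAvg.null_compl {φ : Flow ℝ M} {K : Set M} {μ : Measure M} [IsProbabilityMeasure μ]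
    (h : UnifAvg φ K μ) (hK : K.Nonempty) (hc : IsClosed K) (hinv : FlowInvSet φ K) :
    μ Kᶜ = 0 := by
  have hg : Continuous fun x : M => Metric.infDist x K := Metric.continuous_infDist_pt K
  obtain ⟨z, hz⟩ := hK
  have hzero : ∀ t, Metric.infDist (φ.toFun t z) K = 0 := fun t =>
    Metric.infDist_zero_of_mem (by rw [← hinv t]; exact ⟨z, hz, rfl⟩)
  have h0 : ∫ x, Metric.infDist x K ∂μ = 0 := by
    refine eq_of_forall_dist_le fun ε hε => ?_
    obtain ⟨T, -, h1⟩ := h _ hg ε hε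
    have := h1 T le_rfl z hz
    simp only [hzero] at this
    rw [Real.dist_eq, abs_sub_comm]
    simpa using this
  rw [integral_eq_zero_iff_of_nonneg (fun x => Metric.infDist_nonneg)
    (integrable_of_continuous μ hg)] at h0
  rw [← mem_ae_iff]
  filter_upwards [h0] with x hx
  exact (hc.mem_iff_infDist_zero ⟨z, hz⟩).2 hx

/-- By Fubini, the integral of `g` with respect to `ν` is that of the time average of `g`, which is
nearly constant on `K`. -/
lemma UnifAvg.unique {φ : Flow ℝ M} {K : Set M} {μ ν : Measure M} [IsProbabilityMeasure μ]
    [IsProbabilityMeasure ν] (h : UnifAvg φ K μ) (hν : FlowInvariant φ ν) (hνK : ν Kᶜ = 0) :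
    ν = μ := by
  refine measure_ext_of_continuous fun g hg => ?_
  refine eq_of_forall_dist_le fun ε hε => ?_
  obtain ⟨T, hT0, h1⟩ := h g hg ε hε
  have hcont : Continuous fun p : ℝ × M => g (φ.toFun p.1 p.2) :=
    hg.comp (φ.continuous continuous_fst continuous_snd)
  obtain ⟨C, hC⟩ := isCompact_univ.exists_bound_of_continuousOn hg.continuousOn
  have hint : Integrable (fun p : ℝ × M => g (φ.toFun p.1 p.2))
      ((volume.restrict (Set.Ioc 0 T)).prod ν) := by
    refine Integrable.of_bound hcont.aestronglyMeasurable C (Eventually.of_forall fun p => ?_)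
    exact hC _ trivial
  have e1 : ∀ t, ∫ z, g (φ.toFun t z) ∂ν = ∫ z, g z ∂ν := by
    intro t
    have hi := integral_map (μ := ν) (continuous_flow φ t).measurable.aemeasurable
      (f := g) hg.aestronglyMeasurable
    rw [(hν t).map_eq] at hi
    exact hi.symm
  have e2 : ∫ z, (∫ t in (0 : ℝ)..T, g (φ.toFun t z)) ∂ν = T * ∫ z, g z ∂ν := by
    simp only [intervalIntegral.integral_of_le hT0.le]
    rw [integral_integral_swap (f := fun z t => g (φ.toFun t z)) hint.swap]
    simp only [e1]
    simp [hT0.le]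
  have e3 : ∫ z, g z ∂ν - ∫ x, g x ∂μ =
      ∫ z, (T⁻¹ * (∫ t in (0 : ℝ)..T, g (φ.toFun t z)) - ∫ x, g x ∂μ) ∂ν := by
    have hi2 : Integrable (fun z => ∫ t in (0 : ℝ)..T, g (φ.toFun t z)) ν := by
      simp only [intervalIntegral.integral_of_le hT0.le]
      exact hint.swap.integral_prod_left
    rw [integral_sub (hi2.const_mul _) (integrable_const _), integral_const_mul, e2]
    simp
    field_simp
  rw [Real.dist_eq, e3]
  have hae : ∀ᵐ z ∂ν, ‖T⁻¹ * (∫ t in (0 : ℝ)..T, g (φ.toFun t z)) - ∫ x, g x ∂μ‖ ≤ ε := by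
    have : ∀ᵐ z ∂ν, z ∈ K := by rw [ae_iff]; exact hνK
    filter_upwards [this] with z hz
    exact h1 T le_rfl z hz
  simpa using norm_integral_le_of_norm_le_const hae

lemma UnifAvg.uniquelyErgodic {φ : Flow ℝ M} {K : Set M} {μ : Measure M} [IsProbabilityMeasure μ]
    (h : UnifAvg φ K μ) (hK : K.Nonempty) (hc : IsClosed K) (hinv : FlowInvSet φ K) :
    FlowUniquelyErgodicOn φ K := by
  refine ⟨μ, ⟨inferInstance, h.flowInvariant hK hinv, h.null_compl hK hc hinv⟩, ?_⟩
  rintro ν ⟨h1, h2, h3⟩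
  exact h.unique h2 h3

/-- Conditioning `μ` on an invariant set of positive measure gives an invariant measure, which must
be `μ` itself. -/
lemma UnifAvg.flowErgodic {φ : Flow ℝ M} {K : Set M} {μ : Measure M} [IsProbabilityMeasure μ]
    (h : UnifAvg φ K μ) (hK : K.Nonempty) (hc : IsClosed K) (hinv : FlowInvSet φ K) :
    FlowErgodic φ μ := by
  have hμ := h.flowInvariant hK hinv
  refine ⟨hμ, fun s hs hsi => ?_⟩
  by_cases h0 : μ s = 0
  · exact Or.inl h0
  right
  have hp : IsProbabilityMeasure (ProbabilityTheory.cond μ s) :=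
    ProbabilityTheory.cond_isProbabilityMeasure h0
  have hi : FlowInvariant φ (ProbabilityTheory.cond μ s) := by
    intro t
    have := (hμ t).restrict_preimage hs
    rw [hsi t] at this
    exact this.smul_measure _
  have := h.unique hi (by
    have := h.null_compl hK hc hinv
    exact ProbabilityTheory.cond_absolutelyContinuous this)
  rw [← this]
  exact ProbabilityTheory.cond_apply_self h0 (measure_ne_top _ _)

end Unique

end EFP

namespace EFP

/-! ### Minimal subsets -/

section Minimal

variable {M : Type*} [MetricSpace M] [CompactSpace M]

lemma flowInvSet_of_forall {φ : Flow ℝ M} {A : Set M}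
    (h : ∀ t : ℝ, ∀ z ∈ A, φ.toFun t z ∈ A) : FlowInvSet φ A := by
  intro t
  refine Set.Subset.antisymm ?_ fun z hz => ⟨φ.toFun (-t) z, h _ z hz, ?_⟩
  · rintro _ ⟨z, hz, rfl⟩; exact h t z hz
  · rw [← φ.map_add]; simp

lemma FlowInvSet_mem {φ : Flow ℝ M} {A : Set M} (h : FlowInvSet φ A) (t : ℝ) {z : M}
    (hz : z ∈ A) : φ.toFun t z ∈ A := by
  rw [← h t]; exact ⟨z, hz, rfl⟩

/-- By Zorn's lemma, a nonempty closed invariant set contains a minimal one. -/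
lemma exists_minimal (φ : Flow ℝ M) {K : Set M} (hK : K.Nonempty) (hc : IsClosed K)
    (hinv : FlowInvSet φ K) :
    ∃ K' ⊆ K, K'.Nonempty ∧ IsClosed K' ∧ FlowInvSet φ K' ∧ FlowMinimalOn φ K' := by
  set S : Set (Set M) := {A | A ⊆ K ∧ A.Nonempty ∧ IsClosed A ∧ FlowInvSet φ A} with hS
  obtain ⟨m, hm⟩ : ∃ m, Minimal (· ∈ S) m := by
    refine zorn_superset S fun c hcS hchain => ?_
    rcases c.eq_empty_or_nonempty with rfl | hne
    · exact ⟨K, ⟨subset_rfl, hK, hc, hinv⟩, by simp⟩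
    refine ⟨⋂₀ c, ⟨?_, ?_, ?_, ?_⟩, fun s hs => Set.sInter_subset_of_mem hs⟩
    · obtain ⟨s, hs⟩ := hne
      exact (Set.sInter_subset_of_mem hs).trans (hcS hs).1
    · have : Nonempty c := hne.to_subtype
      exact IsCompact.nonempty_sInter_of_directed_nonempty_isCompact_isClosed
        (fun s hs s' hs' => (hchain.total hs hs').elim (fun h => ⟨s, hs, subset_rfl, h⟩)
          fun h => ⟨s', hs', h, subset_rfl⟩)
        (fun s hs => (hcS hs).2.1) (fun s hs => (hcS hs).2.2.1.isCompact)
        (fun s hs => (hcS hs).2.2.1)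
    · exact isClosed_sInter fun s hs => (hcS hs).2.2.1
    · refine flowInvSet_of_forall fun t z hz s hs => ?_
      exact FlowInvSet_mem (hcS hs).2.2.2 t (hz s hs)
  obtain ⟨h1, h2, h3, h4⟩ := hm.prop
  refine ⟨m, h1, h2, h3, h4, fun A hA hAne hAc hAi => ?_⟩
  exact Set.Subset.antisymm hA (hm.le_of_le ⟨hA.trans h1, hAne, hAc, hAi⟩ hA)

end Minimal

end EFP

namespace EFP

/-! ### Windows and Birkhoff sums on the full shift -/

section Symbolic

variable {B : Type}

/-- The shift by `a ∈ ℤ`. -/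
def sh (a : ℤ) (x : ℤ → B) : ℤ → B := fun i => x (i + a)

/-- The word of length `L` read in `x` from position `a` on. -/
def win (L : ℕ) (x : ℤ → B) (a : ℤ) : Fin L → B := fun i => x (a + (i : ℕ))

/-- The Birkhoff sum of length `n`. -/
noncomputable def bs (G : (ℤ → B) → ℝ) (n : ℕ) (x : ℤ → B) : ℝ :=
  ∑ k ∈ Finset.range n, G (sh k x)

lemma sh_sh (a b : ℤ) (x : ℤ → B) : sh a (sh b x) = sh (a + b) x := by
  funext i; simp only [sh]; congr 1; ring

@[simp] lemma sh_zero (x : ℤ → B) : sh 0 x = x := by funext i; simp [sh]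

lemma win_sh (L : ℕ) (x : ℤ → B) (a b : ℤ) : win L (sh b x) a = win L x (a + b) := by
  funext i; simp only [win, sh]; congr 1; ring

lemma bs_zero (G : (ℤ → B) → ℝ) (x : ℤ → B) : bs G 0 x = 0 := by simp [bs]

lemma bs_add (G : (ℤ → B) → ℝ) (m n : ℕ) (x : ℤ → B) :
    bs G (m + n) x = bs G m x + bs G n (sh m x) := by
  simp only [bs, Finset.sum_range_add, sh_sh]
  congr 1
  refine Finset.sum_congr rfl fun k _ => ?_
  congr 2; push_cast; ring

lemma bs_succ (G : (ℤ → B) → ℝ) (n : ℕ) (x : ℤ → B) :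
    bs G (n + 1) x = bs G n x + G (sh n x) := by
  simp [bs, Finset.sum_range_succ]

lemma bs_mul (G : (ℤ → B) → ℝ) (m L : ℕ) (x : ℤ → B) :
    bs G (m * L) x = ∑ i ∈ Finset.range m, bs G L (sh ((i * L : ℕ) : ℤ) x) := by
  induction m with
  | zero => simp [bs]
  | succ m ih => rw [Finset.sum_range_succ, ← ih, add_mul, one_mul, bs_add]

lemma abs_bs_le {G : (ℤ → B) → ℝ} {C : ℝ} (hC : ∀ x, |G x| ≤ C) (n : ℕ) (x : ℤ → B) :
    |bs G n x| ≤ n * C := by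
  refine (Finset.abs_sum_le_sum_abs _ _).trans ?_
  refine (Finset.sum_le_sum fun k _ => hC _).trans ?_
  simp

lemma bs_le {G : (ℤ → B) → ℝ} {C : ℝ} (hC : ∀ x, G x ≤ C) (n : ℕ) (x : ℤ → B) :
    bs G n x ≤ n * C := by
  refine (Finset.sum_le_sum fun k _ => hC _).trans ?_
  simp

lemma le_bs {G : (ℤ → B) → ℝ} {C : ℝ} (hC : ∀ x, C ≤ G x) (n : ℕ) (x : ℤ → B) :
    n * C ≤ bs G n x := by
  refine le_trans ?_ (Finset.sum_le_sum fun k _ => hC _)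
  simp

/-- A point reading the word `w` from position `0` on. -/
lemma exists_win {L : ℕ} (hL : 0 < L) (w : Fin L → B) :
    ∃ x : ℤ → B, ∀ j : ℤ, win L x (j * L) = w := by
  have hL' : (0 : ℤ) < L := by exact_mod_cast hL
  refine ⟨fun i => w ⟨(i % L).toNat, ?_⟩, fun j => ?_⟩
  · have h1 := Int.emod_lt_of_pos i hL'
    have h2 := Int.emod_nonneg i hL'.ne'
    omega
  · funext i
    simp only [win]
    congr 1
    ext
    have : (j * L + (i : ℕ) : ℤ) % L = (i : ℕ) := by
      rw [add_comm, Int.add_mul_emod_self_right]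
      exact Int.emod_eq_of_lt (by positivity) (by exact_mod_cast i.2)
    simp [this]

variable [Fintype B] [MetricSpace B]

lemma continuous_sh (a : ℤ) : Continuous (sh a : (ℤ → B) → ℤ → B) :=
  continuous_pi fun i => continuous_apply (i + a)

/-- Pairs of points agreeing on a large window avoid any closed set disjoint from the
diagonal. -/
lemma agree_compact {C : Set ((ℤ → B) × (ℤ → B))} (hC : IsClosed C) (hd : ∀ x, (x, x) ∉ C) :
    ∃ p : ℕ, ∀ x x' : ℤ → B, (∀ i : ℤ, |i| ≤ p → x i = x' i) → (x, x') ∉ C := by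
  by_contra! hcon
  set V : ℕ → Set ((ℤ → B) × (ℤ → B)) := fun p =>
    C ∩ {q | ∀ i : ℤ, |i| ≤ p → q.1 i = q.2 i} with hV
  have hcl : ∀ p, IsClosed (V p) := by
    intro p
    refine hC.inter ?_
    simp only [Set.ofPred_forall]
    refine isClosed_iInter fun i => isClosed_iInter fun _ => ?_
    exact isClosed_eq ((continuous_apply i).comp continuous_fst)
      ((continuous_apply i).comp continuous_snd)
  have hne := IsCompact.nonempty_iInter_of_sequence_nonempty_isCompact_isClosed V
    (fun n q hq => ⟨hq.1, fun i hi => hq.2 i (hi.trans (by push_cast; linarith))⟩)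
    (fun n => by
      obtain ⟨x, x', h1, h2⟩ := hcon n
      exact ⟨(x, x'), h2, h1⟩) (hcl 0).isCompact hcl
  obtain ⟨⟨x, x'⟩, hx⟩ := hne
  rw [Set.mem_iInter] at hx
  have : x = x' := by
    funext i
    exact (hx i.natAbs).2 i (by simp)
  subst this
  exact hd x (hx 0).1

lemma exists_bound {G : (ℤ → B) → ℝ} (hG : Continuous G) : ∃ C, 0 ≤ C ∧ ∀ x, |G x| ≤ C := by
  obtain ⟨C, hC⟩ := isCompact_univ.exists_bound_of_continuousOn hG.continuousOn
  exact ⟨max C 0, le_max_right _ _, fun x => (hC x trivial).trans (le_max_left _ _)⟩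

lemma exists_osc {G : (ℤ → B) → ℝ} (hG : Continuous G) {ε : ℝ} (hε : 0 < ε) :
    ∃ p : ℕ, ∀ x x' : ℤ → B, (∀ i : ℤ, |i| ≤ p → x i = x' i) → |G x - G x'| ≤ ε := by
  obtain ⟨p, hp⟩ := agree_compact (B := B) (C := {q | ε ≤ |G q.1 - G q.2|})
    (isClosed_le continuous_const
      ((hG.comp continuous_fst).sub (hG.comp continuous_snd)).abs) (fun x => by simp [hε])
  exact ⟨p, fun x x' h => (not_le.1 (hp x x' h)).le⟩

/-- The Birkhoff sum of a continuous function over a long word is determined, up to a small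
relative error, by the word. -/
lemma exists_bs_osc {G : (ℤ → B) → ℝ} (hG : Continuous G) {ε : ℝ} (hε : 0 < ε) :
    ∃ L₀ : ℕ, ∀ L ≥ L₀, ∀ x x' : ℤ → B, win L x 0 = win L x' 0 →
      |bs G L x - bs G L x'| ≤ ε * L := by
  classical
  obtain ⟨C, hC0, hC⟩ := exists_bound hG
  obtain ⟨p, hp⟩ := exists_osc hG (half_pos hε)
  obtain ⟨L₀, hL₀⟩ := exists_nat_gt (4 * p * C / (ε / 2))
  refine ⟨L₀, fun L hL x x' hw => ?_⟩
  rw [div_lt_iff₀ (half_pos hε)] at hL₀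
  have hLL : (L₀ : ℝ) ≤ L := by exact_mod_cast hL
  have hterm : ∀ k ∈ Finset.range L, |G (sh k x) - G (sh k x')| ≤
      ε / 2 + ((if k < p then 2 * C else 0) + (if L ≤ k + p then 2 * C else 0)) := by
    intro k hk
    rw [Finset.mem_range] at hk
    have h2C : |G (sh k x) - G (sh k x')| ≤ 2 * C := by
      have h1 := hC (sh k x)
      have h2 := hC (sh k x')
      rw [abs_le] at *
      constructor <;> linarith
    by_cases h1 : k < p
    · rw [if_pos h1]; split_ifs <;> linarith
    by_cases h2 : L ≤ k + p
    · rw [if_pos h2]; split_ifs <;> linarith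
    rw [if_neg h1, if_neg h2]
    have := hp (sh k x) (sh k x') (fun i hi => by
      rw [abs_le] at hi
      have hlt : (i + k).toNat < L := by omega
      have h3 := congrFun hw ⟨(i + k).toNat, hlt⟩
      simp only [win, zero_add] at h3
      rw [Int.toNat_of_nonneg (by omega)] at h3
      exact h3)
    linarith
  have hcount1 : ∑ k ∈ Finset.range L, (if k < p then 2 * C else 0) ≤ p * (2 * C) := by
    rw [← Finset.sum_filter, Finset.sum_const, nsmul_eq_mul]
    have : ((Finset.range L).filter (· < p)).card ≤ p := by
      refine (Finset.card_le_card (t := Finset.range p) fun k hk => ?_).trans_eq (by simp)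
      simpa using (Finset.mem_filter.1 hk).2
    gcongr
  have hcount2 : ∑ k ∈ Finset.range L, (if L ≤ k + p then 2 * C else 0) ≤ p * (2 * C) := by
    rw [← Finset.sum_filter, Finset.sum_const, nsmul_eq_mul]
    have : ((Finset.range L).filter (fun k => L ≤ k + p)).card ≤ p := by
      refine (Finset.card_le_card (t := Finset.Ico (L - p) L) fun k hk => ?_).trans ?_
      · rw [Finset.mem_filter, Finset.mem_range] at hk
        rw [Finset.mem_Ico]; omega
      · rw [Nat.card_Ico]; omega
    gcongr
  simp only [bs]
  rw [← Finset.sum_sub_distrib]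
  refine (Finset.abs_sum_le_sum_abs _ _).trans ((Finset.sum_le_sum hterm).trans ?_)
  rw [Finset.sum_add_distrib, Finset.sum_add_distrib, Finset.sum_const, Finset.card_range,
    nsmul_eq_mul]
  nlinarith

end Symbolic

end EFP

namespace EFP

/-! ### Refining a family of words -/

section Stages

variable {B : Type}

/-- Concatenation of `m` words of length `L`. -/
def cat {L m : ℕ} (hL : 0 < L) (u : Fin m → Fin L → B) : Fin (m * L) → B := fun k =>
  u ⟨k / L, Nat.div_lt_of_lt_mul (lt_of_lt_of_eq k.2 (mul_comm _ _))⟩ ⟨k % L, Nat.mod_lt _ hL⟩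

lemma win_eq_cat {L m : ℕ} (hL : 0 < L) (u : Fin m → Fin L → B) (x : ℤ → B) :
    win (m * L) x 0 = cat hL u ↔ ∀ i : Fin m, win L x ((i * L : ℕ) : ℤ) = u i := by
  constructor
  · intro h i
    funext j
    have hlt : (i : ℕ) * L + j < m * L := by
      have := i.2
      have := j.2
      nlinarith
    have h1 := congrFun h ⟨i * L + j, hlt⟩
    have e1 : ((i : ℕ) * L + j) / L = i := by
      rw [mul_comm, Nat.mul_add_div hL, Nat.div_eq_of_lt j.2, add_zero]
    have e2 : ((i : ℕ) * L + j) % L = j := by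
      rw [mul_comm, Nat.mul_add_mod, Nat.mod_eq_of_lt j.2]
    simp only [win, cat, e1, e2, zero_add] at h1
    simp only [win]
    rw [← h1]
    congr 1
  · intro h
    funext k
    have hk : (k : ℕ) / L < m := Nat.div_lt_of_lt_mul (lt_of_lt_of_eq k.2 (mul_comm _ _))
    have h1 := congrFun (h ⟨k / L, hk⟩) ⟨k % L, Nat.mod_lt _ hL⟩
    simp only [win, cat, zero_add] at h1 ⊢
    rw [← h1]
    congr 1
    have := Nat.div_add_mod' (k : ℕ) L
    exact_mod_cast this.symm

lemma cat_injective {L m : ℕ} (hL : 0 < L) :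
    Function.Injective (cat hL : (Fin m → Fin L → B) → _) := by
  intro u v h
  rcases Nat.eq_zero_or_pos m with rfl | hm
  · exact Subsingleton.elim _ _
  obtain ⟨x, hx⟩ := exists_win (Nat.mul_pos hm hL) (cat hL u)
  have hx0 : win (m * L) x 0 = cat hL u := by simpa using hx 0
  have h1 := (win_eq_cat hL u x).1 hx0
  have h2 := (win_eq_cat hL v x).1 (hx0.trans h)
  funext i
  rw [← h1 i, h2 i]

/-- A family `W` of words of a common length `L` over which the roof function `ρ` sums to at
most `T`, and whose exponential growth rate per unit of flow time exceeds `c`. -/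
structure Stage (ρ : (ℤ → B) → ℝ) (c : ℝ) where
  L : ℕ
  hL : 0 < L
  W : Finset (Fin L → B)
  hW : W.Nonempty
  T : ℝ
  hT : ∀ x, win L x 0 ∈ W → bs ρ L x ≤ T
  hc : c * T < Real.log W.card

/-- `s'` consists of concatenations of words of `s`, each using every word of `s`, all with the
same number of occurrences of each word of `s`; the rate of `s'` is essentially `c`. -/
structure Refines {ρ : (ℤ → B) → ℝ} {c : ℝ} (s s' : Stage ρ c) (m : ℕ) : Prop where
  two_le : 2 ≤ m
  len : s'.L = m * s.L
  sub : ∀ x, win s'.L x 0 ∈ s'.W → ∀ i : Fin m, win s.L x ((i * s.L : ℕ) : ℤ) ∈ s.W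
  occ : ∀ x, win s'.L x 0 ∈ s'.W → ∀ w ∈ s.W, ∃ i : Fin m, win s.L x ((i * s.L : ℕ) : ℤ) = w
  typ : ∀ x y, win s'.L x 0 ∈ s'.W → win s'.L y 0 ∈ s'.W → ∀ F : (Fin s.L → B) → ℝ,
    ∑ i : Fin m, F (win s.L x ((i * s.L : ℕ) : ℤ)) = ∑ i : Fin m, F (win s.L y ((i * s.L : ℕ) : ℤ))
  card_le : Real.log s'.W.card ≤ c * s'.T + Real.log 2
  time_le : ∀ ε : ℝ, (∀ y y', win s.L y 0 = win s.L y' 0 → |bs ρ s.L y - bs ρ s.L y'| ≤ ε * s.L) →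
    ∀ x, win s'.L x 0 ∈ s'.W → s'.T ≤ bs ρ s'.L x + ε * s'.L

lemma exists_large_power {δ D E : ℝ} (hδ : 0 < δ) (hD : 0 ≤ D) (hE : 0 ≤ E) :
    ∃ m : ℕ, D * Real.log (m + 1) + E ≤ m * δ := by
  obtain ⟨k, hk⟩ := exists_nat_gt ((2 * D + E + δ) / δ)
  rw [div_lt_iff₀ hδ] at hk
  have hk1 : (1 : ℝ) ≤ k := by
    have : 0 < (k : ℝ) := by
      by_contra h
      nlinarith
    exact_mod_cast (Nat.cast_pos.1 this)
  have hk' : 1 ≤ k ^ 2 := by exact_mod_cast (one_le_pow₀ hk1 : (1 : ℝ) ≤ (k : ℝ) ^ 2)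
  refine ⟨k ^ 2 - 1, ?_⟩
  rw [Nat.cast_sub hk']
  push_cast
  rw [sub_add_cancel, Real.log_pow]
  have h1 := Real.log_le_self (x := (k : ℝ)) (by positivity)
  push_cast
  have h2 : D * (2 * Real.log k) ≤ D * (2 * k) := by gcongr
  nlinarith

/-- Every stage has a refinement. Its words begin with a prefix listing the words of `s` once each,
followed by `m'` further words of `s` with a prescribed vector `t` of occurrence numbers. The
vector is chosen by pigeonhole: there are only polynomially many vectors, so some `t` admits more
than `exp (c T')` sequences, of which exactly `⌊exp (c T')⌋ + 1` are kept. -/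
lemma exists_refines {ρ : (ℤ → B) → ℝ} (hρ : ∀ x, 0 ≤ ρ x) {c : ℝ} (hc0 : 0 ≤ c)
    (s : Stage ρ c) : ∃ (s' : Stage ρ c) (m : ℕ), Refines s s' m := by
  classical
  obtain ⟨L, hL, W, hW, T, hT, hc⟩ := s
  -- the longest time the flow can spend over the word `w`
  set τ : (Fin L → B) → ℝ := fun w => sSup {r | ∃ x, win L x 0 = w ∧ bs ρ L x = r} with hτ
  have hbdd : ∀ w ∈ W, BddAbove {r | ∃ x, win L x 0 = w ∧ bs ρ L x = r} := by
    rintro w hw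
    exact ⟨T, by rintro r ⟨x, rfl, rfl⟩; exact hT x hw⟩
  have hne : ∀ w, {r | ∃ x, win L x 0 = w ∧ bs ρ L x = r}.Nonempty := by
    intro w
    obtain ⟨x, hx⟩ := exists_win hL w
    exact ⟨_, x, by simpa using hx 0, rfl⟩
  have hτT : ∀ w ∈ W, τ w ≤ T := by
    intro w hw
    exact csSup_le (hne w) (by rintro r ⟨x, rfl, rfl⟩; exact hT x hw)
  have hleτ : ∀ x, win L x 0 ∈ W → bs ρ L x ≤ τ (win L x 0) := fun x hx =>
    le_csSup (hbdd _ hx) ⟨x, rfl, rfl⟩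
  have hbs0 : ∀ x, 0 ≤ bs ρ L x := fun x => by simpa using le_bs hρ L x
  have hτ0 : ∀ w ∈ W, 0 ≤ τ w := by
    intro w hw
    obtain ⟨r, x, rfl, rfl⟩ := hne w
    exact (hbs0 x).trans (hleτ x hw)
  have hT0 : 0 ≤ T := by
    obtain ⟨w, hw⟩ := hW
    exact (hτ0 w hw).trans (hτT w hw)
  set D : ℕ := W.card with hD
  have hDpos : 0 < D := Finset.card_pos.2 hW
  have hD2 : 2 ≤ D := by
    by_contra h
    have : D = 1 := by omega
    rw [this] at hc
    simp at hc
    nlinarith [mul_nonneg hc0 hT0]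
  have hlog2 : 0 ≤ Real.log 2 := Real.log_nonneg (by norm_num)
  obtain ⟨m', hm'⟩ := exists_large_power (δ := Real.log D - c * T) (D := D)
    (E := c * T * D + Real.log 2) (by linarith) (by positivity) (by positivity)
  -- a popular vector of occurrence numbers
  let cnt : (Fin m' → W) → (W → Fin (m' + 1)) := fun v w =>
    ⟨(Finset.univ.filter fun j => v j = w).card, Nat.lt_succ_of_le
      ((Finset.card_le_univ _).trans_eq (by simp))⟩
  obtain ⟨t, -, ht⟩ := Finset.exists_le_card_fiber_of_nsmul_le_card_of_maps_to
    (s := (Finset.univ : Finset (Fin m' → W))) (t := Finset.univ) (f := cnt)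
    (b := (D : ℝ) ^ m' / ((m' : ℝ) + 1) ^ D) (fun _ _ => Finset.mem_univ _)
    ⟨fun _ => 0, Finset.mem_univ _⟩ (by
      simp only [Finset.card_univ, Fintype.card_fun, Fintype.card_fin, Fintype.card_coe]
      rw [nsmul_eq_mul]
      push_cast
      rw [mul_div_cancel₀]
      positivity)
  set T' : ℝ := ∑ w : W, τ w + ∑ w : W, ((t w : ℕ) : ℝ) * τ w with hT'
  have hsumF : ∀ (F : W → ℝ) (v : Fin m' → W), cnt v = t →
      ∑ j, F (v j) = ∑ w : W, ((t w : ℕ) : ℝ) * F w := by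
    intro F v hv
    rw [← Finset.sum_fiberwise Finset.univ v (fun j => F (v j))]
    refine Finset.sum_congr rfl fun w _ => ?_
    rw [← hv]
    rw [Finset.sum_congr rfl (g := fun _ => F w) (fun j hj => by
      rw [(Finset.mem_filter.1 hj).2])]
    simp [cnt]
  have hT'0 : 0 ≤ T' := by
    refine add_nonneg (Finset.sum_nonneg fun w _ => hτ0 _ w.2)
      (Finset.sum_nonneg fun w _ => mul_nonneg (by positivity) (hτ0 _ w.2))
  have hfib_pos : 0 < (D : ℝ) ^ m' / ((m' : ℝ) + 1) ^ D := by positivity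
  obtain ⟨v₀, hv₀⟩ : ∃ v₀, cnt v₀ = t := by
    have : (0 : ℝ) < (Finset.univ.filter fun v => cnt v = t).card := hfib_pos.trans_le ht
    obtain ⟨v₀, h⟩ := Finset.card_pos.1 (Nat.cast_pos.1 this)
    exact ⟨v₀, (Finset.mem_filter.1 h).2⟩
  have hT'le : T' ≤ T * D + T * m' := by
    rw [hT', ← hsumF (fun w => τ w) v₀ hv₀]
    have h1 : ∑ w : W, τ w ≤ ∑ w : W, T := Finset.sum_le_sum fun w _ => hτT _ w.2
    have h2 : ∑ j, τ (v₀ j) ≤ ∑ j : Fin m', T := Finset.sum_le_sum fun j _ => hτT _ (v₀ j).2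
    rw [Finset.sum_const, Finset.card_univ, Fintype.card_coe, nsmul_eq_mul] at h1
    rw [Finset.sum_const, Finset.card_univ, Fintype.card_fin, nsmul_eq_mul] at h2
    linarith
  -- exactly as many words as the rate `c` allows
  set N : ℕ := ⌊Real.exp (c * T')⌋₊ + 1 with hN
  have hexp1 : 1 ≤ Real.exp (c * T') := Real.one_le_exp (mul_nonneg hc0 hT'0)
  have hNle : (N : ℝ) ≤ 2 * Real.exp (c * T') := by
    have := Nat.floor_le (Real.exp_pos (c * T')).le
    rw [hN]; push_cast; linarith
  have hNlt : Real.exp (c * T') < N := by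
    rw [hN]; push_cast; exact Nat.lt_floor_add_one _
  have hNpos : (0 : ℝ) < N := (Real.exp_pos _).trans hNlt
  have hNfib : N ≤ (Finset.univ.filter fun v => cnt v = t).card := by
    have : (N : ℝ) ≤ (D : ℝ) ^ m' / ((m' : ℝ) + 1) ^ D := by
      refine hNle.trans ?_
      rw [← Real.log_le_log_iff (by positivity) hfib_pos, Real.log_mul (by norm_num)
        (Real.exp_pos _).ne', Real.log_exp, Real.log_div (by positivity) (by positivity),
        Real.log_pow, Real.log_pow]
      have := mul_le_mul_of_nonneg_left hT'le hc0
      nlinarith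
    exact_mod_cast this.trans ht
  obtain ⟨V, hVsub, hVcard⟩ := Finset.exists_subset_card_eq hNfib
  have hVcnt : ∀ v ∈ V, cnt v = t := fun v hv => (Finset.mem_filter.1 (hVsub hv)).2
  -- The prefix `en` enumerates `W`, so that every new word contains every old one.
  let en : Fin D ≃ W := (Fintype.equivFinOfCardEq (by simp [hD])).symm
  let bl : (Fin m' → W) → Fin (D + m') → (Fin L → B) := fun v i => (Fin.append en v i : W)
  have hblinj : Function.Injective bl := by
    intro v v' h
    funext j
    have := congrFun h (Fin.natAdd D j)
    simp only [bl, Fin.append_right] at this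
    exact Subtype.ext this
  set W' : Finset (Fin ((D + m') * L) → B) := V.image fun v => cat hL (bl v) with hW'
  have hW'card : W'.card = N := by
    rw [hW', Finset.card_image_of_injective _ (fun v v' h => hblinj (cat_injective hL h)), hVcard]
  have hmem : ∀ x, win ((D + m') * L) x 0 ∈ W' → ∃ v ∈ V, ∀ i : Fin (D + m'),
      win L x ((i * L : ℕ) : ℤ) = bl v i := by
    intro x hx
    obtain ⟨v, hv, hvx⟩ := Finset.mem_image.1 hx
    exact ⟨v, hv, (win_eq_cat hL _ x).1 hvx.symm⟩
  have hblsum : ∀ (F : (Fin L → B) → ℝ), ∀ v ∈ V, ∑ i, F (bl v i) =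
      ∑ w : W, F w + ∑ w : W, ((t w : ℕ) : ℝ) * F w := by
    intro F v hv
    rw [Fin.sum_univ_add, ← hsumF (fun w => F w) v (hVcnt v hv)]
    congr 1
    · simp only [bl, Fin.append_left]
      exact Equiv.sum_comp en (fun w : W => F w)
    · simp only [bl, Fin.append_right]
  have hblW : ∀ v i, bl v i ∈ W := fun v i => (Fin.append en v i).2
  have hbsum : ∀ x, bs ρ ((D + m') * L) x = ∑ i : Fin (D + m'), bs ρ L (sh ((i * L : ℕ) : ℤ) x) :=
    fun x => by rw [bs_mul, Finset.sum_range]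
  have hwin0 : ∀ (x : ℤ → B) (a : ℤ), win L (sh a x) 0 = win L x a := fun x a => by rw [win_sh, zero_add]
  refine ⟨⟨(D + m') * L, by positivity, W', ?_, T', ?_, ?_⟩, D + m', ?_⟩
  · rw [← Finset.card_pos, hW'card]; omega
  · intro x hx
    obtain ⟨v, hv, hvx⟩ := hmem x hx
    rw [hT', ← hblsum τ v hv, hbsum]
    refine Finset.sum_le_sum fun i _ => ?_
    rw [← hvx i, ← hwin0]
    refine hleτ _ ?_
    rw [hwin0, hvx]
    exact hblW v i
  · rw [hW'card, ← Real.log_exp (c * T')]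
    exact Real.log_lt_log (Real.exp_pos _) hNlt
  refine ⟨by omega, rfl, ?_, ?_, ?_, ?_, ?_⟩
  · intro x hx i
    obtain ⟨v, hv, hvx⟩ := hmem x hx
    exact (hvx i).symm ▸ hblW v i
  · intro x hx w hw
    obtain ⟨v, hv, hvx⟩ := hmem x hx
    refine ⟨Fin.castAdd m' (en.symm ⟨w, hw⟩), ?_⟩
    refine (hvx _).trans ?_
    simp [bl]
  · intro x y hx hy F
    obtain ⟨v, hv, hvx⟩ := hmem x hx
    obtain ⟨v', hv', hvy⟩ := hmem y hy
    have e1 : ∀ i : Fin (D + m'), F (win L x ((i * L : ℕ) : ℤ)) = F (bl v i) :=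
      fun i => congrArg F (hvx i)
    have e2 : ∀ i : Fin (D + m'), F (win L y ((i * L : ℕ) : ℤ)) = F (bl v' i) :=
      fun i => congrArg F (hvy i)
    refine (Finset.sum_congr rfl fun i _ => e1 i).trans (Eq.trans ?_
      (Finset.sum_congr rfl fun i _ => e2 i).symm)
    rw [hblsum F v hv, hblsum F v' hv']
  · show Real.log W'.card ≤ c * T' + Real.log 2
    rw [hW'card, add_comm, ← Real.log_exp (c * T'), ← Real.log_mul (by norm_num)
      (Real.exp_pos _).ne']
    exact Real.log_le_log hNpos hNle
  · intro ε hε x hx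
    obtain ⟨v, hv, hvx⟩ := hmem x hx
    show T' ≤ bs ρ ((D + m') * L) x + ε * (((D + m') * L : ℕ) : ℝ)
    rw [hT', ← hblsum τ v hv, hbsum]
    have : ∑ i, τ (bl v i) ≤ ∑ i : Fin (D + m'), (bs ρ L (sh ((i * L : ℕ) : ℤ) x) + ε * L) := by
      refine Finset.sum_le_sum fun i _ => ?_
      refine csSup_le (hne _) ?_
      rintro r ⟨y, hy, rfl⟩
      have h1 := hε y (sh ((i * L : ℕ) : ℤ) x) (hy.trans (by rw [hwin0]; exact (hvx i).symm))
      have h2 := (abs_le.1 h1).2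
      simp only at h2
      linarith
    refine this.trans_eq ?_
    rw [Finset.sum_add_distrib, Finset.sum_const, Finset.card_univ, Fintype.card_fin, nsmul_eq_mul]
    push_cast
    ring

end Stages

end EFP

namespace EFP

/-! ### The nested intersection of the word families -/

section Intersection

variable {B : Type} {ρ : (ℤ → B) → ℝ} {c : ℝ}

/-- `x` is a concatenation of words of the stage `s`, with a cut at position `a`. -/
def Parsed (s : Stage ρ c) (a : ℤ) (x : ℤ → B) : Prop :=
  ∀ j : ℤ, win s.L x (a + j * s.L) ∈ s.W

/-- The points that are bi-infinite concatenations of words of the stage `s`. -/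
def concatSet (s : Stage ρ c) : Set (ℤ → B) := {x | ∃ a, Parsed s a x}

lemma Parsed.sh {s : Stage ρ c} {a : ℤ} {x : ℤ → B} (h : Parsed s a x) (b : ℤ) :
    Parsed s (a - b) (sh b x) := by
  intro j
  rw [win_sh]
  convert h j using 2
  ring

lemma sh_mem_concatSet {s : Stage ρ c} {x : ℤ → B} (h : x ∈ concatSet s) (b : ℤ) :
    sh b x ∈ concatSet s := by
  obtain ⟨a, ha⟩ := h
  exact ⟨_, ha.sh b⟩

lemma Parsed.mod {s : Stage ρ c} {a : ℤ} {x : ℤ → B} (h : Parsed s a x) :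
    Parsed s (a % s.L) x := by
  intro j
  convert h (j - a / s.L) using 2
  have := Int.emod_add_mul_ediv a s.L
  linear_combination this

lemma exists_parsed {s : Stage ρ c} {x : ℤ → B} (h : x ∈ concatSet s) :
    ∃ a : ℕ, a < s.L ∧ Parsed s a x := by
  obtain ⟨a, ha⟩ := h
  have hL : (0 : ℤ) < s.L := by exact_mod_cast s.hL
  refine ⟨(a % s.L).toNat, ?_, ?_⟩
  · have := Int.emod_lt_of_pos a hL
    have := Int.emod_nonneg a hL.ne'
    omega
  · rw [Int.toNat_of_nonneg (Int.emod_nonneg a hL.ne')]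
    exact ha.mod

lemma Parsed.win_mem {s : Stage ρ c} {a : ℤ} {x : ℤ → B} (h : Parsed s a x) :
    win s.L (EFP.sh a x) 0 ∈ s.W := by
  rw [win_sh, zero_add]
  simpa using h 0

lemma concatSet_nonempty (s : Stage ρ c) : (concatSet s).Nonempty := by
  obtain ⟨w, hw⟩ := s.hW
  obtain ⟨x, hx⟩ := exists_win s.hL w
  exact ⟨x, 0, fun j => by rw [zero_add, hx]; exact hw⟩

lemma Parsed.of_refines {s s' : Stage ρ c} {m : ℕ} (hR : Refines s s' m) {a : ℤ} {x : ℤ → B}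
    (h : Parsed s' a x) : Parsed s a x := by
  intro j
  have hm : (0 : ℤ) < m := by
    have := hR.two_le
    omega
  have h1 : win s'.L (EFP.sh (a + j / m * s'.L) x) 0 ∈ s'.W := by
    rw [win_sh, zero_add]; exact h _
  have hlt : (j % m).toNat < m := by
    have := Int.emod_lt_of_pos j hm
    have := Int.emod_nonneg j hm.ne'
    omega
  have h2 := hR.sub _ h1 ⟨(j % m).toNat, hlt⟩
  rw [win_sh] at h2
  convert h2 using 2
  push_cast
  rw [Int.toNat_of_nonneg (Int.emod_nonneg j hm.ne'), hR.len]
  push_cast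
  have := Int.emod_add_mul_ediv j m
  linear_combination (-(s.L : ℤ)) * this

/-- Birkhoff sums of a function that is small on average over each word of `s` are small on
average, up to a boundary term. -/
lemma abs_bs_le_of_parsed {s : Stage ρ c} {G : (ℤ → B) → ℝ} {C ε : ℝ} (hε : 0 ≤ ε)
    (hC : ∀ x, |G x| ≤ C) (hs : ∀ y, win s.L y 0 ∈ s.W → |bs G s.L y| ≤ ε * s.L)
    {x : ℤ → B} (hx : x ∈ concatSet s) (n : ℕ) :
    |bs G n x| ≤ ε * n + 2 * s.L * C := by
  obtain ⟨a, haL, ha⟩ := exists_parsed hx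
  have hC0 : 0 ≤ C := (abs_nonneg _).trans (hC x)
  have haL' : (a : ℝ) ≤ s.L := by exact_mod_cast haL.le
  rcases le_total a n with han | hna
  · obtain ⟨k, rfl⟩ := Nat.exists_eq_add_of_le han
    set q := k / s.L
    set r := k % s.L
    have hk : k = q * s.L + r := (Nat.div_add_mod' k s.L).symm
    have hr : (r : ℝ) ≤ s.L := by exact_mod_cast (Nat.mod_lt k s.hL).le
    have hq : |bs G (q * s.L) (EFP.sh a x)| ≤ q * (ε * s.L) := by
      rw [bs_mul]
      refine (Finset.abs_sum_le_sum_abs _ _).trans ?_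
      refine (Finset.sum_le_sum (g := fun _ => ε * s.L) fun i _ => hs _ ?_).trans_eq (by simp)
      rw [win_sh, win_sh]
      convert ha i using 2
      push_cast; ring
    have h1 := abs_bs_le hC a x
    have h2 := abs_bs_le hC r (EFP.sh ((q * s.L : ℕ) : ℤ) (EFP.sh a x))
    rw [bs_add, hk, bs_add]
    refine (abs_add_le _ _).trans ?_
    have h3 := abs_add_le (bs G (q * s.L) (EFP.sh a x))
      (bs G r (EFP.sh ((q * s.L : ℕ) : ℤ) (EFP.sh a x)))
    have h7 : ((a + (q * s.L + r) : ℕ) : ℝ) = a + (q * s.L + r) := by push_cast; ring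
    rw [h7]
    have h4 : (a : ℝ) * C ≤ s.L * C := by gcongr
    have h5 : (r : ℝ) * C ≤ s.L * C := by gcongr
    have h6 : 0 ≤ ε * (a + r) := by positivity
    nlinarith
  · have h1 := abs_bs_le hC n x
    have hna' : (n : ℝ) ≤ a := by exact_mod_cast hna
    have h4 : (n : ℝ) * C ≤ s.L * C := by gcongr; linarith
    have h5 : 0 ≤ (s.L : ℝ) * C := by positivity
    have h6 : 0 ≤ ε * n := by positivity
    linarith

/-- Over two words of the refined stage, Birkhoff sums nearly agree, because both words contain
the same words of the previous stage with the same multiplicities. -/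
lemma bs_near_of_refines {s s' : Stage ρ c} {m : ℕ} (hR : Refines s s' m)
    {G : (ℤ → B) → ℝ} {ε : ℝ}
    (hε : ∀ y y', win s.L y 0 = win s.L y' 0 → |bs G s.L y - bs G s.L y'| ≤ ε * s.L)
    {y y' : ℤ → B} (hy : win s'.L y 0 ∈ s'.W) (hy' : win s'.L y' 0 ∈ s'.W) :
    |bs G s'.L y - bs G s'.L y'| ≤ 2 * ε * s'.L := by
  choose ext hext using fun w : Fin s.L → B => exists_win s.hL w
  have hext0 : ∀ w, win s.L (ext w) 0 = w := fun w => by simpa using hext w 0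
  set F : (Fin s.L → B) → ℝ := fun w => bs G s.L (ext w) with hF
  have key : ∀ z, |bs G s'.L z - ∑ i : Fin m, F (win s.L z ((i * s.L : ℕ) : ℤ))| ≤
      ε * s'.L := by
    intro z
    rw [hR.len, bs_mul, Finset.sum_range, ← Finset.sum_sub_distrib]
    refine (Finset.abs_sum_le_sum_abs _ _).trans ?_
    refine (Finset.sum_le_sum (g := fun _ => ε * s.L) fun i _ => hε _ _ ?_).trans_eq ?_
    · rw [hext0, win_sh, zero_add]
    · rw [Finset.sum_const, Finset.card_univ, Fintype.card_fin, nsmul_eq_mul]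
      push_cast; ring
  have h1 := abs_le.1 (key y)
  have h2 := abs_le.1 (key y')
  have h3 := hR.typ y y' hy hy' F
  rw [abs_le]
  constructor <;> linarith

/-- A sequence of successively refined stages. -/
lemma exists_stages (hρ : ∀ x, 0 ≤ ρ x) (hc0 : 0 ≤ c) (s : Stage ρ c) :
    ∃ (st : ℕ → Stage ρ c) (m : ℕ → ℕ), ∀ k, Refines (st k) (st (k + 1)) (m k) := by
  choose nx m hR using fun s : Stage ρ c => exists_refines hρ hc0 s
  exact ⟨fun k => Nat.rec s (fun _ t => nx t) k, fun k => m (Nat.rec s (fun _ t => nx t) k),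
    fun k => hR _⟩

variable [Fintype B] [MetricSpace B]

lemma isClosed_concatSet (s : Stage ρ c) : IsClosed (concatSet s) := by
  have : concatSet s = ⋃ a : Fin s.L, ⋂ j : ℤ, {x | win s.L x ((a : ℕ) + j * s.L) ∈ s.W} := by
    ext x
    simp only [Set.mem_iUnion, Set.mem_iInter, Set.mem_ofPred_eq]
    constructor
    · intro h
      obtain ⟨a, ha, h⟩ := exists_parsed h
      exact ⟨⟨a, ha⟩, h⟩
    · rintro ⟨a, h⟩
      exact ⟨_, h⟩
  rw [this]
  refine isClosed_iUnion_of_finite fun a => isClosed_iInter fun j => ?_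
  refine (s.W.finite_toSet.isClosed).preimage (f := fun x => win s.L x ((a : ℕ) + j * s.L)) ?_
  exact continuous_pi fun i => continuous_apply _

/-- Words of length `l` in concatenations of words of `s` number at most
`L |W| ^ (l / L + 2)`. -/
lemma card_words_le (s : Stage ρ c) (l : ℕ) (V : Finset (Fin l → B))
    (hV : ∀ w ∈ V, ∃ x ∈ concatSet s, win l x 0 = w) :
    V.card ≤ s.L * s.W.card ^ (l / s.L + 2) := by
  classical
  haveI : Nonempty (ℤ → B) := ⟨(concatSet_nonempty s).some⟩
  choose! x hx hxw using hV
  have hp := fun w (hw : w ∈ V) => exists_parsed (hx w hw)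
  choose! a haL ha using hp
  let code : V → Fin s.L × (Fin (l / s.L + 2) → s.W) := fun w =>
    (⟨a w, haL w w.2⟩, fun i => ⟨win s.L (x w) (a w + ((i : ℤ) - 1) * s.L), ha w w.2 _⟩)
  have hinj : Function.Injective code := by
    intro w w' h
    have h1 : a w = a w' := by
      have := congrArg (fun p => (p.1 : ℕ)) h
      simpa [code] using this
    have h2 : ∀ i : Fin (l / s.L + 2), win s.L (x w) (a w + ((i : ℤ) - 1) * s.L) =
        win s.L (x w') (a w' + ((i : ℤ) - 1) * s.L) := by
      intro i
      have := congrArg (fun p => (p.2 i : Fin s.L → B)) h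
      simpa [code] using this
    refine Subtype.ext ?_
    rw [← hxw w w.2, ← hxw w' w'.2]
    funext t
    have ht := t.2
    have haw := haL w w.2
    -- the position of `t` relative to the last cut before `0`
    set r : ℕ := t + s.L - a w with hr
    have hi : r / s.L < l / s.L + 2 := by
      have : r ≤ l + s.L := by omega
      have := Nat.div_le_div_right (c := s.L) this
      rw [Nat.add_div_right _ s.hL] at this
      omega
    have h3 := congrFun (h2 ⟨r / s.L, hi⟩) ⟨r % s.L, Nat.mod_lt _ s.hL⟩
    have hdm : (r / s.L : ℕ) * (s.L : ℤ) + (r % s.L : ℕ) = r := by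
      exact_mod_cast Nat.div_add_mod' r s.L
    have hrz : (r : ℤ) = t + s.L - a w := by omega
    simp only [win] at h3 ⊢
    rw [← h1] at h3
    have e : (a w : ℤ) + (((r / s.L : ℕ) : ℤ) - 1) * s.L + ((r % s.L : ℕ) : ℤ) = 0 + (t : ℕ) := by
      linear_combination hdm + hrz
    rw [e] at h3
    exact h3
  have := Fintype.card_le_of_injective code hinj
  simpa using this

/-- From one family of words with rate above `c` one obtains a subshift on which Birkhoff
averages converge uniformly, whose word growth per unit of flow time is at most `c`, and all of
whose points contain arbitrarily long families of words with rate above `c`. -/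
lemma exists_subshift (hρc : Continuous ρ) (hρ : ∀ x, 0 ≤ ρ x) (hc0 : 0 ≤ c)
    (s : Stage ρ c) :
    ∃ S : Set (ℤ → B), IsClosed S ∧ S.Nonempty ∧ (∀ x ∈ S, ∀ a, sh a x ∈ S) ∧
      (∀ G : (ℤ → B) → ℝ, Continuous G → ∃ A : ℝ, ∀ ε > 0, ∃ N₀ : ℕ, ∀ n ≥ N₀, ∀ x ∈ S,
        |bs G n x - n * A| ≤ ε * n) ∧
      (∀ A : ℝ, (∀ ε > 0, ∃ N₀ : ℕ, ∀ n ≥ N₀, ∀ x ∈ S, |bs ρ n x - n * A| ≤ ε * n) →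
        ∀ ε > 0, ∃ C : ℝ, ∀ (l : ℕ) (V : Finset (Fin l → B)),
          (∀ w ∈ V, ∃ x ∈ S, win l x 0 = w) → (V.card : ℝ) ≤ Real.exp (C + (c * A + ε) * l)) ∧
      ∀ k : ℕ, ∃ s' : Stage ρ c, k ≤ s'.L ∧ ∀ x ∈ S, ∀ w ∈ s'.W, ∃ a : ℤ, win s'.L x a = w := by
  classical
  obtain ⟨st, m, hR⟩ := exists_stages hρ hc0 s
  have hgrow : ∀ k, k < (st k).L := by
    intro k
    induction k with
    | zero => exact (st 0).hL
    | succ k ih =>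
      rw [(hR k).len]
      have := (hR k).two_le
      nlinarith
  have hanti : ∀ k, concatSet (st (k + 1)) ⊆ concatSet (st k) := by
    rintro k x ⟨a, ha⟩
    exact ⟨a, ha.of_refines (hR k)⟩
  set S : Set (ℤ → B) := ⋂ k, concatSet (st k) with hS
  have hSk : ∀ x ∈ S, ∀ k, x ∈ concatSet (st k) := fun x hx => Set.mem_iInter.1 hx
  have hScl : IsClosed S := isClosed_iInter fun k => isClosed_concatSet _
  have hSne : S.Nonempty := IsCompact.nonempty_iInter_of_sequence_nonempty_isCompact_isClosed _
    hanti (fun k => concatSet_nonempty _) (isClosed_concatSet _).isCompact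
    (fun k => isClosed_concatSet _)
  have hSsh : ∀ x ∈ S, ∀ a, sh a x ∈ S := fun x hx a =>
    Set.mem_iInter.2 fun k => sh_mem_concatSet (hSk x hx k) a
  refine ⟨S, hScl, hSne, hSsh, ?_, ?_, ?_⟩
  -- All words of a late stage have nearly the same Birkhoff sum, because they are composed of the
  -- same words of the stage before; and the points of `S` are concatenations of them.
  · intro G hG
    obtain ⟨C, hC0, hC⟩ := exists_bound hG
    have key : ∀ ε > 0, ∃ A : ℝ, ∃ N₀ : ℕ, 0 < N₀ ∧ ∀ n ≥ N₀, ∀ x ∈ S,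
        |bs G n x - n * A| ≤ ε * n := by
      intro ε hε
      obtain ⟨L₀, hL₀⟩ := exists_bs_osc hG (ε := ε / 4) (by positivity)
      set t := st (L₀ + 1) with ht
      have hLpos : (0 : ℝ) < t.L := by exact_mod_cast t.hL
      obtain ⟨w₀, hw₀⟩ := t.hW
      obtain ⟨y₀, hy₀⟩ := exists_win t.hL w₀
      have hy₀' : win t.L y₀ 0 ∈ t.W := by
        have := hy₀ 0
        rw [zero_mul] at this
        rw [this]; exact hw₀
      set A := bs G t.L y₀ / t.L with hA
      have hbs : ∀ n x, bs G n x - n * A = bs (fun z => G z - A) n x := by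
        intro n x
        simp [bs, Finset.sum_sub_distrib]
      obtain ⟨N₀, hN₀⟩ := exists_nat_gt (2 * t.L * (C + |A|) / (ε / 2))
      rw [div_lt_iff₀ (by positivity)] at hN₀
      refine ⟨A, N₀ + 1, Nat.succ_pos _, fun n hn x hx => ?_⟩
      have h := abs_bs_le_of_parsed (s := t) (G := fun z => G z - A) (C := C + |A|) (ε := ε / 2)
        (by positivity) (fun z => (abs_sub _ _).trans (by gcongr; exact hC z)) (fun y hy => by
          rw [← hbs]
          have h1 := bs_near_of_refines (hR L₀) (G := G) (hL₀ _ (hgrow L₀).le) hy hy₀'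
          have h2 : (t.L : ℝ) * A = bs G t.L y₀ := by rw [hA]; field_simp
          rw [h2]
          refine h1.trans_eq ?_
          ring) (hSk x hx _) n
      rw [← hbs] at h
      have hn' : (N₀ : ℝ) ≤ n := by exact_mod_cast (Nat.le_succ _).trans hn
      nlinarith
    obtain ⟨x₀, hx₀⟩ := hSne
    have hdiv : ∀ {ε A : ℝ} {n : ℕ}, 0 < n → |bs G n x₀ - n * A| ≤ ε * n →
        |bs G n x₀ / n - A| ≤ ε := by
      intro ε A n hn h
      have hn' : (0 : ℝ) < n := by exact_mod_cast hn
      have : bs G n x₀ / n - A = (bs G n x₀ - n * A) / n := by field_simp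
      rw [this, abs_div, abs_of_pos hn', div_le_iff₀ hn']
      exact h
    have hcau : CauchySeq fun n : ℕ => bs G n x₀ / n := by
      rw [Metric.cauchySeq_iff']
      intro ε hε
      obtain ⟨A, N₀, hN0, h⟩ := key (ε / 3) (by positivity)
      refine ⟨N₀, fun n hn => ?_⟩
      have h1 := abs_le.1 (hdiv (hN0.trans_le hn) (h n hn x₀ hx₀))
      have h2 := abs_le.1 (hdiv hN0 (h N₀ le_rfl x₀ hx₀))
      rw [Real.dist_eq, abs_lt]
      constructor <;> linarith
    obtain ⟨A, hA⟩ := cauchySeq_tendsto_of_complete hcau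
    refine ⟨A, fun ε hε => ?_⟩
    obtain ⟨A', N₀, hN0, h⟩ := key (ε / 2) (by positivity)
    have hAA : |A - A'| ≤ ε / 2 := by
      refine le_of_tendsto ((hA.sub_const A').abs) ?_
      filter_upwards [eventually_ge_atTop N₀] with n hn
      exact hdiv (hN0.trans_le hn) (h n hn x₀ hx₀)
    refine ⟨N₀, fun n hn x hx => ?_⟩
    have h1 := h n hn x hx
    have h2 : |bs G n x - n * A| ≤ |bs G n x - n * A'| + n * |A - A'| := by
      have : bs G n x - n * A = (bs G n x - n * A') + n * (A' - A) := by ring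
      rw [this]
      refine (abs_add_le _ _).trans ?_
      rw [abs_mul, abs_sub_comm A' A, Nat.abs_cast]
    have h3 : (n : ℝ) * |A - A'| ≤ n * (ε / 2) := by gcongr
    linarith
  -- Words of points of `S` are parsed by a late stage `t`, whose number of words is at most
  -- `2 exp (c T)` with `T` close to `A` times the word length.
  · intro A hA ε hε
    obtain ⟨ε₁, hε₁, hε₁'⟩ : ∃ ε₁ > 0, 2 * c * ε₁ ≤ ε / 2 := by
      refine ⟨ε / (4 * (c + 1)), by positivity, ?_⟩
      rw [mul_div_assoc', div_le_div_iff₀ (by positivity) (by positivity)]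
      nlinarith
    obtain ⟨N₀, hN₀⟩ := hA ε₁ hε₁
    obtain ⟨L₀, hL₀⟩ := exists_bs_osc hρc hε₁
    obtain ⟨L₁, hL₁⟩ := exists_nat_gt (Real.log 2 / (ε / 2))
    rw [div_lt_iff₀ (by positivity)] at hL₁
    set k := N₀ + L₀ + L₁ with hk
    set t := st (k + 1) with ht
    have htL : k + 1 < t.L := hgrow (k + 1)
    have hLpos : (0 : ℝ) < t.L := by exact_mod_cast t.hL
    have hT : t.T ≤ (A + 2 * ε₁) * t.L := by
      obtain ⟨x₀, hx₀⟩ := hSne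
      obtain ⟨a, ha⟩ := hSk x₀ hx₀ (k + 1)
      have h1 := (hR k).time_le ε₁ (hL₀ _ (by have := hgrow k; omega)) (sh a x₀) ha.win_mem
      have h2 := (abs_le.1 (hN₀ t.L (by omega) (sh a x₀) (hSsh x₀ hx₀ a))).2
      linarith
    have hcard := (hR k).card_le
    have hWpos : (0 : ℝ) < t.W.card := by exact_mod_cast Finset.card_pos.2 t.hW
    refine ⟨Real.log t.L + 2 * (c * t.T + Real.log 2), fun l V hV => ?_⟩
    have h1 := card_words_le t l V (fun w hw => by
      obtain ⟨x, hx, hxw⟩ := hV w hw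
      exact ⟨x, hSk x hx _, hxw⟩)
    have h2 : (V.card : ℝ) ≤ t.L * (t.W.card : ℝ) ^ (l / t.L + 2) := by exact_mod_cast h1
    refine h2.trans ?_
    rw [← Real.exp_log (show (0 : ℝ) < t.L * (t.W.card : ℝ) ^ (l / t.L + 2) by positivity)]
    refine Real.exp_le_exp.2 ?_
    rw [Real.log_mul hLpos.ne' (by positivity), Real.log_pow]
    push_cast
    have hcT : c * t.T ≤ (c * A + ε / 2) * t.L := by
      have := mul_le_mul_of_nonneg_left hT hc0
      nlinarith
    have hl2 : Real.log 2 ≤ ε / 2 * t.L := by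
      have : (L₁ : ℝ) ≤ t.L := by exact_mod_cast (by omega : L₁ ≤ t.L)
      nlinarith
    have hlog0 : 0 ≤ Real.log t.W.card := Real.log_nonneg (by
      exact_mod_cast Finset.card_pos.2 t.hW)
    have hdiv : ((l / t.L : ℕ) : ℝ) ≤ l / t.L := Nat.cast_div_le
    have h3 : ((l / t.L : ℕ) : ℝ) * Real.log t.W.card ≤ (c * A + ε) * l := by
      calc ((l / t.L : ℕ) : ℝ) * Real.log t.W.card ≤ l / t.L * ((c * A + ε) * t.L) := by
            gcongr
            linarith
        _ = _ := by field_simp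
    nlinarith
  -- Each word of the stage `k + 1` contains every word of the stage `k`.
  · intro k
    refine ⟨st k, (hgrow k).le, fun x hx w hw => ?_⟩
    obtain ⟨a, ha⟩ := hSk x hx (k + 1)
    obtain ⟨i, hi⟩ := (hR k).occ _ ha.win_mem w hw
    rw [win_sh] at hi
    exact ⟨_, hi⟩

end Intersection

end EFP

namespace EFP

/-! ### Suspension flows over the full shift -/

section Suspension

variable {M : Type*} [MetricSpace M] {B : Type} [Fintype B] [MetricSpace B]

/-- The data of a horseshoe: the base embedding `e` and the roof function `ρ`, with bounds
`r ≤ ρ ≤ R` for the latter. -/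
structure Susp (φ : Flow ℝ M) (B : Type) [Fintype B] [MetricSpace B] where
  e : (ℤ → B) → M
  ρ : (ℤ → B) → ℝ
  r : ℝ
  R : ℝ
  he : Continuous e
  hρ : Continuous ρ
  hr : 0 < r
  hrρ : ∀ x, r ≤ ρ x
  hρR : ∀ x, ρ x ≤ R
  hR : 0 < R
  hmap : ∀ x, φ.toFun (ρ x) (e x) = e (sh 1 x)
  hinj : ∀ x y, ∀ s u : ℝ, 0 ≤ s → s < ρ x → 0 ≤ u → u < ρ y →
      φ.toFun s (e x) = φ.toFun u (e y) → x = y ∧ s = u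

variable {φ : Flow ℝ M} (P : Susp φ B)

namespace Susp

lemma flow_bs (n : ℕ) (x : ℤ → B) : φ.toFun (bs P.ρ n x) (P.e x) = P.e (sh n x) := by
  induction n with
  | zero => rw [bs_zero, φ.map_zero_apply]; simp
  | succ n ih =>
    rw [bs_succ, add_comm, φ.map_add, ih, P.hmap, sh_sh]
    congr 2; push_cast; ring

lemma flow_sub (n : ℕ) (x : ℤ → B) (t : ℝ) :
    φ.toFun t (P.e x) = φ.toFun (t - bs P.ρ n x) (P.e (sh n x)) := by
  rw [← P.flow_bs, ← φ.map_add, sub_add_cancel]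

lemma le_bs (n : ℕ) (x : ℤ → B) : n * P.r ≤ bs P.ρ n x := EFP.le_bs P.hrρ n x

lemma bs_le (n : ℕ) (x : ℤ → B) : bs P.ρ n x ≤ n * P.R := EFP.bs_le P.hρR n x

lemma bs_mono (x : ℤ → B) {m n : ℕ} (h : m ≤ n) : bs P.ρ m x ≤ bs P.ρ n x := by
  obtain ⟨k, rfl⟩ := Nat.exists_eq_add_of_le h
  rw [bs_add]
  have h1 := P.le_bs k (sh m x)
  have h2 : 0 ≤ (k : ℝ) * P.r := mul_nonneg (by positivity) P.hr.le
  linarith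

/-- The number `n` of returns to the cross-section completed by time `t`. -/
lemma exists_cross (x : ℤ → B) {t : ℝ} (ht : 0 ≤ t) :
    ∃ n : ℕ, bs P.ρ n x ≤ t ∧ t < bs P.ρ (n + 1) x := by
  have hex : ∃ n : ℕ, t < bs P.ρ n x := by
    obtain ⟨n, hn⟩ := exists_nat_gt (t / P.r)
    rw [div_lt_iff₀ P.hr] at hn
    exact ⟨n, hn.trans_le (P.le_bs n x)⟩
  classical
  obtain ⟨k, hk⟩ : ∃ k, Nat.find hex = k + 1 := Nat.exists_eq_succ_of_ne_zero (fun h0 => by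
    have := Nat.find_spec hex
    rw [h0, bs_zero] at this
    linarith)
  refine ⟨k, not_lt.1 (Nat.find_min hex (by omega)), ?_⟩
  rw [← hk]
  exact Nat.find_spec hex

variable [CompactSpace M] [MeasurableSpace M] [BorelSpace M]

lemma time_unif (φ : Flow ℝ M) {ε : ℝ} (hε : 0 < ε) :
    ∃ η > 0, ∀ v : ℝ, |v| ≤ η → ∀ z : M, dist (φ.toFun v z) z ≤ ε := by
  have hc : Continuous fun p : ℝ × M => φ.toFun p.1 p.2 :=
    φ.continuous continuous_fst continuous_snd
  have hu := (isCompact_Icc.prod (isCompact_univ (X := M))).uniformContinuousOn_of_continuous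
    (s := Set.Icc (-1 : ℝ) 1 ×ˢ Set.univ) hc.continuousOn
  rw [Metric.uniformContinuousOn_iff] at hu
  obtain ⟨δ, hδ, h⟩ := hu ε hε
  refine ⟨min (δ / 2) 1, by positivity, fun v hv z => ?_⟩
  have hv1 := hv.trans (min_le_right _ _)
  have hv2 := hv.trans (min_le_left _ _)
  have := h (v, z) ⟨abs_le.1 hv1, trivial⟩ (0, z) ⟨by constructor <;> norm_num, trivial⟩ (by
    rw [Prod.dist_eq, dist_self, Real.dist_eq, sub_zero]
    exact max_lt (by linarith) hδ)
  simp only [φ.map_zero_apply] at this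
  exact this.le

lemma floor_inj {a b η : ℝ} (hη : 0 < η) (h : ⌊a / η⌋₊ = ⌊b / η⌋₊) (ha : 0 ≤ a) (hb : 0 ≤ b) :
    |a - b| ≤ η := by
  have h1 := Nat.floor_le (div_nonneg ha hη.le)
  have h2 := Nat.lt_floor_add_one (a / η)
  have h3 := Nat.floor_le (div_nonneg hb hη.le)
  have h4 := Nat.lt_floor_add_one (b / η)
  rw [h] at h1 h2
  rw [le_div_iff₀ hη] at h1 h3
  rw [div_lt_iff₀ hη] at h2 h4
  rw [abs_le]
  constructor <;> nlinarith

/-- Separated sets in the suspension are counted by words in the base, up to a factor of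
arbitrarily small exponential rate `θ`. The factor records, with precision `η`, the height of the
point and the Birkhoff sums of the roof at the multiples of a large integer `q`. -/
lemma card_sep_le {ε θ : ℝ} (hε : 0 < ε) (hθ : 0 < θ) :
    ∃ (p : ℕ) (C : ℝ), 0 < C ∧ ∀ (n l : ℕ) (A : Set (ℤ → B)),
      (∀ x ∈ A, n + P.R ≤ bs P.ρ l x) → ∀ Q : Finset M, IsDynSep (φ.toFun 1) n ε ↑Q →
      (∀ z ∈ Q, ∃ x ∈ A, ∃ s : ℝ, 0 ≤ s ∧ s < P.ρ x ∧ φ.toFun s (P.e x) = z) →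
      ∀ V : Finset (Fin (l + 2 * p + 1) → B), (∀ x ∈ A, win (l + 2 * p + 1) x (-p) ∈ V) →
      (Q.card : ℝ) ≤ C * Real.exp (θ * l) * V.card := by
  classical
  have hR := P.hR
  obtain ⟨η', hη', htime⟩ := time_unif φ (half_pos hε)
  set η : ℝ := η' / 3 with hη
  have hη0 : 0 < η := by positivity
  obtain ⟨δ, hδ, hflow⟩ := flow_unif φ P.R (half_pos hε)
  set Kc : ℝ := P.R / η + 3 with hKc
  have hKc3 : 3 < Kc := by have : 0 < P.R / η := by positivity
                           linarith
  obtain ⟨q, hq⟩ := exists_large_power (δ := θ) (D := 1) (E := Real.log Kc) hθ zero_le_one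
    (Real.log_nonneg (by linarith))
  have hq0 : 0 < q := by
    rcases Nat.eq_zero_or_pos q with rfl | h
    · have := Real.log_pos (show 1 < Kc by linarith)
      norm_num at hq
      linarith
    · exact h
  have hq0' : (0 : ℝ) < q := by exact_mod_cast hq0
  set D : ℕ := ⌊q * P.R / η⌋₊ + 2 with hD
  have hDpos : (0 : ℝ) < D := by rw [hD]; positivity
  have hDlog : Real.log D ≤ q * θ := by
    refine le_trans ?_ hq
    rw [one_mul, ← Real.log_mul (by positivity) (by linarith)]
    refine Real.log_le_log hDpos ?_
    have h1 := Nat.floor_le (show 0 ≤ q * P.R / η by positivity)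
    have h2 : q * P.R / η = q * (P.R / η) := by ring
    have h3 : (0 : ℝ) < P.R / η := by positivity
    have h4 : (1 : ℝ) ≤ q := by exact_mod_cast hq0
    rw [hD]; push_cast
    rw [hKc]
    nlinarith
  -- `p` controls the oscillation of both the roof and the base embedding
  obtain ⟨p₁, hp₁⟩ := exists_osc P.hρ (ε := η / q) (by positivity)
  obtain ⟨p₂, hp₂⟩ := agree_compact (B := B) (C := {z | δ ≤ dist (P.e z.1) (P.e z.2)})
    (isClosed_le continuous_const ((P.he.comp continuous_fst).dist (P.he.comp continuous_snd)))
    (fun x => by simp [hδ])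
  set p := p₁ + p₂ with hp
  set Cs : ℕ := ⌊P.R / η⌋₊ + 1 with hCs
  refine ⟨p, Cs, by positivity, fun n l A hA Q hQ hQA V hV => ?_⟩
  rcases Q.eq_empty_or_nonempty with rfl | hQne
  · simp only [Finset.card_empty, Nat.cast_zero]; positivity
  haveI : Nonempty (ℤ → B) := by
    obtain ⟨z, hz⟩ := hQne
    obtain ⟨x, -⟩ := hQA z hz
    exact ⟨x⟩
  choose! x hxA s hs0 hs1 hsz using hQA
  have hfl : ∀ a b : ℝ, 0 ≤ a → 0 ≤ b → a ≤ q * P.R →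
      ⌊(b + a) / η⌋₊ - ⌊b / η⌋₊ < D := by
    intro a b ha hb hab
    have h1 : (b + a) / η ≤ b / η + q * P.R / η := by
      rw [← add_div]; gcongr
    have h2 := Nat.floor_le_floor h1
    have h3 : ⌊b / η + q * P.R / η⌋₊ ≤ ⌊b / η⌋₊ + ⌊q * P.R / η⌋₊ + 1 := by
      refine Nat.le_of_lt_succ ((Nat.floor_lt (by positivity)).2 ?_)
      have h4 := Nat.lt_floor_add_one (b / η)
      have h5 := Nat.lt_floor_add_one (q * P.R / η)
      push_cast; linarith
    omega
  have hbs0 : ∀ n y, 0 ≤ bs P.ρ n y := fun n y =>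
    le_trans (mul_nonneg (by positivity) P.hr.le) (P.le_bs n y)
  have hinc : ∀ (j : ℕ) (y : ℤ → B),
      ⌊bs P.ρ ((j + 1) * q) y / η⌋₊ - ⌊bs P.ρ (j * q) y / η⌋₊ < D := by
    intro j y
    rw [add_mul, one_mul, bs_add]
    exact hfl _ _ (hbs0 _ _) (hbs0 _ _) (P.bs_le _ _)
  -- The code of a point: the word below it, its rounded height over the base, and the increments of
  -- the rounded Birkhoff sums of the roof.
  let code : Q → V × Fin Cs × (Fin (l / q) → Fin D) := fun z =>
    (⟨_, hV (x z) (hxA z z.2)⟩, ⟨⌊s z / η⌋₊, Nat.lt_succ_of_le (Nat.floor_le_floor (by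
      have := (hs1 z z.2).le.trans (P.hρR _)
      gcongr))⟩,
      fun j => ⟨_, hinc j (x z)⟩)
  have hinj : Function.Injective code := by
    intro z z' hzz
    have hwin : win (l + 2 * p + 1) (x z) (-p) = win (l + 2 * p + 1) (x z') (-p) :=
      congrArg (fun c => (c.1 : Fin (l + 2 * p + 1) → B)) hzz
    have hfs : ⌊s z / η⌋₊ = ⌊s z' / η⌋₊ := congrArg (fun c => (c.2.1 : ℕ)) hzz
    have hfi : ∀ j : Fin (l / q), ⌊bs P.ρ ((j + 1) * q) (x z) / η⌋₊ -
        ⌊bs P.ρ (j * q) (x z) / η⌋₊ = ⌊bs P.ρ ((j + 1) * q) (x z') / η⌋₊ -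
        ⌊bs P.ρ (j * q) (x z') / η⌋₊ := fun j => congrArg (fun c => (c.2.2 j : ℕ)) hzz
    have hmono : ∀ (j : ℕ) (y : ℤ → B),
        ⌊bs P.ρ (j * q) y / η⌋₊ ≤ ⌊bs P.ρ ((j + 1) * q) y / η⌋₊ := by
      intro j y
      refine Nat.floor_le_floor ?_
      have := P.bs_mono y (m := j * q) (n := (j + 1) * q) (by nlinarith)
      gcongr
    have hfa : ∀ j ≤ l / q, ⌊bs P.ρ (j * q) (x z) / η⌋₊ = ⌊bs P.ρ (j * q) (x z') / η⌋₊ := by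
      intro j
      induction j with
      | zero => intro _; simp [bs_zero]
      | succ j ih =>
        intro hj
        have h1 := ih (by omega)
        have h2 := hfi ⟨j, by omega⟩
        have h3 := hmono j (x z)
        have h4 := hmono j (x z')
        simp only at h2
        omega
    have hagree : ∀ i : ℕ, i < l → ∀ k : ℤ, |k| ≤ p → sh i (x z) k = sh i (x z') k := by
      intro i hi k hk
      rw [abs_le] at hk
      have h1 := congrFun hwin ⟨(k + i + p).toNat, by omega⟩
      simp only [win] at h1
      rw [Int.toNat_of_nonneg (by omega)] at h1
      simp only [sh]
      convert h1 using 2 <;> ring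
    have hdiff : ∀ i : ℕ, i < l → |bs P.ρ i (x z) - bs P.ρ i (x z')| ≤ 2 * η := by
      intro i hi
      have hdm := Nat.div_add_mod' i q
      rw [← hdm, bs_add, bs_add]
      have h1 := floor_inj hη0 (hfa (i / q) (Nat.div_le_div_right hi.le)) (hbs0 _ _) (hbs0 _ _)
      have h2 : |bs P.ρ (i % q) (sh ((i / q * q : ℕ) : ℤ) (x z)) -
          bs P.ρ (i % q) (sh ((i / q * q : ℕ) : ℤ) (x z'))| ≤ η := by
        simp only [bs]
        rw [← Finset.sum_sub_distrib]
        refine (Finset.abs_sum_le_sum_abs _ _).trans ?_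
        refine (Finset.sum_le_sum (g := fun _ => η / q) fun k hk => ?_).trans ?_
        · rw [Finset.mem_range] at hk
          rw [sh_sh, sh_sh]
          refine hp₁ _ _ fun t ht => ?_
          have := hagree (k + i / q * q) (by omega) t (ht.trans (by rw [hp]; push_cast; linarith))
          push_cast at this ⊢
          exact this
        · rw [Finset.sum_const, Finset.card_range, nsmul_eq_mul, mul_div_assoc', div_le_iff₀ hq0',
            mul_comm]
          have : ((i % q : ℕ) : ℝ) ≤ q := by exact_mod_cast (Nat.mod_lt _ hq0).le
          gcongr
      rw [abs_le] at h1 h2 ⊢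
      constructor <;> linarith
    by_contra hne
    obtain ⟨j, hjn, hj⟩ := hQ z.2 z'.2 (fun h => hne (Subtype.ext h))
    refine absurd hj (not_lt.2 ?_)
    rw [iterate_flow, iterate_flow, ← hsz z z.2, ← hsz z' z'.2, ← φ.map_add, ← φ.map_add]
    obtain ⟨i, hi1, hi2⟩ := P.exists_cross (x z) (t := j + s z)
      (add_nonneg (by positivity) (hs0 z z.2))
    have hil : i < l := by
      by_contra hcon
      have h1 := P.bs_mono (x z) (not_lt.1 hcon)
      have h2 := hA _ (hxA z z.2)
      have h3 := (hs1 z z.2).trans_le (P.hρR _)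
      have h4 : (j : ℝ) ≤ n := by exact_mod_cast hjn
      linarith
    rw [P.flow_sub i (x z), P.flow_sub i (x z')]
    set u := (j : ℝ) + s z - bs P.ρ i (x z) with hu
    set u' := (j : ℝ) + s z' - bs P.ρ i (x z') with hu'
    have hu0 : 0 ≤ u := by linarith
    have huR : u ≤ P.R := by
      rw [bs_succ] at hi2
      have := P.hρR (sh i (x z))
      linarith
    have huu : |u - u'| ≤ η' := by
      have h1 := hdiff i hil
      have h2 := floor_inj hη0 hfs (hs0 z z.2) (hs0 z' z'.2)
      rw [abs_le] at h1 h2 ⊢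
      constructor <;> linarith
    have d1 : dist (φ.toFun u (P.e (sh i (x z)))) (φ.toFun u (P.e (sh i (x z')))) ≤ ε / 2 := by
      refine hflow u ⟨by linarith, huR⟩ _ _ (not_le.1 (hp₂ _ _ fun k hk =>
        hagree i hil k (hk.trans ?_))).le
      rw [hp]; push_cast; linarith
    have d2 := htime (u - u') huu (φ.toFun u' (P.e (sh i (x z'))))
    rw [← φ.map_add, sub_add_cancel] at d2
    linarith [dist_triangle (φ.toFun u (P.e (sh i (x z)))) (φ.toFun u (P.e (sh i (x z'))))
      (φ.toFun u' (P.e (sh i (x z'))))]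
  have hcard := Fintype.card_le_of_injective code hinj
  simp only [Fintype.card_coe, Fintype.card_prod, Fintype.card_fun, Fintype.card_fin] at hcard
  have hcard' : (Q.card : ℝ) ≤ V.card * (Cs * (D : ℝ) ^ (l / q)) := by exact_mod_cast hcard
  have hDpow : (D : ℝ) ^ (l / q) ≤ Real.exp (θ * l) := by
    rw [← Real.exp_log (pow_pos hDpos _), Real.log_pow]
    refine Real.exp_le_exp.2 ?_
    have h1 : ((l / q : ℕ) : ℝ) ≤ l / q := Nat.cast_div_le
    calc ((l / q : ℕ) : ℝ) * Real.log D ≤ ((l / q : ℕ) : ℝ) * (q * θ) := by gcongr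
      _ ≤ l / q * (q * θ) := by gcongr
      _ = θ * l := by field_simp
  calc (Q.card : ℝ) ≤ V.card * (Cs * (D : ℝ) ^ (l / q)) := hcard'
    _ ≤ V.card * (Cs * Real.exp (θ * l)) := by gcongr
    _ = _ := by ring

end Susp

end Suspension

end EFP

namespace EFP

/-! ### Entropy bounds in the suspension -/

section Bounds

variable {M : Type*} [MetricSpace M]

lemma topEntropyOn_le_of_log_le {f : M → M} {K : Set M} {b : ℝ}
    (h : ∀ ε > 0, ∀ κ > 0, ∃ C : ℝ, ∀ n : ℕ,
      Real.log (sepCount f K n ε) ≤ C + (b + κ) * n) : topEntropyOn f K ≤ (b : EReal) := by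
  refine iSup₂_le fun ε hε => ?_
  rw [← EReal.le_of_forall_lt_iff_le]
  intro z hz
  have hz' : b < z := by exact_mod_cast hz
  obtain ⟨C, hC⟩ := h ε hε ((z - b) / 2) (by linarith)
  refine limsup_le_of_le (by isBoundedDefault) ?_
  obtain ⟨N, hN⟩ := exists_nat_gt (C / ((z - b) / 2))
  rw [div_lt_iff₀ (by linarith)] at hN
  filter_upwards [eventually_ge_atTop (N + 1)] with n hn
  have hn' : (N : ℝ) + 1 ≤ n := by exact_mod_cast hn
  have hN0 : (0 : ℝ) ≤ N := by positivity
  refine EReal.coe_le_coe_iff.2 ?_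
  rw [div_le_iff₀ (by linarith)]
  refine (hC n).trans ?_
  nlinarith

lemma le_topEntropyOn_of_frequently {f : M → M} {K : Set M} {c ε : ℝ} (hε : 0 < ε)
    (h : ∀ κ > 0, ∃ᶠ n : ℕ in atTop, c - κ ≤ Real.log (sepCount f K n ε) / n) :
    (c : EReal) ≤ topEntropyOn f K := by
  refine le_trans ?_ (le_iSup₂ (f := fun (ε : ℝ) (_ : 0 < ε) =>
    Filter.atTop.limsup fun n : ℕ => ((Real.log (sepCount f K n ε) / n : ℝ) : EReal)) ε hε)
  rw [← EReal.ge_of_forall_gt_iff_ge]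
  intro z hz
  have hz' : z < c := by exact_mod_cast hz
  refine le_limsup_of_frequently_le ?_ (by isBoundedDefault)
  refine (h (c - z) (by linarith)).mono fun n hn => ?_
  refine EReal.coe_le_coe_iff.2 ?_
  linarith

variable {B : Type} [Fintype B] [MetricSpace B] {φ : Flow ℝ M}

namespace Susp

variable (P : Susp φ B)

/-- A piece of orbit shorter than the roof meets the cross-section at most once. -/
lemma eq_of_flow_eq {y y' : ℤ → B} {u : ℝ} (hu : |u| < P.r)
    (h : P.e y = φ.toFun u (P.e y')) : y = y' ∧ u = 0 := by
  have h0 : ∀ z : M, φ.toFun 0 z = z := φ.map_zero_apply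
  rcases le_total 0 u with h1 | h1
  · rw [abs_of_nonneg h1] at hu
    have := P.hinj y y' 0 u le_rfl (P.hr.trans_le (P.hrρ _)) h1 (hu.trans_le (P.hrρ _))
      (by rw [h0]; exact h)
    exact ⟨this.1, this.2.symm⟩
  · rw [abs_of_nonpos h1] at hu
    have h2 : φ.toFun (-u) (P.e y) = P.e y' := by
      rw [h, ← φ.map_add, neg_add_cancel, h0]
    have := P.hinj y y' (-u) 0 (by linarith) (hu.trans_le (P.hrρ _)) le_rfl
      (P.hr.trans_le (P.hrρ _)) (by rw [h0]; exact h2)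
    exact ⟨this.1, by linarith [this.2]⟩

/-- Points of the cross-section that are close up to a small time shift have almost equal roofs,
the same symbol at `0`, and an even smaller time shift. -/
lemma exists_section_close :
    ∃ ε > 0, ∀ (y y' : ℤ → B) (u : ℝ), |u| ≤ P.r / 2 →
      dist (P.e y) (φ.toFun u (P.e y')) ≤ ε →
      |u| ≤ P.r / 4 ∧ |P.ρ y - P.ρ y'| ≤ P.r / 4 ∧ y 0 = y' 0 := by
  have hr := P.hr
  set X : Set (((ℤ → B) × (ℤ → B)) × ℝ) :=
    (Set.univ ×ˢ Set.Icc (-(P.r / 2)) (P.r / 2)) ∩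
      ({q | P.r / 4 ≤ |q.2|} ∪ {q | P.r / 4 ≤ |P.ρ q.1.1 - P.ρ q.1.2|} ∪
        {q | q.1.1 0 = q.1.2 0}ᶜ) with hX
  have hXc : IsCompact X := by
    refine (isCompact_univ.prod isCompact_Icc).inter_right ?_
    refine IsClosed.union (IsClosed.union ?_ ?_) ?_
    · exact isClosed_le continuous_const continuous_snd.abs
    · exact isClosed_le continuous_const (((P.hρ.comp (continuous_fst.comp continuous_fst)).sub
        (P.hρ.comp (continuous_snd.comp continuous_fst))).abs)
    · have hcont : Continuous fun q : ((ℤ → B) × (ℤ → B)) × ℝ => (q.1.1 0, q.1.2 0) :=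
        ((continuous_apply 0).comp (continuous_fst.comp continuous_fst)).prodMk
          ((continuous_apply 0).comp (continuous_snd.comp continuous_fst))
      have : IsOpen {b : B × B | b.1 = b.2} := isOpen_discrete _
      exact (this.preimage hcont).isClosed_compl
  have hcont : Continuous fun q : ((ℤ → B) × (ℤ → B)) × ℝ =>
      dist (P.e q.1.1) (φ.toFun q.2 (P.e q.1.2)) :=
    (P.he.comp (continuous_fst.comp continuous_fst)).dist
      (φ.continuous continuous_snd (P.he.comp (continuous_snd.comp continuous_fst)))
  have hpos : ∀ q ∈ X, 0 < dist (P.e q.1.1) (φ.toFun q.2 (P.e q.1.2)) := by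
    rintro ⟨⟨y, y'⟩, u⟩ ⟨⟨-, hu⟩, hv⟩
    rw [dist_pos]
    intro heq
    have hu' : |u| ≤ P.r / 2 := abs_le.2 hu
    have heq' : P.e y = φ.toFun u (P.e y') := heq
    obtain ⟨h1, h2⟩ := P.eq_of_flow_eq (by linarith) heq'
    clear heq heq' hu hu'
    subst h1 h2
    rcases hv with (hv | hv) | hv
    · have : P.r / 4 ≤ |(0 : ℝ)| := hv
      rw [abs_zero] at this; linarith
    · have : P.r / 4 ≤ |P.ρ y - P.ρ y| := hv
      rw [sub_self, abs_zero] at this; linarith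
    · exact hv rfl
  obtain ⟨ε, hε, hεX⟩ : ∃ ε > 0, ∀ q ∈ X, ε < dist (P.e q.1.1) (φ.toFun q.2 (P.e q.1.2)) := by
    rcases X.eq_empty_or_nonempty with h | h
    · exact ⟨1, one_pos, by simp [h]⟩
    · obtain ⟨q₀, hq₀, hmin⟩ := hXc.exists_isMinOn h hcont.continuousOn
      refine ⟨_, half_pos (hpos q₀ hq₀), fun q hq => ?_⟩
      have := hmin hq
      simp only [Set.mem_ofPred_eq] at this
      have := hpos q₀ hq₀
      linarith
  refine ⟨ε, hε, fun y y' u hu hd => ?_⟩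
  have hnot : ((y, y'), u) ∉ X := fun h => (not_lt.2 hd) (hεX _ h)
  have hmem : ((y, y'), u) ∈ Set.univ ×ˢ Set.Icc (-(P.r / 2)) (P.r / 2) :=
    ⟨trivial, abs_le.1 hu⟩
  refine ⟨?_, ?_, ?_⟩
  · by_contra h
    exact hnot ⟨hmem, Or.inl (Or.inl (not_le.1 h).le)⟩
  · by_contra h
    exact hnot ⟨hmem, Or.inl (Or.inr (not_le.1 h).le)⟩
  · by_contra h
    exact hnot ⟨hmem, Or.inr h⟩

/-- The saturation of `S` by the flow. Times in `[0, R]` suffice when `S` is shift-invariant, and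
make the saturation of a closed set compact. -/
def sat (S : Set (ℤ → B)) : Set M :=
  (fun q : ℝ × (ℤ → B) => φ.toFun q.1 (P.e q.2)) '' (Set.Icc 0 P.R ×ˢ S)

lemma isCompact_sat {S : Set (ℤ → B)} (hS : IsClosed S) : IsCompact (P.sat S) :=
  (isCompact_Icc.prod hS.isCompact).image
    (φ.continuous continuous_fst (P.he.comp continuous_snd))

lemma flow_neg_bs (k : ℕ) (x : ℤ → B) :
    P.e (sh (-k) x) = φ.toFun (-bs P.ρ k (sh (-k) x)) (P.e x) := by
  have := P.flow_bs k (sh (-k) x)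
  rw [sh_sh, add_neg_cancel, sh_zero] at this
  rw [← this, ← φ.map_add, neg_add_cancel, φ.map_zero_apply]

/-- Every point on the orbit of a point over `S` lies below the roof over some point of `S`. -/
lemma exists_cell {S : Set (ℤ → B)} (hsh : ∀ x ∈ S, ∀ a, sh a x ∈ S) {x : ℤ → B} (hx : x ∈ S)
    (t : ℝ) : ∃ y ∈ S, ∃ s : ℝ, 0 ≤ s ∧ s < P.ρ y ∧ φ.toFun s (P.e y) = φ.toFun t (P.e x) := by
  have hpos : ∀ y ∈ S, ∀ t : ℝ, 0 ≤ t →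
      ∃ y' ∈ S, ∃ s : ℝ, 0 ≤ s ∧ s < P.ρ y' ∧ φ.toFun s (P.e y') = φ.toFun t (P.e y) := by
    intro y hy t ht
    obtain ⟨n, h1, h2⟩ := P.exists_cross y ht
    rw [bs_succ] at h2
    exact ⟨sh n y, hsh y hy n, t - bs P.ρ n y, by linarith, by linarith,
      (P.flow_sub n y t).symm⟩
  obtain ⟨k, hk⟩ := exists_nat_gt (-t / P.r)
  rw [div_lt_iff₀ P.hr] at hk
  have h1 := P.le_bs k (sh (-k) x)
  have h2 := P.flow_bs k (sh (-k) x)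
  rw [sh_sh, add_neg_cancel, sh_zero] at h2
  obtain ⟨y, hy, s, h3, h4, h5⟩ := hpos (sh (-k) x) (hsh x hx _) (t + bs P.ρ k (sh (-k) x))
    (by linarith)
  refine ⟨y, hy, s, h3, h4, ?_⟩
  rw [h5, φ.map_add, h2]

lemma mem_sat {S : Set (ℤ → B)} (hsh : ∀ x ∈ S, ∀ a, sh a x ∈ S) {x : ℤ → B} (hx : x ∈ S)
    (t : ℝ) : φ.toFun t (P.e x) ∈ P.sat S := by
  obtain ⟨y, hy, s, h3, h4, h5⟩ := P.exists_cell hsh hx t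
  exact ⟨(s, y), ⟨⟨h3, h4.le.trans (P.hρR y)⟩, hy⟩, h5⟩

lemma avg_pos {A : ℝ} {S : Set (ℤ → B)} (hne : S.Nonempty)
    (hA : ∀ ε > 0, ∃ N₀ : ℕ, ∀ n ≥ N₀, ∀ x ∈ S, |bs P.ρ n x - n * A| ≤ ε * n) : 0 < A := by
  have hr := P.hr
  obtain ⟨x, hx⟩ := hne
  obtain ⟨N₀, hN₀⟩ := hA (P.r / 2) (by positivity)
  have h1 := (abs_le.1 (hN₀ (N₀ + 1) (by omega) x hx)).2
  have h2 := P.le_bs (N₀ + 1) x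
  have h3 : (0 : ℝ) < ((N₀ + 1 : ℕ) : ℝ) := by positivity
  by_contra hcon
  have := mul_nonneg h3.le (neg_nonneg.2 (not_lt.1 hcon))
  nlinarith

variable [CompactSpace M] [MeasurableSpace M] [BorelSpace M]

/-- Two points of the cross-section whose orbits stay close for time `n` have the same symbols
for as many steps as the flow completes in that time. -/
lemma exists_expansive :
    ∃ ε > 0, ∀ (n l : ℕ) (x x' : ℤ → B),
      (∀ j ≤ n, dist (φ.toFun (j : ℝ) (P.e x)) (φ.toFun (j : ℝ) (P.e x')) ≤ ε) →
      bs P.ρ l x ≤ n → ∀ i < l, x (i : ℕ) = x' (i : ℕ) := by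
  have hr := P.hr
  obtain ⟨ε₁, hε₁, h₁⟩ := P.exists_section_close
  obtain ⟨ε, hε, h₂⟩ := flow_unif φ 1 hε₁
  refine ⟨ε, hε, fun n l x x' hclose hl => ?_⟩
  have hreal : ∀ t : ℝ, 0 ≤ t → t ≤ n → dist (φ.toFun t (P.e x)) (φ.toFun t (P.e x')) ≤ ε₁ := by
    intro t ht htn
    have hj := hclose ⌊t⌋₊ (by exact_mod_cast (Nat.floor_le ht).trans htn)
    have h3 := Nat.floor_le ht
    have h4 := Nat.lt_floor_add_one t
    have := h₂ (t - ⌊t⌋₊) ⟨by linarith, by linarith⟩ _ _ hj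
    rwa [← φ.map_add, ← φ.map_add, sub_add_cancel] at this
  have hstep : ∀ i ≤ l, |bs P.ρ i x - bs P.ρ i x'| ≤ P.r / 2 →
      |bs P.ρ i x - bs P.ρ i x'| ≤ P.r / 4 ∧ |P.ρ (sh i x) - P.ρ (sh i x')| ≤ P.r / 4 ∧
        sh i x 0 = sh i x' 0 := by
    intro i hi hu
    refine h₁ _ _ _ hu ?_
    have h0 : 0 ≤ bs P.ρ i x := le_trans (mul_nonneg (by positivity) hr.le) (P.le_bs i x)
    have := hreal _ h0 ((P.bs_mono x hi).trans hl)
    rwa [P.flow_bs, P.flow_sub i x'] at this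
  have hu : ∀ i ≤ l, |bs P.ρ i x - bs P.ρ i x'| ≤ P.r / 2 := by
    intro i
    induction i with
    | zero => intro _; rw [bs_zero, bs_zero, sub_zero, abs_zero]; linarith
    | succ i ih =>
      intro hi
      obtain ⟨h3, h4, -⟩ := hstep i (by omega) (ih (by omega))
      rw [bs_succ, bs_succ]
      rw [abs_le] at h3 h4 ⊢
      constructor <;> linarith
  intro i hi
  have := (hstep i hi.le (hu i hi.le)).2.2
  simpa [sh] using this

lemma flowInvSet_sat {S : Set (ℤ → B)} (hsh : ∀ x ∈ S, ∀ a, sh a x ∈ S) :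
    FlowInvSet φ (P.sat S) := by
  refine flowInvSet_of_forall ?_
  rintro t _ ⟨⟨s, x⟩, ⟨-, hx⟩, rfl⟩
  simp only
  rw [← φ.map_add]
  exact P.mem_sat hsh hx _

/-- If every point of `S` contains arbitrarily long families of words of rate above `c`, then
every nonempty invariant subset of the saturation of `S` has entropy at least `c`. -/
lemma le_topEntropyOn_sat {c : ℝ} (hc0 : 0 ≤ c) {S : Set (ℤ → B)}
    (hS : ∀ k : ℕ, ∃ s' : Stage P.ρ c, k ≤ s'.L ∧ ∀ x ∈ S, ∀ w ∈ s'.W, ∃ a : ℤ, win s'.L x a = w)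
    {K : Set M} (hK : K ⊆ P.sat S) (hne : K.Nonempty) (hinv : FlowInvSet φ K) :
    (c : EReal) ≤ topEntropyOn (φ.toFun 1) K := by
  classical
  have hr := P.hr
  obtain ⟨ε, hε, hexp⟩ := P.exists_expansive
  obtain ⟨z, hz⟩ := hne
  obtain ⟨⟨t, x⟩, ⟨-, hx⟩, rfl⟩ := hK hz
  have hex : P.e x ∈ K := by
    have := FlowInvSet_mem hinv (-t) hz
    simp only at this
    rwa [← φ.map_add, neg_add_cancel, φ.map_zero_apply] at this
  have hesh : ∀ a : ℤ, P.e (sh a x) ∈ K := by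
    intro a
    obtain ⟨k, rfl | rfl⟩ := Int.eq_nat_or_neg a
    · rw [← P.flow_bs]; exact FlowInvSet_mem hinv _ hex
    · rw [P.flow_neg_bs]; exact FlowInvSet_mem hinv _ hex
  refine le_topEntropyOn_of_frequently hε fun κ hκ => frequently_atTop.2 fun N => ?_
  obtain ⟨k, hk⟩ := exists_nat_gt ((N + c / κ + 1) / P.r)
  rw [div_lt_iff₀ hr] at hk
  obtain ⟨s, hks, hs⟩ := hS k
  choose! a ha using hs x hx
  have hT : N + c / κ + 1 ≤ s.T := by
    obtain ⟨w, hw⟩ := s.hW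
    have h1 := s.hT (sh (a w) x) (by rw [win_sh, zero_add, ha w hw]; exact hw)
    have h2 := P.le_bs s.L (sh (a w) x)
    have h3 : (k : ℝ) ≤ s.L := by exact_mod_cast hks
    nlinarith
  have hcκ : 0 ≤ c / κ := by positivity
  have hT0 : 0 ≤ s.T := by
    have : (0 : ℝ) ≤ N := by positivity
    linarith
  set n := ⌈s.T⌉₊ with hn
  have hTn : s.T ≤ n := Nat.le_ceil _
  have hnT : (n : ℝ) < s.T + 1 := Nat.ceil_lt_add_one hT0
  have hN0 : (0 : ℝ) ≤ N := by positivity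
  refine ⟨n, by exact_mod_cast (by linarith : (N : ℝ) ≤ n), ?_⟩
  have hwin : ∀ w ∈ s.W, win s.L (sh (a w) x) 0 = w := fun w hw => by
    rw [win_sh, zero_add, ha w hw]
  have hexpw : ∀ w ∈ s.W, ∀ w' ∈ s.W, (∀ j ≤ n, dist (φ.toFun (j : ℝ) (P.e (sh (a w) x)))
      (φ.toFun (j : ℝ) (P.e (sh (a w') x))) ≤ ε) → w = w' := by
    intro w hw w' hw' h
    have h1 := hexp n s.L _ _ h ((s.hT _ (by rw [hwin w hw]; exact hw)).trans hTn)
    rw [← hwin w hw, ← hwin w' hw']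
    funext i
    simp only [win, zero_add]
    exact h1 i i.2
  have hcard : s.W.card ≤ sepCount (φ.toFun 1) K n ε := by
    have hinj : Set.InjOn (fun w => P.e (sh (a w) x)) s.W := by
      intro w hw w' hw' h
      refine hexpw w hw w' hw' fun j _ => ?_
      simp only at h
      rw [h, dist_self]; exact hε.le
    rw [← Finset.card_image_of_injOn hinj]
    refine card_le_sepCount _ _ _ hε ?_ ?_
    · intro z hz
      obtain ⟨w, -, rfl⟩ := Finset.mem_image.1 hz
      exact hesh _
    · intro z hz z' hz' hne
      obtain ⟨w, hw, rfl⟩ := Finset.mem_image.1 hz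
      obtain ⟨w', hw', rfl⟩ := Finset.mem_image.1 hz'
      by_contra! hcon
      refine hne ?_
      rw [hexpw w hw w' hw' fun j hj => by
        have := hcon j hj
        rwa [iterate_flow, iterate_flow] at this]
  have hWpos : (0 : ℝ) < s.W.card := by exact_mod_cast Finset.card_pos.2 s.hW
  have hlog : c * s.T ≤ Real.log (sepCount (φ.toFun 1) K n ε) :=
    s.hc.le.trans (Real.log_le_log hWpos (by exact_mod_cast hcard))
  rw [le_div_iff₀ (by linarith)]
  have h5 : c ≤ κ * n := by
    have : c / κ ≤ n := by linarith
    rwa [div_le_iff₀ hκ, mul_comm] at this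
  nlinarith

/-- If `S` has few words per unit of flow time, its saturation has small entropy. -/
lemma topEntropyOn_sat_le {c A : ℝ} (hc0 : 0 ≤ c) {S : Set (ℤ → B)} (hne : S.Nonempty)
    (hsh : ∀ x ∈ S, ∀ a, sh a x ∈ S)
    (hA : ∀ ε > 0, ∃ N₀ : ℕ, ∀ n ≥ N₀, ∀ x ∈ S, |bs P.ρ n x - n * A| ≤ ε * n)
    (hw : ∀ ε > 0, ∃ C : ℝ, ∀ (l : ℕ) (V : Finset (Fin l → B)),
      (∀ w ∈ V, ∃ x ∈ S, win l x 0 = w) → (V.card : ℝ) ≤ Real.exp (C + (c * A + ε) * l)) :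
    topEntropyOn (φ.toFun 1) (P.sat S) ≤ (c : EReal) := by
  classical
  have hr := P.hr
  have hR := P.hR
  have hApos : 0 < A := P.avg_pos hne hA
  refine topEntropyOn_le_of_log_le fun ε hε κ hκ => ?_
  set θ := κ * A / 4 with hθ
  have hθ0 : 0 < θ := by positivity
  obtain ⟨p, C, hC0, hcount⟩ := P.card_sep_le hε hθ0
  obtain ⟨C', hC'⟩ := hw θ hθ0
  set δ := κ * A / (2 * (c + κ)) with hδ
  have hδ0 : 0 < δ := by positivity
  have hδeq : (c + κ) * δ = κ * A / 2 := by rw [hδ]; field_simp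
  have hδA : 0 < A - δ := by
    have : (c + κ) * δ < (c + κ) * A := by rw [hδeq]; nlinarith [mul_pos hκ hApos]
    have := lt_of_mul_lt_mul_left this (by positivity)
    linarith
  obtain ⟨N₀, hN₀⟩ := hA δ hδ0
  set C₁ : ℝ := P.R / (A - δ) + N₀ + 1 with hC₁
  have hC₁0 : 0 ≤ C₁ := by
    have : 0 ≤ P.R / (A - δ) := by positivity
    positivity
  have hcA : 0 ≤ c * A := by positivity
  refine ⟨Real.log C + (C' + (c * A + θ) * (2 * p + 1)) + (c * A + 2 * θ) * C₁, fun n => ?_⟩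
  -- the number of returns completed in time `n + R`
  set l := ⌈(n + P.R) / (A - δ)⌉₊ + N₀ with hl
  have hl1 : ((n + P.R) / (A - δ)) ≤ l := (Nat.le_ceil _).trans (by rw [hl]; push_cast; linarith [Nat.cast_nonneg (α := ℝ) N₀])
  have hl2 : (l : ℝ) ≤ n / (A - δ) + C₁ := by
    have h1 := Nat.ceil_lt_add_one (show 0 ≤ (n + P.R) / (A - δ) by positivity)
    rw [hl, hC₁]; push_cast
    rw [add_div] at h1 ⊢
    linarith
  have hlS : ∀ x ∈ S, n + P.R ≤ bs P.ρ l x := by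
    intro x hx
    have h1 := (abs_le.1 (hN₀ l (by omega) x hx)).1
    rw [div_le_iff₀ hδA] at hl1
    nlinarith
  obtain ⟨Q, hQK, hQ, hQc⟩ := exists_card_eq_sepCount (φ.toFun 1) (P.sat S) n hε
  set V : Finset (Fin (l + 2 * p + 1) → B) :=
    Finset.univ.filter fun w => ∃ x ∈ S, win (l + 2 * p + 1) x (-p) = w with hV
  have h1 := hcount n l S hlS Q hQ (fun z hz => by
    obtain ⟨⟨t, x⟩, ⟨-, hx⟩, rfl⟩ := hQK hz
    exact P.exists_cell hsh hx t) V (fun x hx => by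
      rw [hV, Finset.mem_filter]; exact ⟨Finset.mem_univ _, x, hx, rfl⟩)
  have h2 := hC' _ V (fun w hw => by
    obtain ⟨-, x, hx, rfl⟩ := Finset.mem_filter.1 hw
    exact ⟨sh (-p) x, hsh x hx _, by rw [win_sh, zero_add]⟩)
  rw [← hQc]
  have hbound : (Q.card : ℝ) ≤ Real.exp (Real.log C + θ * l +
      (C' + (c * A + θ) * ((l + 2 * p + 1 : ℕ) : ℝ))) := by
    rw [Real.exp_add, Real.exp_add, Real.exp_log hC0]
    refine h1.trans ?_
    gcongr
  have hfin : Real.log C + θ * l + (C' + (c * A + θ) * ((l + 2 * p + 1 : ℕ) : ℝ)) ≤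
      Real.log C + (C' + (c * A + θ) * (2 * p + 1)) + (c * A + 2 * θ) * C₁ + (c + κ) * n := by
    push_cast
    have h3 : (c * A + 2 * θ) * l ≤ (c * A + 2 * θ) * (n / (A - δ) + C₁) := by gcongr
    have h4 : (c * A + 2 * θ) * (n / (A - δ)) = (c + κ) * n := by
      have : c * A + 2 * θ = (c + κ) * (A - δ) := by
        rw [mul_sub, hδeq, hθ]; ring
      rw [this]; field_simp
    nlinarith
  rcases Nat.eq_zero_or_pos Q.card with h0 | h0
  · have := (Nat.cast_nonneg (α := ℝ) Q.card).trans hbound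
    obtain ⟨x, hx⟩ := hne
    -- a maximal separated subset of a nonempty set is nonempty
    have h5 := card_le_sepCount (φ.toFun 1) (P.sat S) n hε (Q := {φ.toFun 0 (P.e x)})
      (by simpa using P.mem_sat hsh hx 0) (by simp [IsDynSep])
    rw [← hQc, h0] at h5
    simp at h5
  · have h0' : (0 : ℝ) < Q.card := by exact_mod_cast h0
    refine le_trans ?_ hfin
    rw [← Real.log_exp (Real.log C + θ * l + (C' + (c * A + θ) * ((l + 2 * p + 1 : ℕ) : ℝ)))]
    exact Real.log_le_log h0' hbound

end Susp

end Bounds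

end EFP

namespace EFP

/-! ### Words of a horseshoe of large entropy -/

section InitialStage

lemma eventually_log_le {δ : ℝ} (hδ : 0 < δ) (E : ℝ) :
    ∀ᶠ n : ℕ in atTop, Real.log (n + 1) + E < n * δ := by
  have h1 : Tendsto (fun n : ℕ => (n : ℝ) + 1) atTop atTop :=
    tendsto_atTop_add_const_right _ _ tendsto_natCast_atTop_atTop
  have h2 := h1.eventually (Real.isLittleO_log_id_atTop.bound (half_pos hδ))
  have h3 := tendsto_natCast_atTop_atTop (R := ℝ) |>.eventually_gt_atTop ((δ / 2 + E) / (δ / 2))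
  filter_upwards [h2, h3] with n hn hn'
  rw [div_lt_iff₀ (by positivity)] at hn'
  have h4 := (le_abs_self _).trans hn
  simp only [id, Real.norm_eq_abs] at h4
  rw [abs_of_pos (by positivity)] at h4
  linarith

variable {M : Type*} [MetricSpace M] [CompactSpace M] [MeasurableSpace M] [BorelSpace M]
  {B : Type} [Fintype B] [MetricSpace B] {φ : Flow ℝ M}

set_option maxHeartbeats 1000000 in
/-- If the flow has entropy greater than `c` on a set swept out by the suspension, then some word
length carries a family of words whose number exceeds `exp (c T)`, where `T` bounds the flow time
spent along each of them. -/
lemma Susp.exists_stage (P : Susp φ B) {c : ℝ} (hc0 : 0 ≤ c) {Γ : Set M}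
    (hΓ : ∀ z ∈ Γ, ∃ x, ∃ s : ℝ, 0 ≤ s ∧ s < P.ρ x ∧ φ.toFun s (P.e x) = z)
    (hc : (c : EReal) < topEntropyOn (φ.toFun 1) Γ) : Nonempty (Stage P.ρ c) := by
  classical
  have hr := P.hr
  have hR := P.hR
  obtain ⟨ε, hε, hcε⟩ : ∃ ε : ℝ, ∃ _ : 0 < ε, (c : EReal) <
      Filter.atTop.limsup fun n : ℕ =>
        ((Real.log (sepCount (φ.toFun 1) Γ n ε) / n : ℝ) : EReal) := by
    rw [topEntropyOn] at hc
    simpa only [lt_iSup_iff] using hc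
  obtain ⟨c', hcc', hc'⟩ := EReal.lt_iff_exists_real_btwn.1 hcε
  have hcc : c < c' := by exact_mod_cast hcc'
  have hfreq := frequently_lt_of_lt_limsup (by isBoundedDefault) hc'
  set d := c' - c with hd
  have hd0 : 0 < d := by linarith
  set θ := P.r * d / 8 with hθ
  have hθ0 : 0 < θ := by positivity
  set ε₁ := P.r * d / (8 * (c + 1)) with hε₁
  have hε₁0 : 0 < ε₁ := by positivity
  have hcε₁ : c * ε₁ ≤ P.r * d / 8 := by
    have : (c + 1) * ε₁ = P.r * d / 8 := by rw [hε₁]; field_simp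
    linarith
  obtain ⟨p, C, hC0, hcount⟩ := P.card_sep_le hε hθ0
  obtain ⟨L₀, hL₀⟩ := exists_bs_osc P.hρ hε₁0
  set K₂ : ℝ := (1 + P.R) / P.r + 3 with hK₂
  have hK₂0 : 0 < K₂ := by positivity
  set E : ℝ := c * (2 * P.R + (2 * p + 1) * P.R + ε₁ * (2 * p + 1)) + Real.log C + Real.log K₂ +
    P.r * d / 4 * (P.R / P.r + 1) with hE
  obtain ⟨n, hn, hnE, hn0, hnL⟩ := (hfreq.and_eventually
    ((eventually_log_le (half_pos hd0) E).and ((eventually_gt_atTop 0).and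
      (tendsto_natCast_atTop_atTop (R := ℝ) |>.eventually_ge_atTop (L₀ * P.R))))).exists
  have hn' : (0 : ℝ) < n := by exact_mod_cast hn0
  have hn1 : c' < Real.log (sepCount (φ.toFun 1) Γ n ε) / n := by exact_mod_cast hn
  rw [lt_div_iff₀ hn'] at hn1
  obtain ⟨Q, hQK, hQ, hQc⟩ := exists_card_eq_sepCount (φ.toFun 1) Γ n hε
  rw [← hQc] at hn1
  have hQpos : 0 < Q.card := by
    rcases Nat.eq_zero_or_pos Q.card with h | h
    · rw [h] at hn1
      simp only [Nat.cast_zero, Real.log_zero] at hn1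
      have : 0 ≤ c' * n := mul_nonneg (by linarith) hn'.le
      linarith
    · exact h
  have hQpos' : (0 : ℝ) < Q.card := by exact_mod_cast hQpos
  -- sort the points of `Q` by the number of returns needed to exceed the time `n + R`
  have hsort : ∀ z : M, ∃ l : ℕ, z ∈ Q → l ∈ Finset.range (⌊(n + P.R) / P.r⌋₊ + 2) ∧
      ∃ x, (n + P.R ≤ bs P.ρ l x ∧ bs P.ρ l x ≤ n + 2 * P.R) ∧
        ∃ s : ℝ, 0 ≤ s ∧ s < P.ρ x ∧ φ.toFun s (P.e x) = z := by
    intro z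
    by_cases hz : z ∈ Q
    · obtain ⟨x, s, hs⟩ := hΓ z (hQK hz)
      obtain ⟨k, hk1, hk2⟩ := P.exists_cross x (t := n + P.R) (by positivity)
      refine ⟨k + 1, fun _ => ⟨?_, x, ⟨hk2.le, ?_⟩, s, hs⟩⟩
      · rw [Finset.mem_range]
        have h1 := (P.le_bs k x).trans hk1
        rw [← le_div_iff₀ hr] at h1
        have := Nat.le_floor h1
        omega
      · rw [bs_succ]
        linarith [P.hρR (sh k x)]
    · exact ⟨0, fun h => absurd h hz⟩
  choose l hl using hsort
  set Nm := ⌊(n + P.R) / P.r⌋₊ + 2 with hNm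
  have hNm0 : (0 : ℝ) < Nm := by rw [hNm]; positivity
  obtain ⟨k, hk, hcard⟩ := Finset.exists_le_card_fiber_of_nsmul_le_card_of_maps_to
    (s := Q) (t := Finset.range Nm) (f := l) (b := (Q.card : ℝ) / Nm) (fun z hz => (hl z hz).1)
    ⟨0, Finset.mem_range.2 (by omega)⟩ (by
      rw [Finset.card_range, nsmul_eq_mul, mul_div_cancel₀ _ hNm0.ne'])
  set A : Set (ℤ → B) := {x | n + P.R ≤ bs P.ρ k x ∧ bs P.ρ k x ≤ n + 2 * P.R} with hA
  set V : Finset (Fin (k + 2 * p + 1) → B) :=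
    Finset.univ.filter fun w => ∃ x ∈ A, win (k + 2 * p + 1) x (-p) = w with hV
  have h1 := hcount n k A (fun x hx => hx.1) (Q.filter fun z => l z = k)
    (hQ.mono (Finset.coe_subset.2 (Finset.filter_subset _ _))) (fun z hz => by
      obtain ⟨hzQ, hzk⟩ := Finset.mem_filter.1 hz
      obtain ⟨-, x, hx, hs⟩ := hl z hzQ
      rw [hzk] at hx
      exact ⟨x, hx, hs⟩) V (fun x hx => Finset.mem_filter.2 ⟨Finset.mem_univ _, x, hx, rfl⟩)
  have h2 : (Q.card : ℝ) / Nm ≤ C * Real.exp (θ * k) * V.card := hcard.trans h1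
  have hVpos : 0 < V.card := by
    rcases Nat.eq_zero_or_pos V.card with h | h
    · rw [h, Nat.cast_zero, mul_zero] at h2
      have : 0 < (Q.card : ℝ) / Nm := by positivity
      linarith
    · exact h
  have hVpos' : (0 : ℝ) < V.card := by exact_mod_cast hVpos
  have hlog : Real.log Q.card ≤ Real.log Nm + Real.log C + θ * k + Real.log V.card := by
    have h3 : (Q.card : ℝ) ≤ Nm * (C * Real.exp (θ * k) * V.card) := by
      rwa [div_le_iff₀' hNm0] at h2
    have h4 := Real.log_le_log hQpos' h3
    rw [Real.log_mul hNm0.ne' (by positivity), Real.log_mul (by positivity) hVpos'.ne',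
      Real.log_mul hC0.ne' (by positivity), Real.log_exp] at h4
    linarith
  have hNmK : (Nm : ℝ) ≤ K₂ * (n + 1) := by
    have h3 := Nat.floor_le (show 0 ≤ (n + P.R) / P.r by positivity)
    have h4 : (n + P.R) / P.r ≤ (1 + P.R) / P.r * (n + 1) := by
      rw [div_mul_eq_mul_div]
      gcongr
      nlinarith
    rw [hNm, hK₂]; push_cast
    nlinarith
  have hlogN : Real.log Nm ≤ Real.log K₂ + Real.log (n + 1) := by
    rw [← Real.log_mul hK₂0.ne' (by positivity)]
    exact Real.log_le_log hNm0 hNmK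
  have hk1 : (k : ℝ) ≤ (n + P.R) / P.r + 1 := by
    have h3 := Nat.floor_le (show 0 ≤ (n + P.R) / P.r by positivity)
    have h4 : k ≤ ⌊(n + P.R) / P.r⌋₊ + 1 := by
      have := Finset.mem_range.1 hk; omega
    have h5 : (k : ℝ) ≤ (⌊(n + P.R) / P.r⌋₊ : ℝ) + 1 := by exact_mod_cast h4
    linarith
  obtain ⟨w, hw⟩ := Finset.card_pos.1 hVpos
  have hkL : L₀ ≤ k := by
    obtain ⟨-, x, hx, -⟩ := Finset.mem_filter.1 hw
    have h3 := hx.1.trans (P.bs_le k x)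
    have h4 : (L₀ : ℝ) * P.R ≤ k * P.R := by linarith
    exact_mod_cast le_of_mul_le_mul_right h4 hR
  refine ⟨⟨k + 2 * p + 1, by omega, V, ⟨w, hw⟩,
    n + 2 * P.R + (2 * p + 1) * P.R + ε₁ * (k + 2 * p + 1), ?_, ?_⟩⟩
  · intro x hx
    obtain ⟨-, y, hy, hyx⟩ := Finset.mem_filter.1 hx
    have h3 := (abs_le.1 (hL₀ (k + 2 * p + 1) (by omega) x (sh (-p) y) (by
      rw [win_sh, zero_add, hyx]))).2
    have h4 : bs P.ρ (k + 2 * p + 1) (sh (-p) y) ≤ p * P.R + (n + 2 * P.R) + (p + 1) * P.R := by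
      have e1 : k + 2 * p + 1 = p + (k + (p + 1)) := by ring
      rw [e1, bs_add, bs_add, sh_sh, add_neg_cancel, sh_zero]
      have e2 := P.bs_le p (sh (-p) y)
      have e3 := P.bs_le (p + 1) (sh k y)
      push_cast at e3
      linarith [hy.2]
    push_cast at h3
    linarith
  · have h5 : (c * ε₁ + θ) * k ≤ P.r * d / 4 * ((n + P.R) / P.r + 1) := by
      have : c * ε₁ + θ ≤ P.r * d / 4 := by rw [hθ]; linarith
      have h0 : 0 ≤ P.r * d / 4 := by positivity
      calc (c * ε₁ + θ) * k ≤ P.r * d / 4 * k := by gcongr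
        _ ≤ _ := by gcongr
    have h6 : P.r * d / 4 * ((n + P.R) / P.r + 1) =
        d / 4 * n + P.r * d / 4 * (P.R / P.r + 1) := by
      field_simp
      ring
    have h7 : c' * n = c * n + d * n := by rw [hd]; ring
    have h8 : 0 < d * n := by positivity
    have h9 : c * (n + 2 * P.R + (2 * p + 1) * P.R + ε₁ * (k + 2 * p + 1)) =
        c * n + c * (2 * P.R + (2 * p + 1) * P.R + ε₁ * (2 * p + 1)) + c * ε₁ * k := by ring
    have h10 : (c * ε₁ + θ) * k = c * ε₁ * k + θ * k := by ring
    rw [hE] at hnE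
    rw [h9]
    linarith

end InitialStage

end EFP

namespace EFP

/-! ### Time averages along the suspension flow -/

section Averages

variable {M : Type*} [MetricSpace M] {B : Type} [Fintype B] [MetricSpace B] {φ : Flow ℝ M}

namespace Susp

variable (P : Susp φ B)

/-- The integral of `g` along the piece of orbit from the cross-section to its first return. -/
noncomputable def fiberInt (g : M → ℝ) (x : ℤ → B) : ℝ :=
  ∫ t in (0 : ℝ)..P.ρ x, g (φ.toFun t (P.e x))

lemma continuous_fiberInt {g : M → ℝ} (hg : Continuous g) : Continuous (P.fiberInt g) := by
  have hcont : Continuous (Function.uncurry fun (x : ℤ → B) (t : ℝ) => g (φ.toFun t (P.e x))) :=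
    hg.comp (φ.continuous continuous_snd (P.he.comp continuous_fst))
  exact intervalIntegral.continuous_parametric_intervalIntegral_of_continuous hcont P.hρ

lemma integral_bs {g : M → ℝ} (hg : Continuous g) (n : ℕ) (x : ℤ → B) :
    ∫ t in (0 : ℝ)..bs P.ρ n x, g (φ.toFun t (P.e x)) = bs (P.fiberInt g) n x := by
  have hc : Continuous fun t : ℝ => g (φ.toFun t (P.e x)) :=
    hg.comp (φ.continuous continuous_id continuous_const)
  induction n with
  | zero => simp [bs_zero]
  | succ n ih =>
    rw [← intervalIntegral.integral_add_adjacent_intervals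
      (hc.intervalIntegrable 0 (bs P.ρ n x)) (hc.intervalIntegrable _ _), ih, bs_succ (P.fiberInt g)]
    congr 1
    have h1 := intervalIntegral.integral_comp_add_right
      (fun t : ℝ => g (φ.toFun t (P.e x))) (a := 0) (b := P.ρ (sh n x)) (bs P.ρ n x)
    rw [zero_add, add_comm (P.ρ _), ← bs_succ] at h1
    rw [← h1, fiberInt]
    refine intervalIntegral.integral_congr fun t _ => ?_
    rw [φ.map_add, P.flow_bs]

set_option maxHeartbeats 1000000 in
/-- If all Birkhoff averages on `S` converge uniformly, then so do all time averages of the flow on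
the saturation of `S`; the limit is the quotient of the averages of the fiber integral and of the
roof. -/
lemma exists_avg_sat [CompactSpace M] {S : Set (ℤ → B)} (hne : S.Nonempty)
    (hS : ∀ G : (ℤ → B) → ℝ, Continuous G → ∃ A : ℝ, ∀ ε > 0, ∃ N₀ : ℕ, ∀ n ≥ N₀, ∀ x ∈ S,
      |bs G n x - n * A| ≤ ε * n) (g : M → ℝ) (hg : Continuous g) :
    ∃ I : ℝ, ∀ ε > 0, ∃ T₀ > 0, ∀ T ≥ T₀, ∀ z ∈ P.sat S,
      |T⁻¹ * (∫ t in (0 : ℝ)..T, g (φ.toFun t z)) - I| ≤ ε := by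
  have hr := P.hr
  have hR := P.hR
  obtain ⟨K, hK⟩ : ∃ K, ∀ z, |g z| ≤ K := by
    obtain ⟨K, hK⟩ := (isCompact_univ (X := M)).exists_bound_of_continuousOn hg.continuousOn
    exact ⟨K, fun z => by simpa using hK z trivial⟩
  obtain ⟨a, ha⟩ := hS P.ρ P.hρ
  obtain ⟨A, hA⟩ := hS (P.fiberInt g) (P.continuous_fiberInt hg)
  have ha0 : 0 < a := P.avg_pos hne ha
  have hK0 : 0 ≤ K := by
    obtain ⟨x, -⟩ := hne
    exact (abs_nonneg _).trans (hK (P.e x))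
  refine ⟨A / a, fun ε hε => ?_⟩
  set I := A / a with hI
  have hIa : I * a = A := by rw [hI]; field_simp
  have hI0 := abs_nonneg I
  set δ := ε * P.r / (4 * (1 + |I|)) with hδ
  have hδ0 : 0 < δ := by positivity
  have hδI : (1 + |I|) * δ = ε * P.r / 4 := by rw [hδ]; field_simp
  obtain ⟨N₁, hN₁⟩ := ha δ hδ0
  obtain ⟨N₂, hN₂⟩ := hA δ hδ0
  refine ⟨(N₁ + N₂ + 1) * P.R + (2 * K * P.R + |I| * P.R) / (ε / 2), by positivity, ?_⟩
  rintro T hT _ ⟨⟨u, x⟩, ⟨⟨hu0, huR⟩, hx⟩, rfl⟩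
  simp only at hu0 huR hx ⊢
  have hE0 : 0 ≤ (2 * K * P.R + |I| * P.R) / (ε / 2) := by positivity
  have hT1 : ((N₁ : ℝ) + N₂ + 1) * P.R ≤ T := by linarith
  have hNR : 0 ≤ ((N₁ : ℝ) + N₂) * P.R := by positivity
  have hTR : P.R ≤ T := by linarith
  have hT0 : 0 < T := hR.trans_le hTR
  have hT2 : 2 * K * P.R + |I| * P.R ≤ T * (ε / 2) := by
    rw [← div_le_iff₀ (by positivity)]
    have : 0 ≤ ((N₁ : ℝ) + N₂ + 1) * P.R := by positivity
    linarith
  obtain ⟨n, hn1, hn2⟩ := P.exists_cross x (t := T + u) (by linarith)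
  have hn3 : T + u - bs P.ρ n x ≤ P.R := by
    rw [bs_succ] at hn2
    linarith [P.hρR (sh n x)]
  have hnN : N₁ + N₂ ≤ n := by
    have h1 := P.bs_le (n + 1) x
    have h2 : ((N₁ : ℝ) + N₂ + 1) * P.R ≤ ((n + 1 : ℕ) : ℝ) * P.R := by linarith
    have h3 := le_of_mul_le_mul_right h2 hR
    have h4 : N₁ + N₂ + 1 ≤ n + 1 := by exact_mod_cast h3
    omega
  have hnT : n * P.r ≤ 2 * T := by linarith [P.le_bs n x]
  have hc : Continuous fun t : ℝ => g (φ.toFun t (P.e x)) :=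
    hg.comp (φ.continuous continuous_id continuous_const)
  have e1 : ∫ t in (0 : ℝ)..T, g (φ.toFun t (φ.toFun u (P.e x))) =
      ∫ t in u..(T + u), g (φ.toFun t (P.e x)) := by
    have h1 := intervalIntegral.integral_comp_add_right
      (fun t : ℝ => g (φ.toFun t (P.e x))) (a := 0) (b := T) u
    rw [zero_add] at h1
    rw [← h1]
    refine intervalIntegral.integral_congr fun t _ => ?_
    rw [φ.map_add]
  have e2 : (∫ t in u..(T + u), g (φ.toFun t (P.e x))) = bs (P.fiberInt g) n x +
      ((∫ t in (bs P.ρ n x)..(T + u), g (φ.toFun t (P.e x))) -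
        ∫ t in (0 : ℝ)..u, g (φ.toFun t (P.e x))) := by
    have h1 := intervalIntegral.integral_add_adjacent_intervals
      (hc.intervalIntegrable 0 u) (hc.intervalIntegrable (μ := volume) u (T + u))
    have h2 := intervalIntegral.integral_add_adjacent_intervals
      (hc.intervalIntegrable 0 (bs P.ρ n x))
      (hc.intervalIntegrable (μ := volume) (bs P.ρ n x) (T + u))
    rw [P.integral_bs hg] at h2
    linarith
  have b1 : |∫ t in (bs P.ρ n x)..(T + u), g (φ.toFun t (P.e x))| ≤ K * P.R := by
    have := intervalIntegral.norm_integral_le_of_norm_le_const (a := bs P.ρ n x) (b := T + u)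
      (C := K) (f := fun t : ℝ => g (φ.toFun t (P.e x))) (fun t _ => hK _)
    rw [Real.norm_eq_abs, abs_of_nonneg (show 0 ≤ T + u - bs P.ρ n x by linarith)] at this
    exact this.trans (by gcongr)
  have b2 : |∫ t in (0 : ℝ)..u, g (φ.toFun t (P.e x))| ≤ K * P.R := by
    have := intervalIntegral.norm_integral_le_of_norm_le_const (a := 0) (b := u)
      (C := K) (f := fun t : ℝ => g (φ.toFun t (P.e x))) (fun t _ => hK _)
    rw [Real.norm_eq_abs, sub_zero, abs_of_nonneg hu0] at this
    exact this.trans (by gcongr)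
  have b3 := hN₂ n (by omega) x hx
  have b4 := hN₁ n (by omega) x hx
  have b5 : |T - n * a| ≤ δ * n + P.R := by
    rw [abs_le] at b4 ⊢
    constructor <;> linarith
  have b6 : |I * (T - n * a)| ≤ |I| * (δ * n + P.R) := by
    rw [abs_mul]; gcongr
  have hsmall : (1 + |I|) * δ * n ≤ T * (ε / 2) := by
    rw [hδI]
    nlinarith
  have e3 : I * (T - n * a) = T * I - n * A := by rw [← hIa]; ring
  rw [e3] at b6
  have e4 : T⁻¹ * (∫ t in (0 : ℝ)..T, g (φ.toFun t (φ.toFun u (P.e x)))) - I =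
      T⁻¹ * ((∫ t in (0 : ℝ)..T, g (φ.toFun t (φ.toFun u (P.e x)))) - T * I) := by
    field_simp
  rw [e4, abs_mul, abs_of_pos (inv_pos.2 hT0), inv_mul_le_iff₀ hT0, e1, e2]
  rw [abs_le] at b1 b2 b3 b6 ⊢
  have e5 : (1 + |I|) * δ * n = δ * n + |I| * (δ * n) := by ring
  have e6 : |I| * (δ * n + P.R) = |I| * (δ * n) + |I| * P.R := by ring
  rw [e5] at hsmall
  rw [e6] at b6
  constructor <;> linarith

end Susp

end Averages

end EFP

namespace EFP

/-! ### Strictly ergodic subsets of a horseshoe -/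

section Conclusion

variable {M : Type*} [MetricSpace M]

lemma exists_horseshoe_gt {φ : Flow ℝ M}
    (happrox : ∀ ε : ℝ, 0 < ε → ∃ Γ : Set M, IsCompact Γ ∧ FlowInvSet φ Γ ∧
      IsHorseshoe φ Γ ∧
      flowTopEntropy φ ≤ flowTopEntropyOn φ Γ + (ε : EReal) ∧
      flowTopEntropyOn φ Γ ≤ flowTopEntropy φ + (ε : EReal))
    {c : ℝ} (hc : (c : EReal) < flowTopEntropy φ) :
    ∃ Γ : Set M, IsHorseshoe φ Γ ∧ (c : EReal) < topEntropyOn (φ.toFun 1) Γ := by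
  obtain ⟨d, hcd, hdh⟩ := EReal.lt_iff_exists_real_btwn.1 hc
  have hcd' : c < d := by exact_mod_cast hcd
  obtain ⟨Γ, -, -, hΓ, hle, -⟩ := happrox (d - c) (by linarith)
  refine ⟨Γ, hΓ, ?_⟩
  by_contra hcon
  have h1 : flowTopEntropyOn φ Γ + ((d - c : ℝ) : EReal) ≤
      (c : EReal) + ((d - c : ℝ) : EReal) := by
    gcongr
    exact not_lt.1 hcon
  rw [← EReal.coe_add, add_sub_cancel] at h1
  exact absurd (hdh.trans_le (hle.trans h1)) (lt_irrefl _)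

variable [CompactSpace M]

lemma topEntropyOn_mono (φ : Flow ℝ M) {K K' : Set M} (h : K ⊆ K') :
    topEntropyOn (φ.toFun 1) K ≤ topEntropyOn (φ.toFun 1) K' := by
  refine iSup₂_mono fun ε hε => ?_
  refine limsup_le_limsup (Eventually.of_forall fun n => ?_)
  refine EReal.coe_le_coe_iff.2 ?_
  have hle : sepCount (φ.toFun 1) K n ε ≤ sepCount (φ.toFun 1) K' n ε := by
    obtain ⟨Q, hQK, hQ, hQc⟩ := exists_card_eq_sepCount (φ.toFun 1) K n hε
    rw [← hQc]
    exact card_le_sepCount (φ.toFun 1) K' n hε (hQK.trans h) hQ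
  rcases Nat.eq_zero_or_pos (sepCount (φ.toFun 1) K n ε) with h0 | h0
  · rw [h0, Nat.cast_zero, Real.log_zero, zero_div]
    exact div_nonneg (Real.log_natCast_nonneg _) (Nat.cast_nonneg _)
  · gcongr

variable [MeasurableSpace M] [BorelSpace M]

/-- Inside a horseshoe of entropy greater than `c` there is a strictly ergodic compact invariant
set of entropy `c`, whose invariant measure has entropy `c` as well. -/
lemma exists_strictlyErgodic {φ : Flow ℝ M} {Γ : Set M} (hΓ : IsHorseshoe φ Γ) {c : ℝ}
    (hc0 : 0 ≤ c) (hc : (c : EReal) < topEntropyOn (φ.toFun 1) Γ) :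
    ∃ (μ : Measure M) (K : Set M), IsProbabilityMeasure μ ∧ FlowErgodic φ μ ∧ IsCompact K ∧
      FlowInvSet φ K ∧ FlowStrictlyErgodicOn φ K ∧ topEntropyOn (φ.toFun 1) K = (c : EReal) ∧
      measEntropy (φ.toFun 1) μ = (c : EReal) := by
  obtain ⟨B, iB, mB, hcard, ρ, hρ, hρpos, e, he, -, hmap, hsurj, hinj⟩ := hΓ
  have hB : Nonempty B := Fintype.card_pos_iff.1 (by omega)
  obtain ⟨x₁, -, hx₁⟩ := (isCompact_univ (X := ℤ → B)).exists_isMinOn Set.univ_nonempty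
    hρ.continuousOn
  obtain ⟨x₂, -, hx₂⟩ := (isCompact_univ (X := ℤ → B)).exists_isMaxOn Set.univ_nonempty
    hρ.continuousOn
  let P : Susp φ B :=
    { e := e, ρ := ρ, r := ρ x₁, R := ρ x₂, he := continuousOn_univ.1 he, hρ := hρ,
      hr := hρpos _, hrρ := fun x => hx₁ (Set.mem_univ x), hρR := fun x => hx₂ (Set.mem_univ x),
      hR := hρpos _, hmap := fun x => hmap x (Set.mem_univ x),
      hinj := fun x y => hinj x (Set.mem_univ x) y (Set.mem_univ y) }
  obtain ⟨s⟩ := P.exists_stage hc0 (Γ := Γ) (fun z hz => by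
    obtain ⟨x, -, hx⟩ := hsurj z hz
    exact ⟨x, hx⟩) hc
  obtain ⟨S, hSc, hSne, hsh, hSavg, hSw, hSs⟩ :=
    exists_subshift P.hρ (fun x => (P.hr.trans_le (P.hrρ x)).le) hc0 s
  have hne : (P.sat S).Nonempty := by
    obtain ⟨x, hx⟩ := hSne
    exact ⟨_, P.mem_sat hsh hx 0⟩
  have hcl : IsClosed (P.sat S) := (P.isCompact_sat hSc).isClosed
  obtain ⟨μ, hμ, hU⟩ := exists_unifAvg φ hne (P.exists_avg_sat hSne hSavg)
  obtain ⟨K, hKS, hKne, hKcl, hKinv, hKmin⟩ := exists_minimal φ hne hcl (P.flowInvSet_sat hsh)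
  have hUK : UnifAvg φ K μ := hU.mono hKS
  have hinvμ : FlowInvariant φ μ := hUK.flowInvariant hKne hKinv
  have htop : topEntropyOn (φ.toFun 1) K = (c : EReal) := by
    refine le_antisymm ((topEntropyOn_mono φ hKS).trans ?_)
      (P.le_topEntropyOn_sat hc0 hSs hKS hKne hKinv)
    obtain ⟨A, hA⟩ := hSavg P.ρ P.hρ
    exact P.topEntropyOn_sat_le hc0 hSne hsh hA (hSw A hA)
  refine ⟨μ, K, hμ, hUK.flowErgodic hKne hKcl hKinv, hKcl.isCompact, hKinv,
    ⟨hKmin, hUK.uniquelyErgodic hKne hKcl hKinv⟩, htop, ?_⟩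
  rw [← htop]
  exact le_antisymm
    (measEntropy_le_topEntropyOn (hinvμ 1) (hUK.null_compl hKne hKcl hKinv))
    (topEntropyOn_le_measEntropy φ hKne hinvμ hUK)

end Conclusion

end EFP

/-- If a flow of positive topological entropy admits horseshoes of
entropy arbitrarily close to its topological entropy, then it has entropy
flexibility, with each intermediate value attained on a strictly ergodic compact
invariant subset. -/
theorem horseshoe_approx_entropy_flexibility
    {M : Type*} [MetricSpace M] [CompactSpace M] [MeasurableSpace M] [BorelSpace M]
    (φ : Flow ℝ M) (hent : 0 < flowTopEntropy φ)
    (happrox : ∀ ε : ℝ, 0 < ε → ∃ Γ : Set M, IsCompact Γ ∧ FlowInvSet φ Γ ∧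
      IsHorseshoe φ Γ ∧
      flowTopEntropy φ ≤ flowTopEntropyOn φ Γ + (ε : EReal) ∧
      flowTopEntropyOn φ Γ ≤ flowTopEntropy φ + (ε : EReal)) :
    FlowEntropyFlexible φ ∧
    ∀ c : ℝ, 0 ≤ c → (c : EReal) < flowTopEntropy φ →
      ∃ Γ : Set M, IsCompact Γ ∧ FlowInvSet φ Γ ∧ FlowStrictlyErgodicOn φ Γ ∧
        flowTopEntropyOn φ Γ = (c : EReal) := by
  have key : ∀ c : ℝ, 0 ≤ c → (c : EReal) < flowTopEntropy φ → ∃ (μ : Measure M) (K : Set M),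
      IsProbabilityMeasure μ ∧ FlowErgodic φ μ ∧ IsCompact K ∧ FlowInvSet φ K ∧
      FlowStrictlyErgodicOn φ K ∧ topEntropyOn (φ.toFun 1) K = c ∧
      measEntropy (φ.toFun 1) μ = c := by
    intro c hc0 hc
    obtain ⟨Γ, hΓ, hΓc⟩ := EFP.exists_horseshoe_gt happrox hc
    exact EFP.exists_strictlyErgodic hΓ hc0 hΓc
  refine ⟨fun c hc0 hc => ?_, fun c hc0 hc => ?_⟩
  · obtain ⟨μ, K, h1, h2, h3, h4, -, h6, h7⟩ := key c hc0 hc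
    exact ⟨μ, K, h1, h2, h3, h4, h6, h7⟩
  · obtain ⟨μ, K, -, -, h3, h4, h5, h6, -⟩ := key c hc0 hc
    exact ⟨K, h3, h4, h5, h6⟩
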